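/- Let n and m be integers with 6 ≤ m ≤ n and let G be the grid P_n □ P_m. Then the strong convexity spectrum of G equals S_SC(G) = {k ∈ ℤ : 1 ≤ k ≤ nm−6} \ {2, 3, 5}. -/

import Mathlib

/-!  Common definitions: oriented graphs, geodesic convexity, convexity number,
strong convexity spectrum, and grid graphs. -/

variable {V : Type*}

/-- A directed walk of length `k` from `u` to `v` along the arc relation `A`,
encoded by the function `f` listing its vertices. -/
def IsDirWalk (A : V → V → Prop) (k : ℕ) (f : ℕ → V) (u v : V) : Prop :=
  f 0 = u ∧ f k = v ∧ ∀ i, i < k → A (f i) (f (i + 1))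

/-- There is a directed walk from `u` to `v`. -/
def DirReachable (A : V → V → Prop) (u v : V) : Prop :=
  ∃ k f, IsDirWalk A k f u v

/-- A digraph (given by its arc relation) is strongly connected. -/
def StrongConnected (A : V → V → Prop) : Prop :=
  ∀ u v : V, DirReachable A u v

/-- A `uv`-geodesic: a directed walk from `u` to `v` of minimum possible length
(such a walk is automatically a directed path). -/
def IsGeodesic (A : V → V → Prop) (k : ℕ) (f : ℕ → V) (u v : V) : Prop :=
  IsDirWalk A k f u v ∧ ∀ k' f', IsDirWalk A k' f' u v → k ≤ k'

/-- A nonempty vertex set `C` is convex if every vertex lying on a geodesic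
between two vertices of `C` (in either direction) belongs to `C`. -/
def DConvex (A : V → V → Prop) (C : Set V) : Prop :=
  C.Nonempty ∧ ∀ u ∈ C, ∀ v ∈ C, ∀ k f, IsGeodesic A k f u v → ∀ i ≤ k, f i ∈ C

/-- `A` is an orientation of the simple graph `G`: every arc is along an edge,
every edge gets an arc, and no edge gets both directions. -/
def IsOrientation (G : SimpleGraph V) (A : V → V → Prop) : Prop :=
  (∀ x y, A x y → G.Adj x y) ∧ (∀ x y, G.Adj x y → A x y ∨ A y x) ∧
    (∀ x y, A x y → ¬ A y x)

/-- The convexity number of a digraph: the maximum cardinality of a proper convex set. -/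
noncomputable def convexityNumber [Fintype V] (A : V → V → Prop) : ℕ :=
  sSup {k | ∃ C : Set V, DConvex A C ∧ C ≠ Set.univ ∧ C.ncard = k}

/-- The strong convexity spectrum of a graph: the set of convexity numbers of
its strongly connected orientations. -/
def strongConvexitySpectrum [Fintype V] (G : SimpleGraph V) : Set ℕ :=
  {k | ∃ A : V → V → Prop, IsOrientation G A ∧ StrongConnected A ∧ convexityNumber A = k}

/-- The grid graph `P_n □ P_m`. -/
def gridGraph (n m : ℕ) : SimpleGraph (Fin n × Fin m) :=
  (SimpleGraph.pathGraph n).boxProd (SimpleGraph.pathGraph m)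

/-! ### Toolkit on coordinates -/

/-- Arcs of the grid with `R` rows and `w` columns given by two predicates. -/
def GArc (R w : ℕ) (Rt Up : ℕ → ℕ → Prop) (i j i' j' : ℕ) : Prop :=
  i < R ∧ j < w ∧ i' < R ∧ j' < w ∧
    ((i' = i ∧ j' = j + 1 ∧ Rt i j) ∨ (i' = i ∧ j = j' + 1 ∧ ¬ Rt i j') ∨
     (j' = j ∧ i' = i + 1 ∧ Up i j) ∨ (j' = j ∧ i = i' + 1 ∧ ¬ Up i' j))

/-- Walks of given length, in coordinates. -/
inductive Wk (A : ℕ → ℕ → ℕ → ℕ → Prop) : ℕ → ℕ → ℕ → ℕ → ℕ → Prop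
  | nil (i j : ℕ) : Wk A i j i j 0
  | cons {i j i' j' a b k : ℕ} : A i j i' j' → Wk A i' j' a b k → Wk A i j a b (k + 1)

/-- Manhattan distance. -/
def mh (i j i' j' : ℕ) : ℕ := (i - i') + (i' - i) + ((j - j') + (j' - j))

theorem Wk.single {A : ℕ → ℕ → ℕ → ℕ → Prop} {i j i' j' : ℕ} (h : A i j i' j') :
    Wk A i j i' j' 1 := Wk.cons h (Wk.nil _ _)

theorem Wk.trans {A : ℕ → ℕ → ℕ → ℕ → Prop} {i j i' j' a b k l : ℕ} (h : Wk A i j i' j' k)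
    (h' : Wk A i' j' a b l) : Wk A i j a b (k + l) := by
  induction h with
  | nil i j => simpa using h'
  | cons hA _ ih =>
    have := Wk.cons hA (ih h')
    rwa [show ∀ x y : ℕ, x + 1 + y = x + y + 1 by intros; omega]

theorem Wk.cast {A : ℕ → ℕ → ℕ → ℕ → Prop} {i j i' j' k l : ℕ} (h : Wk A i j i' j' k)
    (e : k = l) : Wk A i j i' j' l := e ▸ h

section
variable {R w : ℕ} {Rt Up : ℕ → ℕ → Prop}

theorem GArc.mh_eq {i j i' j' : ℕ} (h : GArc R w Rt Up i j i' j') : mh i j i' j' = 1 := by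
  unfold GArc at h; unfold mh; omega

theorem GArc.asymm {i j i' j' : ℕ} (h : GArc R w Rt Up i j i' j') :
    ¬ GArc R w Rt Up i' j' i j := by
  intro h'
  obtain ⟨_, _, _, _, h⟩ := h
  obtain ⟨_, _, _, _, h'⟩ := h'
  rcases h with ⟨rfl, rfl, h⟩ | ⟨rfl, rfl, h⟩ | ⟨rfl, rfl, h⟩ | ⟨rfl, rfl, h⟩ <;>
  rcases h' with ⟨h1, h2, h'⟩ | ⟨h1, h2, h'⟩ | ⟨h1, h2, h'⟩ | ⟨h1, h2, h'⟩ <;>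
  first | omega | exact h h' | exact h' h

theorem Wk.mh_le {i j i' j' k : ℕ} (h : Wk (GArc R w Rt Up) i j i' j' k) :
    mh i j i' j' ≤ k ∧ (mh i j i' j' + k) % 2 = 0 := by
  induction h with
  | nil i j => simp [mh]
  | cons hA _ ih => have := hA.mh_eq; unfold mh at *; omega

theorem Wk.inv {i j i' j' k : ℕ} (h : Wk (GArc R w Rt Up) i j i' j' k) :
    (k = 0 ∧ i = i' ∧ j = j') ∨
    ∃ a b l, k = l + 1 ∧ GArc R w Rt Up i j a b ∧ Wk (GArc R w Rt Up) a b i' j' l := by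
  cases h with
  | nil => simp
  | cons h1 h2 => exact Or.inr ⟨_, _, _, rfl, h1, h2⟩

theorem GArc.right {i j : ℕ} (hi : i < R) (hj : j + 1 < w) (h : Rt i j) :
    GArc R w Rt Up i j i (j + 1) := ⟨hi, by omega, hi, hj, Or.inl ⟨rfl, rfl, h⟩⟩
theorem GArc.left {i j : ℕ} (hi : i < R) (hj : j + 1 < w) (h : ¬ Rt i j) :
    GArc R w Rt Up i (j + 1) i j :=
  ⟨hi, by omega, hi, by omega, Or.inr <| Or.inl ⟨rfl, rfl, h⟩⟩
theorem GArc.up {i j : ℕ} (hi : i + 1 < R) (hj : j < w) (h : Up i j) :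
    GArc R w Rt Up i j (i + 1) j :=
  ⟨by omega, hj, hi, hj, Or.inr <| Or.inr <| Or.inl ⟨rfl, rfl, h⟩⟩
theorem GArc.down {i j : ℕ} (hi : i + 1 < R) (hj : j < w) (h : ¬ Up i j) :
    GArc R w Rt Up (i + 1) j i j :=
  ⟨hi, hj, by omega, by omega, Or.inr <| Or.inr <| Or.inr ⟨rfl, rfl, h⟩⟩

theorem Wk.lineR {i j j' : ℕ} (hj : j ≤ j') (hi : i < R) (hj' : j' < w)
    (h : ∀ l, j ≤ l → l < j' → Rt i l) : Wk (GArc R w Rt Up) i j i j' (j' - j) := by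
  induction j', hj using Nat.le_induction with
  | base => simpa using Wk.nil i j
  | succ n hn ih =>
    exact ((ih (by omega) (fun l h1 h2 => h l h1 (by omega))).trans
      (Wk.single (GArc.right hi hj' (h n hn (by omega))))).cast (by omega)
theorem Wk.lineL {i j j' : ℕ} (hj : j ≤ j') (hi : i < R) (hj' : j' < w)
    (h : ∀ l, j ≤ l → l < j' → ¬ Rt i l) : Wk (GArc R w Rt Up) i j' i j (j' - j) := by
  induction j', hj using Nat.le_induction with
  | base => simpa using Wk.nil i j
  | succ n hn ih =>
    exact ((Wk.single (GArc.left hi hj' (h n hn (by omega)))).trans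
      (ih (by omega) (fun l h1 h2 => h l h1 (by omega)))).cast (by omega)
theorem Wk.lineU {i i' j : ℕ} (hj : i ≤ i') (hi : j < w) (hj' : i' < R)
    (h : ∀ l, i ≤ l → l < i' → Up l j) : Wk (GArc R w Rt Up) i j i' j (i' - i) := by
  induction i', hj using Nat.le_induction with
  | base => simpa using Wk.nil i j
  | succ n hn ih =>
    exact ((ih (by omega) (fun l h1 h2 => h l h1 (by omega))).trans
      (Wk.single (GArc.up hj' hi (h n hn (by omega))))).cast (by omega)
theorem Wk.lineD {i i' j : ℕ} (hj : i ≤ i') (hi : j < w) (hj' : i' < R)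
    (h : ∀ l, i ≤ l → l < i' → ¬ Up l j) : Wk (GArc R w Rt Up) i' j i j (i' - i) := by
  induction i', hj using Nat.le_induction with
  | base => simpa using Wk.nil i j
  | succ n hn ih =>
    exact ((Wk.single (GArc.down hj' hi (h n hn (by omega)))).trans
      (ih (by omega) (fun l h1 h2 => h l h1 (by omega)))).cast (by omega)
end

/-- Properties shared by strongly connected convex sets and terminal components. -/
structure Hull (R w : ℕ) (A : ℕ → ℕ → ℕ → ℕ → Prop) (C : ℕ → ℕ → Prop) : Prop where
  sub : ∀ {i j}, C i j → i < R ∧ j < w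
  two : ∃ i j i' j', C i j ∧ C i' j' ∧ ¬ (i = i' ∧ j = j')
  cut : ∀ (X : ℕ → ℕ → Prop) {i j i' j'}, C i j → C i' j' → X i j → ¬ X i' j' →
    ∃ a b a' b', A a b a' b' ∧ C a b ∧ C a' b' ∧ X a b ∧ ¬ X a' b'
  pm : ∀ {i j i' j' x y k l}, C i j → C i' j' → Wk A i j x y k → Wk A x y i' j' l →
    k + l = mh i j i' j' → C x y
  sq : ∀ {p1 p2 q1 q2 r1 r2 s1 s2}, C p1 p2 → C q1 q2 → A p1 p2 q1 q2 → A q1 q2 r1 r2 →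
    A r1 r2 s1 s2 → A s1 s2 p1 p2 → C r1 r2 ∧ C s1 s2

section
variable {R w : ℕ} {Rt Up : ℕ → ℕ → Prop} {C : ℕ → ℕ → Prop}

theorem Hull.out (H : Hull R w (GArc R w Rt Up) C) {i j : ℕ} (h : C i j) :
    ∃ i' j', GArc R w Rt Up i j i' j' ∧ C i' j' := by
  obtain ⟨a, b, a', b', h1, h2, h3⟩ := H.two
  have : ∃ x y, C x y ∧ ¬ (x = i ∧ y = j) := by
    by_cases h4 : a = i ∧ b = j
    · exact ⟨a', b', h2, by omega⟩
    · exact ⟨a, b, h1, h4⟩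
  obtain ⟨x, y, hx, hn⟩ := this
  obtain ⟨a, b, a', b', hA, h1, h2, ⟨rfl, rfl⟩, h4⟩ :=
    H.cut (fun x y => x = i ∧ y = j) h hx ⟨rfl, rfl⟩ hn
  exact ⟨_, _, hA, h2⟩

theorem Hull.inn (H : Hull R w (GArc R w Rt Up) C) {i j : ℕ} (h : C i j) :
    ∃ i' j', GArc R w Rt Up i' j' i j ∧ C i' j' := by
  obtain ⟨a, b, a', b', h1, h2, h3⟩ := H.two
  have : ∃ x y, C x y ∧ ¬ (x = i ∧ y = j) := by
    by_cases h4 : a = i ∧ b = j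
    · exact ⟨a', b', h2, by omega⟩
    · exact ⟨a, b, h1, h4⟩
  obtain ⟨x, y, hx, hn⟩ := this
  obtain ⟨a, b, a', b', hA, h1, h2, h3, h4⟩ :=
    H.cut (fun x y => ¬ (x = i ∧ y = j)) hx h hn (by simp)
  simp only [not_not] at h4
  obtain ⟨rfl, rfl⟩ := h4
  exact ⟨_, _, hA, h1⟩

theorem Hull.r1 (H : Hull R w (GArc R w Rt Up) C) {i j x y i' j' : ℕ} (h : C i j) (h' : C i' j')
    (h1 : GArc R w Rt Up i j x y) (h2 : GArc R w Rt Up x y i' j') : C x y := by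
  refine H.pm h h' (Wk.single h1) (Wk.single h2) ?_
  have h3 : ¬ (i = i' ∧ j = j') := by
    rintro ⟨rfl, rfl⟩; exact h1.asymm h2
  have := h1.mh_eq
  have := h2.mh_eq
  unfold mh at *
  omega
end

/-! ### Translating between coordinates and vertices -/

section
variable {V : Type*} {A : V → V → Prop}

theorem IsDirWalk.comp {k l : ℕ} {f g : ℕ → V} {u v x : V} (h : IsDirWalk A k f u x)
    (h' : IsDirWalk A l g x v) :
    IsDirWalk A (k + l) (fun i => if i ≤ k then f i else g (i - k)) u v := by
  obtain ⟨h1, h2, h3⟩ := h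
  obtain ⟨g1, g2, g3⟩ := h'
  refine ⟨by simp [h1], ?_, ?_⟩
  · by_cases hl : l = 0
    · subst hl; simp [h2, ← g2, g1]
    · have : ¬ (k + l ≤ k) := by omega
      simp only [this, if_false]
      rw [show k + l - k = l by omega, g2]
  · intro i hi
    by_cases hk : i + 1 ≤ k
    · have : i ≤ k := by omega
      simp only [this, hk, if_true]; exact h3 i (by omega)
    · by_cases hk' : i ≤ k
      · have e : i = k := by omega
        subst e
        simp only [le_refl, if_true, hk, if_false]
        rw [h2, ← g1]
        have := g3 0 (by omega)
        simpa using this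
      · simp only [hk, hk', if_false]
        have := g3 (i - k) (by omega)
        rwa [show i + 1 - k = i - k + 1 by omega]

theorem IsDirWalk.sub {k a b : ℕ} {f : ℕ → V} {u v : V} (h : IsDirWalk A k f u v)
    (hab : a ≤ b) (hb : b ≤ k) : IsDirWalk A (b - a) (fun i => f (a + i)) (f a) (f b) := by
  refine ⟨by simp, by simp [show a + (b - a) = b by omega], ?_⟩
  intro i hi
  have := h.2.2 (a + i) (by omega)
  simpa [add_assoc] using this

theorem DirReachable.trans' {u v x : V} (h : DirReachable A u v) (h' : DirReachable A v x) :
    DirReachable A u x := by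
  obtain ⟨k, f, h⟩ := h
  obtain ⟨l, g, h'⟩ := h'
  exact ⟨_, _, h.comp h'⟩

theorem IsDirWalk.one {u v : V} (h : A u v) :
    IsDirWalk A 1 (fun i => if i = 0 then u else v) u v := by
  refine ⟨by simp, by simp, ?_⟩
  intro i hi
  have : i = 0 := by omega
  subst this; simpa using h

theorem DirReachable.refl' (u : V) : DirReachable A u u :=
  ⟨0, fun _ => u, rfl, rfl, by intro i hi; omega⟩

theorem DirReachable.exists_geodesic {u v : V} (h : DirReachable A u v) :
    ∃ k f, IsGeodesic A k f u v := by
  classical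
  have h' : ∃ k, ∃ f, IsDirWalk A k f u v := h
  obtain ⟨f, hf⟩ := Nat.find_spec h'
  exact ⟨Nat.find h', f, hf, fun k' f' hf' => Nat.find_min' h' ⟨f', hf'⟩⟩

theorem IsDirWalk.cut {k : ℕ} {f : ℕ → V} {u v : V} (h : IsDirWalk A k f u v) (X : V → Prop)
    (hu : X u) (hv : ¬ X v) : ∃ i, i < k ∧ X (f i) ∧ ¬ X (f (i + 1)) := by
  by_contra hc
  push Not at hc
  have : ∀ i, i ≤ k → X (f i) := by
    intro i
    induction i with
    | zero => intro _; rw [h.1]; exact hu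
    | succ n ih => intro hn; exact hc n (by omega) (ih (by omega))
  exact hv (h.2.1 ▸ this k le_rfl)

theorem DConvex.pull {C : Set V} (hC : DConvex A C) {u v x : V} (hu : u ∈ C) (hv : v ∈ C)
    {a b : ℕ} {f g : ℕ → V} (hf : IsDirWalk A a f u x) (hg : IsDirWalk A b g x v)
    (hmin : ∀ k f, IsDirWalk A k f u v → a + b ≤ k) : x ∈ C := by
  have := hC.2 u hu v hv _ _ ⟨hf.comp hg, hmin⟩ a (by omega)
  simpa [hf.2.1] using this
end

/-- The orientation of the grid in terms of coordinates. -/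
def DG (n m : ℕ) (Rt Up : ℕ → ℕ → Prop) (x y : Fin n × Fin m) : Prop :=
  GArc m n Rt Up x.2 x.1 y.2 y.1

section
variable {n m : ℕ} {Rt Up : ℕ → ℕ → Prop}

theorem GArc.total {R w : ℕ} {Rt Up : ℕ → ℕ → Prop} {i j i' j' : ℕ} (hi : i < R) (hj : j < w)
    (hi' : i' < R) (hj' : j' < w)
    (h : (i = i' ∧ j + 1 = j') ∨ (i = i' ∧ j' + 1 = j) ∨ (j = j' ∧ i + 1 = i') ∨
      (j = j' ∧ i' + 1 = i)) : GArc R w Rt Up i j i' j' ∨ GArc R w Rt Up i' j' i j := by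
  rcases h with ⟨rfl, rfl⟩ | ⟨rfl, rfl⟩ | ⟨rfl, rfl⟩ | ⟨rfl, rfl⟩
  · by_cases hr : Rt i j
    · exact Or.inl (GArc.right hi hj' hr)
    · exact Or.inr (GArc.left hi hj' hr)
  · by_cases hr : Rt i j'
    · exact Or.inr (GArc.right hi hj hr)
    · exact Or.inl (GArc.left hi hj hr)
  · by_cases hr : Up i j
    · exact Or.inl (GArc.up hi' hj hr)
    · exact Or.inr (GArc.down hi' hj hr)
  · by_cases hr : Up i' j
    · exact Or.inr (GArc.up hi hj hr)
    · exact Or.inl (GArc.down hi hj hr)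

theorem DG.isOrientation : IsOrientation (gridGraph n m) (DG n m Rt Up) := by
  refine ⟨?_, ?_, ?_⟩
  · rintro ⟨x1, x2⟩ ⟨y1, y2⟩ ⟨_, _, _, _, h⟩
    simp only [gridGraph, SimpleGraph.boxProd_adj, SimpleGraph.pathGraph_adj, Fin.ext_iff] at *
    omega
  · rintro ⟨x1, x2⟩ ⟨y1, y2⟩ h
    simp only [gridGraph, SimpleGraph.boxProd_adj, SimpleGraph.pathGraph_adj, Fin.ext_iff] at h
    have a1 := x1.2; have a2 := x2.2; have a3 := y1.2; have a4 := y2.2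
    exact GArc.total a2 a1 a4 a3 (by dsimp only at *; omega)
  · intro x y h; exact GArc.asymm h

theorem DG.toWk {k : ℕ} {f : ℕ → Fin n × Fin m} {u v : Fin n × Fin m}
    (h : IsDirWalk (DG n m Rt Up) k f u v) :
    Wk (GArc m n Rt Up) u.2 u.1 v.2 v.1 k := by
  induction k generalizing f u with
  | zero =>
    obtain ⟨h1, h2, -⟩ := h
    rw [← h1, h2]; exact Wk.nil _ _
  | succ k ih =>
    have h0 := h.2.2 0 (by omega)
    have h1 := ih (u := f 1) (f := fun i => f (1 + i)) (by
      have := h.sub (a := 1) (b := k + 1) (by omega) (by omega)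
      rw [h.2.1] at this
      simpa using this)
    rw [h.1] at h0
    exact Wk.cons h0 h1

theorem DG.ofWk' {i j i' j' k : ℕ} (h : Wk (GArc m n Rt Up) i j i' j' k) :
    ∀ u v : Fin n × Fin m, u.2 = i → u.1 = j → v.2 = i' → v.1 = j' →
      ∃ f, IsDirWalk (DG n m Rt Up) k f u v := by
  induction h with
  | nil i j =>
    intro u v h1 h2 h3 h4
    have : u = v := by ext <;> omega
    subst this
    exact ⟨fun _ => u, rfl, rfl, by intro i hi; omega⟩
  | @cons i j i' j' a b k hA _ ih =>
    intro u v h1 h2 h3 h4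
    have hA' := hA
    obtain ⟨_, _, b1, b2, _⟩ := hA
    obtain ⟨g, hg⟩ := ih (⟨j', b2⟩, ⟨i', b1⟩) v rfl rfl h3 h4
    have hx : DG n m Rt Up u (⟨j', b2⟩, ⟨i', b1⟩) := by
      simp only [DG]; rw [h1, h2]; exact hA'
    have := (IsDirWalk.one hx).comp hg
    rw [Nat.add_comm] at this
    exact ⟨_, this⟩

theorem DG.ofWk {k : ℕ} {u v : Fin n × Fin m} (h : Wk (GArc m n Rt Up) u.2 u.1 v.2 v.1 k) :
    ∃ f, IsDirWalk (DG n m Rt Up) k f u v := DG.ofWk' h u v rfl rfl rfl rfl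

/-- The coordinate version of a vertex set. -/
def toC (C : Set (Fin n × Fin m)) (i j : ℕ) : Prop :=
  ∃ x ∈ C, (x.2 : ℕ) = i ∧ (x.1 : ℕ) = j

theorem toC_mk {C : Set (Fin n × Fin m)} {x : Fin n × Fin m} : toC C x.2 x.1 ↔ x ∈ C := by
  constructor
  · rintro ⟨y, hy, h1, h2⟩
    have : y = x := by ext <;> omega
    exact this ▸ hy
  · intro h; exact ⟨x, h, rfl, rfl⟩

theorem Wk.bdd {i j i' j' k : ℕ} (h : Wk (GArc m n Rt Up) i j i' j' k) (hi : i < m) (hj : j < n) :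
    i' < m ∧ j' < n := by
  induction h with
  | nil => exact ⟨hi, hj⟩
  | cons h _ ih => exact ih h.2.2.1 h.2.2.2.1

theorem hull_of_convex (hs : StrongConnected (DG n m Rt Up)) {C : Set (Fin n × Fin m)}
    (hC : DConvex (DG n m Rt Up) C) (h2 : ∃ x ∈ C, ∃ y ∈ C, x ≠ y) :
    Hull m n (GArc m n Rt Up) (toC C) := by
  refine ⟨?_, ?_, ?_, ?_, ?_⟩
  · rintro i j ⟨x, -, rfl, rfl⟩; exact ⟨x.2.2, x.1.2⟩
  · obtain ⟨x, hx, y, hy, hxy⟩ := h2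
    refine ⟨x.2, x.1, y.2, y.1, toC_mk.2 hx, toC_mk.2 hy, ?_⟩
    rintro ⟨h1, h2⟩
    exact hxy (by ext <;> omega)
  · rintro X _ _ _ _ ⟨x, hx, rfl, rfl⟩ ⟨y, hy, rfl, rfl⟩ h1 h2
    obtain ⟨k, f, hf⟩ := (hs x y).exists_geodesic
    obtain ⟨i, hi, a, b⟩ := hf.1.cut (fun x => X x.2 x.1) h1 h2
    exact ⟨_, _, _, _, hf.1.2.2 i hi, toC_mk.2 (hC.2 x hx y hy k f hf i (by omega)),
      toC_mk.2 (hC.2 x hx y hy k f hf (i + 1) (by omega)), a, b⟩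
  · rintro _ _ _ _ a b k l ⟨x, hx, rfl, rfl⟩ ⟨y, hy, rfl, rfl⟩ h1 h2 he
    have hb := h1.bdd x.2.2 x.1.2
    obtain ⟨f, hf⟩ := DG.ofWk' h1 x (⟨b, hb.2⟩, ⟨a, hb.1⟩) rfl rfl rfl rfl
    obtain ⟨g, hg⟩ := DG.ofWk' h2 (⟨b, hb.2⟩, ⟨a, hb.1⟩) y rfl rfl rfl rfl
    refine ⟨_, hC.pull hx hy hf hg ?_, rfl, rfl⟩
    intro k f hf
    rw [he]; exact (DG.toWk hf).mh_le.1
  · rintro _ _ _ _ r1 r2 s1 s2 ⟨x, hx, rfl, rfl⟩ ⟨y, hy, rfl, rfl⟩ h1 h2 h3 h4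
    have hmin : ∀ k f, IsDirWalk (DG n m Rt Up) k f y x → 3 ≤ k := by
      intro k f hf
      have h5 := (DG.toWk hf)
      have h6 := h5.mh_le
      have h7 := h1.mh_eq
      have h8 : k ≠ 1 := by
        rintro rfl
        have h9 := hf.2.2 0 (by omega)
        rw [hf.1, hf.2.1] at h9
        exact GArc.asymm h9 h1
      unfold mh at *
      omega
    have b2 := h2.2.2
    have b3 := h3.2.2
    have w2 := Wk.single h2
    have w3 := Wk.single h3
    have w4 := Wk.single h4
    constructor
    · obtain ⟨f, hf⟩ := DG.ofWk' w2 y (⟨r2, b2.2.1⟩, ⟨r1, b2.1⟩) rfl rfl rfl rfl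
      obtain ⟨g, hg⟩ := DG.ofWk' (w3.trans w4) (⟨r2, b2.2.1⟩, ⟨r1, b2.1⟩) x rfl rfl rfl rfl
      exact ⟨_, hC.pull hy hx hf hg (by simpa using hmin), rfl, rfl⟩
    · obtain ⟨f, hf⟩ := DG.ofWk' (w2.trans w3) y (⟨s2, b3.2.1⟩, ⟨s1, b3.1⟩) rfl rfl rfl rfl
      obtain ⟨g, hg⟩ := DG.ofWk' w4 (⟨s2, b3.2.1⟩, ⟨s1, b3.1⟩) x rfl rfl rfl rfl
      exact ⟨_, hC.pull hy hx hf hg (by simpa using hmin), rfl, rfl⟩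

theorem strong_of_term (hn : 0 < n) (hm : 0 < m)
    (hsink : ∀ i j, i < m → j < n → ∃ i' j', GArc m n Rt Up i j i' j')
    (hterm : ∀ X, Hull m n (GArc m n Rt Up) X →
      (∀ i j i' j', X i j → GArc m n Rt Up i j i' j' → X i' j') → ∀ i j, i < m → j < n → X i j) :
    StrongConnected (DG n m Rt Up) := by
  classical
  let r : Fin n × Fin m → Finset (Fin n × Fin m) := fun u =>
    Finset.univ.filter (fun v => DirReachable (DG n m Rt Up) u v)
  have hr : ∀ u v, v ∈ r u ↔ DirReachable (DG n m Rt Up) u v := by simp [r]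
  obtain ⟨u, -, hu⟩ := Finset.exists_min_image Finset.univ (fun u => (r u).card)
    ⟨(⟨0, hn⟩, ⟨0, hm⟩), Finset.mem_univ _⟩
  have hback : ∀ v, DirReachable (DG n m Rt Up) u v → DirReachable (DG n m Rt Up) v u := by
    intro v hv
    have hsub : r v ⊆ r u := by
      intro x hx
      rw [hr] at hx ⊢
      exact hv.trans' hx
    have := Finset.eq_of_subset_of_card_le hsub (hu v (Finset.mem_univ _))
    rw [← hr, this, hr]
    exact DirReachable.refl' u
  have hH : Hull m n (GArc m n Rt Up) (toC {v | DirReachable (DG n m Rt Up) u v}) := by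
    have hcl : ∀ {i j i' j' k}, toC {v | DirReachable (DG n m Rt Up) u v} i j →
        Wk (GArc m n Rt Up) i j i' j' k → toC {v | DirReachable (DG n m Rt Up) u v} i' j' := by
      rintro _ _ i' j' k ⟨x, hx, rfl, rfl⟩ h
      have hb := h.bdd x.2.2 x.1.2
      obtain ⟨f, hf⟩ := DG.ofWk' h x (⟨j', hb.2⟩, ⟨i', hb.1⟩) rfl rfl rfl rfl
      exact ⟨_, DirReachable.trans' hx ⟨_, _, hf⟩, rfl, rfl⟩
    refine ⟨?_, ?_, ?_, ?_, ?_⟩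
    · rintro i j ⟨x, -, rfl, rfl⟩; exact ⟨x.2.2, x.1.2⟩
    · obtain ⟨i', j', h⟩ := hsink u.2 u.1 u.2.2 u.1.2
      have h0 : toC {v | DirReachable (DG n m Rt Up) u v} u.2 u.1 :=
        toC_mk.2 (DirReachable.refl' u)
      refine ⟨_, _, _, _, h0, hcl h0 (Wk.single h), ?_⟩
      have := h.mh_eq
      unfold mh at this
      omega
    · rintro X _ _ _ _ ⟨x, hx, rfl, rfl⟩ ⟨y, hy, rfl, rfl⟩ h1 h2
      obtain ⟨k, f, hf⟩ := (hback x hx).trans' hy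
      obtain ⟨i, hi, a, b⟩ := hf.cut (fun x => X x.2 x.1) h1 h2
      have : ∀ i, i ≤ k → DirReachable (DG n m Rt Up) u (f i) := by
        intro i hi
        have := hf.sub (a := 0) (b := i) (by omega) hi
        rw [hf.1] at this
        exact DirReachable.trans' hx ⟨_, _, this⟩
      exact ⟨_, _, _, _, hf.2.2 i hi, toC_mk.2 (this i (by omega)),
        toC_mk.2 (this (i + 1) (by omega)), a, b⟩
    · intro _ _ _ _ _ _ _ _ h1 _ h2 _ _
      exact hcl h1 h2
    · intro _ _ _ _ _ _ _ _ _ h1 _ h2 h3 _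
      exact ⟨hcl h1 (Wk.single h2), hcl h1 ((Wk.single h2).trans (Wk.single h3))⟩
  have hall := hterm _ hH (by
    rintro _ _ i' j' ⟨x, hx, rfl, rfl⟩ h
    have hA : DG n m Rt Up x (⟨j', h.2.2.2.1⟩, ⟨i', h.2.2.1⟩) := h
    exact ⟨_, DirReachable.trans' hx ⟨_, _, IsDirWalk.one hA⟩, rfl, rfl⟩)
  have hall' : ∀ v, DirReachable (DG n m Rt Up) u v := by
    intro v
    exact toC_mk.1 (hall v.2 v.1 v.2.2 v.1.2)
  intro x y
  exact (hback x (hall' x)).trans' (hall' y)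

/-- the vertex set of a coordinate predicate -/
def ofC (n m : ℕ) (S : ℕ → ℕ → Prop) : Set (Fin n × Fin m) := {x | S x.2 x.1}

theorem convex_of_exit {S : ℕ → ℕ → Prop} {t1 t2 z1 z2 : ℕ}
    (hne : ∃ x : Fin n × Fin m, S x.2 x.1)
    (hexit : ∀ i j i' j', GArc m n Rt Up i j i' j' → ¬ S i j → S i' j' →
      i = t1 ∧ j = t2 ∧ i' = z1 ∧ j' = z2)
    (hear : ∀ i j x y, GArc m n Rt Up i j x y → S i j → ¬ S x y →
      ∃ d, Wk (GArc m n Rt Up) i j z1 z2 d ∧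
        ∀ l, Wk (GArc m n Rt Up) x y t1 t2 l → d < l + 2) :
    DConvex (DG n m Rt Up) (ofC n m S) := by
  classical
  refine ⟨hne, ?_⟩
  intro u hu v hv k f hf i0 hi0
  by_contra hT
  set P : ℕ → Prop := fun i => S (f i).2 (f i).1 with hP
  have hT : ¬ P i0 := hT
  have hP0 : P 0 := by simp only [hP]; rw [hf.1.1]; exact hu
  have hPk : P k := by simp only [hP]; rw [hf.1.2.1]; exact hv
  -- the last index before i0 in S
  have h1 : ∃ p, p < i0 ∧ P p ∧ ¬ P (p + 1) := by
    have hw := hf.1.sub (a := 0) (b := i0) (by omega) hi0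
    obtain ⟨p, h1, h2, h3⟩ := hw.cut (fun x => S x.2 x.1) hP0 hT
    simp only [Nat.zero_add] at h2 h3
    exact ⟨p, by omega, h2, h3⟩
  obtain ⟨p, hp, hPp, hPp1⟩ := h1
  have h2 : ∃ q, p + 1 ≤ q ∧ q < k ∧ ¬ P q ∧ P (q + 1) := by
    have hw := hf.1.sub (a := p + 1) (b := k) (by omega) le_rfl
    obtain ⟨q, h1, h2, h3⟩ := hw.cut (fun x => ¬ S x.2 x.1) hPp1 (by simpa [hP] using hPk)
    refine ⟨p + 1 + q, by omega, by omega, h2, ?_⟩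
    simpa only [not_not, add_assoc] using h3
  obtain ⟨q, hq1, hq2, hq3, hq4⟩ := h2
  obtain ⟨e1, e2, e3, e4⟩ := hexit _ _ _ _ (hf.1.2.2 q hq2) hq3 hq4
  obtain ⟨d, hd, hd'⟩ := hear _ _ _ _ (hf.1.2.2 p (by omega)) hPp hPp1
  have hl := DG.toWk (hf.1.sub hq1 hq2.le)
  rw [e1, e2] at hl
  have := hd' _ hl
  rw [← e3, ← e4] at hd
  obtain ⟨g, hg⟩ := DG.ofWk hd
  have w1 := hf.1.sub (a := 0) (b := p) (by omega) (by omega)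
  have w3 := hf.1.sub (a := q + 1) (b := k) (by omega) le_rfl
  rw [hf.1.1] at w1
  rw [hf.1.2.1] at w3
  have := hf.2 _ _ ((w1.comp hg).comp w3)
  omega

theorem mem_spectrum {S : ℕ → ℕ → Prop} {k : ℕ} (hn : 0 < n) (hm : 0 < m)
    (hsink : ∀ i j, i < m → j < n → ∃ i' j', GArc m n Rt Up i j i' j')
    (hterm : ∀ X, Hull m n (GArc m n Rt Up) X →
      (∀ i j i' j', X i j → GArc m n Rt Up i j i' j' → X i' j') → ∀ i j, i < m → j < n → X i j)
    (hS : DConvex (DG n m Rt Up) (ofC n m S)) (hprop : ∃ i j, i < m ∧ j < n ∧ ¬ S i j)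
    (hcard : (ofC n m S).ncard = k)
    (hhull : ∀ C, Hull m n (GArc m n Rt Up) C → (∀ i j, C i j → S i j) ∨
      (∀ i j, i < m → j < n → C i j) ∨ (ofC n m C).ncard ≤ k) :
    k ∈ strongConvexitySpectrum (gridGraph n m) := by
  have hst := strong_of_term hn hm hsink hterm
  refine ⟨DG n m Rt Up, DG.isOrientation, hst, ?_⟩
  refine IsGreatest.csSup_eq ⟨⟨_, hS, ?_, hcard⟩, ?_⟩
  · intro he
    obtain ⟨i, j, hi, hj, h⟩ := hprop
    have : ((⟨j, hj⟩, ⟨i, hi⟩) : Fin n × Fin m) ∈ ofC n m S := he ▸ Set.mem_univ _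
    exact h this
  · rintro l ⟨C, hC, hne, rfl⟩
    by_cases h1 : C.ncard ≤ 1
    · have : 0 < (ofC n m S).ncard := (Set.ncard_pos (Set.toFinite _)).2 hS.1
      omega
    · push Not at h1
      rw [Set.one_lt_ncard (Set.toFinite _)] at h1
      have hCC : ofC n m (toC C) = C := by
        ext x; exact toC_mk
      rcases hhull _ (hull_of_convex hst hC h1) with h | h | h
      · rw [← hcard]
        refine Set.ncard_le_ncard ?_ (Set.toFinite _)
        intro x hx
        exact h _ _ (toC_mk.2 hx)
      · exfalso
        apply hne
        ext x
        simp only [Set.mem_univ, iff_true]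
        exact toC_mk.1 (h x.2 x.1 x.2.2 x.1.2)
      · rwa [hCC] at h
end

/-! ### Checkerboard blocks -/

theorem spread {P : ℕ → Prop} {a b x : ℕ} (hx : a ≤ x) (hxb : x < b) (h : P x)
    (hu : ∀ y, a ≤ y → y + 1 < b → P y → P (y + 1))
    (hd : ∀ y, a ≤ y → y + 1 < b → P (y + 1) → P y) : ∀ y, a ≤ y → y < b → P y := by
  have h1 : ∀ k, x + k < b → P (x + k) := by
    intro k
    induction k with
    | zero => intro _; exact h
    | succ k ih => intro hk; exact hu (x + k) (by omega) hk (ih (by omega))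
  have h2 : ∀ k, a + k ≤ x → P (x - k) := by
    intro k
    induction k with
    | zero => intro _; exact h
    | succ k ih =>
      intro hk
      have := ih (by omega)
      refine hd (x - (k + 1)) (by omega) (by omega) ?_
      rwa [show x - (k + 1) + 1 = x - k by omega]
  intro y hy hyb
  rcases le_total x y with hxy | hxy
  · have := h1 (y - x) (by omega)
    rwa [show x + (y - x) = y by omega] at this
  · have := h2 (x - y) (by omega)
    rwa [show x - (x - y) = y by omega] at this

/-- checkerboard orientation on the rectangle with rows `r0..r1` and columns `c0..c1` -/
structure Blk (R w : ℕ) (Rt Up : ℕ → ℕ → Prop) (r0 r1 c0 c1 e : ℕ) : Prop where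
  hr : r0 < r1
  hR : r1 < R
  hc : c0 < c1
  hw : c1 < w
  rt : ∀ i j, r0 ≤ i → i ≤ r1 → c0 ≤ j → j < c1 → (Rt i j ↔ (i + j + e) % 2 = 1)
  up : ∀ i j, r0 ≤ i → i < r1 → c0 ≤ j → j ≤ c1 → (Up i j ↔ (i + j + e) % 2 = 0)

section
variable {R w : ℕ} {Rt Up : ℕ → ℕ → Prop} {C : ℕ → ℕ → Prop} {r0 r1 c0 c1 e : ℕ}

/-- the face cycle -/
theorem Blk.face (B : Blk R w Rt Up r0 r1 c0 c1 e) {i j : ℕ} (hi : r0 ≤ i) (hi' : i < r1)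
    (hj : c0 ≤ j) (hj' : j < c1) :
    (GArc R w Rt Up i j (i + 1) j ∧ GArc R w Rt Up (i + 1) j (i + 1) (j + 1) ∧
      GArc R w Rt Up (i + 1) (j + 1) i (j + 1) ∧ GArc R w Rt Up i (j + 1) i j) ∨
    (GArc R w Rt Up i j i (j + 1) ∧ GArc R w Rt Up i (j + 1) (i + 1) (j + 1) ∧
      GArc R w Rt Up (i + 1) (j + 1) (i + 1) j ∧ GArc R w Rt Up (i + 1) j i j) := by
  have := B.hR
  have := B.hw
  have a1 := B.rt i j hi (by omega) hj hj'
  have a2 := B.rt (i + 1) j (by omega) (by omega) hj hj'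
  have a3 := B.up i j hi (by omega) hj (by omega)
  have a4 := B.up i (j + 1) hi (by omega) (by omega) (by omega)
  rcases Nat.mod_two_eq_zero_or_one (i + j + e) with h | h
  · left
    refine ⟨GArc.up (by omega) (by omega) (a3.2 h), GArc.right (by omega) (by omega)
      (a2.2 (by omega)), GArc.down (by omega) (by omega) (fun h' => ?_),
      GArc.left (by omega) (by omega) (fun h' => ?_)⟩
    · have := a4.1 h'; omega
    · have := a1.1 h'; omega
  · right
    refine ⟨GArc.right (by omega) (by omega) (a1.2 h), GArc.up (by omega) (by omega)
      (a4.2 (by omega)), GArc.left (by omega) (by omega) (fun h' => ?_),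
      GArc.down (by omega) (by omega) (fun h' => ?_)⟩
    · have := a2.1 h'; omega
    · have := a3.1 h'; omega

theorem Blk.fill (B : Blk R w Rt Up r0 r1 c0 c1 e) (H : Hull R w (GArc R w Rt Up) C) {i j : ℕ}
    (hi : r0 ≤ i) (hi' : i < r1) (hj : c0 ≤ j) (hj' : j < c1)
    (h : (C i j ∧ C (i + 1) j) ∨ (C (i + 1) j ∧ C (i + 1) (j + 1)) ∨
      (C (i + 1) (j + 1) ∧ C i (j + 1)) ∨ (C i (j + 1) ∧ C i j)) :
    C i j ∧ C (i + 1) j ∧ C i (j + 1) ∧ C (i + 1) (j + 1) := by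
  rcases B.face hi hi' hj hj' with ⟨f1, f2, f3, f4⟩ | ⟨f1, f2, f3, f4⟩
  · rcases h with ⟨a, b⟩ | ⟨a, b⟩ | ⟨a, b⟩ | ⟨a, b⟩
    · have := H.sq a b f1 f2 f3 f4; tauto
    · have := H.sq a b f2 f3 f4 f1; tauto
    · have := H.sq a b f3 f4 f1 f2; tauto
    · have := H.sq a b f4 f1 f2 f3; tauto
  · rcases h with ⟨a, b⟩ | ⟨a, b⟩ | ⟨a, b⟩ | ⟨a, b⟩
    · have := H.sq b a f4 f1 f2 f3; tauto
    · have := H.sq b a f3 f4 f1 f2; tauto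
    · have := H.sq b a f2 f3 f4 f1; tauto
    · have := H.sq b a f1 f2 f3 f4; tauto

theorem Blk.all (B : Blk R w Rt Up r0 r1 c0 c1 e) (H : Hull R w (GArc R w Rt Up) C)
    {i j i' j' : ℕ} (hA : GArc R w Rt Up i j i' j') (h : C i j) (h' : C i' j')
    (hi : r0 ≤ i ∧ i ≤ r1 ∧ c0 ≤ j ∧ j ≤ c1) (hi' : r0 ≤ i' ∧ i' ≤ r1 ∧ c0 ≤ j' ∧ j' ≤ c1) :
    ∀ x y, r0 ≤ x → x ≤ r1 → c0 ≤ y → y ≤ c1 → C x y := by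
  have := B.hr
  have := B.hc
  let F : ℕ → ℕ → Prop := fun i j => C i j ∧ C (i + 1) j ∧ C i (j + 1) ∧ C (i + 1) (j + 1)
  have hF : ∃ a b, r0 ≤ a ∧ a < r1 ∧ c0 ≤ b ∧ b < c1 ∧ F a b := by
    obtain ⟨-, -, -, -, hA⟩ := hA
    have hor : ∀ p q, r0 ≤ p → p ≤ r1 → c0 ≤ q → q < c1 → C p q → C p (q + 1) →
        ∃ a b, r0 ≤ a ∧ a < r1 ∧ c0 ≤ b ∧ b < c1 ∧ F a b := by
      intro p q h1 h2 h3 h4 h5 h6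
      rcases Nat.lt_or_ge p r1 with hp | hp
      · exact ⟨p, q, h1, hp, h3, h4, B.fill H h1 hp h3 h4 (by tauto)⟩
      · obtain ⟨p, rfl⟩ : ∃ z, p = z + 1 := ⟨p - 1, by omega⟩
        exact ⟨p, q, by omega, by omega, h3, h4, B.fill H (by omega) (by omega) h3 h4 (by tauto)⟩
    have ver : ∀ p q, r0 ≤ p → p < r1 → c0 ≤ q → q ≤ c1 → C p q → C (p + 1) q →
        ∃ a b, r0 ≤ a ∧ a < r1 ∧ c0 ≤ b ∧ b < c1 ∧ F a b := by
      intro p q h1 h2 h3 h4 h5 h6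
      rcases Nat.lt_or_ge q c1 with hp | hp
      · exact ⟨p, q, h1, h2, h3, hp, B.fill H h1 h2 h3 hp (by tauto)⟩
      · obtain ⟨q, rfl⟩ : ∃ z, q = z + 1 := ⟨q - 1, by omega⟩
        exact ⟨p, q, h1, h2, by omega, by omega, B.fill H h1 h2 (by omega) (by omega) (by tauto)⟩
    rcases hA with ⟨rfl, rfl, -⟩ | ⟨rfl, rfl, -⟩ | ⟨rfl, rfl, -⟩ | ⟨rfl, rfl, -⟩
    · exact hor _ _ hi.1 hi.2.1 hi.2.2.1 (by omega) h h'
    · exact hor _ _ hi.1 hi.2.1 hi'.2.2.1 (by omega) h' h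
    · exact ver _ _ hi.1 (by omega) hi.2.2.1 (by omega) h h'
    · exact ver _ _ hi'.1 (by omega) hi.2.2.1 (by omega) h' h
  obtain ⟨a, b, ha, ha', hb, hb', hF⟩ := hF
  have hcol : ∀ x, r0 ≤ x → x < r1 → F x b := by
    refine spread (P := fun x => F x b) ha ha' hF ?_ ?_
    · rintro y h1 h2 ⟨-, g2, -, g4⟩
      exact B.fill H (by omega) h2 hb hb' (by tauto)
    · rintro y h1 h2 ⟨g1, -, g3, -⟩
      exact B.fill H (by omega) (by omega) hb hb' (by tauto)
  have hall : ∀ x y, r0 ≤ x → x < r1 → c0 ≤ y → y < c1 → F x y := by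
    intro x y hx hx' hy hy'
    refine spread (P := fun y => F x y) hb hb' (hcol x hx hx') ?_ ?_ y hy hy'
    · rintro y h1 h2 ⟨-, -, g3, g4⟩
      exact B.fill H hx hx' (by omega) h2 (by tauto)
    · rintro y h1 h2 ⟨g1, g2, -, -⟩
      exact B.fill H hx hx' (by omega) (by omega) (by tauto)
  intro x y hx hx' hy hy'
  rcases Nat.lt_or_ge x r1 with h1 | h1 <;> rcases Nat.lt_or_ge y c1 with h2 | h2
  · exact (hall x y hx h1 hy h2).1
  · obtain ⟨y, rfl⟩ : ∃ z, y = z + 1 := ⟨y - 1, by omega⟩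
    exact (hall x y hx h1 (by omega) (by omega)).2.2.1
  · obtain ⟨x, rfl⟩ : ∃ z, x = z + 1 := ⟨x - 1, by omega⟩
    exact (hall x y (by omega) (by omega) hy h2).2.1
  · obtain ⟨x, rfl⟩ : ∃ z, x = z + 1 := ⟨x - 1, by omega⟩
    obtain ⟨y, rfl⟩ : ∃ z, y = z + 1 := ⟨y - 1, by omega⟩
    exact (hall x y (by omega) (by omega) (by omega) (by omega)).2.2.2

theorem Blk.exists_out (B : Blk R w Rt Up r0 r1 c0 c1 e) {i j : ℕ}
    (hi : r0 ≤ i ∧ i ≤ r1 ∧ c0 ≤ j ∧ j ≤ c1) :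
    ∃ i' j', GArc R w Rt Up i j i' j' ∧ r0 ≤ i' ∧ i' ≤ r1 ∧ c0 ≤ j' ∧ j' ≤ c1 := by
  have := B.hr
  have := B.hc
  rcases Nat.lt_or_ge i r1 with h1 | h1 <;> rcases Nat.lt_or_ge j c1 with h2 | h2
  · rcases B.face hi.1 h1 hi.2.2.1 h2 with ⟨f1, f2, f3, f4⟩ | ⟨f1, f2, f3, f4⟩
    · exact ⟨_, _, f1, by omega⟩
    · exact ⟨_, _, f1, by omega⟩
  · obtain ⟨j, rfl⟩ : ∃ z, j = z + 1 := ⟨j - 1, by omega⟩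
    rcases B.face hi.1 h1 (j := j) (by omega) (by omega) with ⟨f1, f2, f3, f4⟩ | ⟨f1, f2, f3, f4⟩
    · exact ⟨_, _, f4, by omega⟩
    · exact ⟨_, _, f2, by omega⟩
  · obtain ⟨i, rfl⟩ : ∃ z, i = z + 1 := ⟨i - 1, by omega⟩
    rcases B.face (i := i) (j := j) (by omega) (by omega) (by omega) h2 with
      ⟨f1, f2, f3, f4⟩ | ⟨f1, f2, f3, f4⟩
    · exact ⟨_, _, f2, by omega⟩
    · exact ⟨_, _, f4, by omega⟩
  · obtain ⟨i, rfl⟩ : ∃ z, i = z + 1 := ⟨i - 1, by omega⟩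
    obtain ⟨j, rfl⟩ : ∃ z, j = z + 1 := ⟨j - 1, by omega⟩
    rcases B.face (i := i) (j := j) (by omega) (by omega) (by omega) (by omega) with
      ⟨f1, f2, f3, f4⟩ | ⟨f1, f2, f3, f4⟩
    · exact ⟨_, _, f3, by omega⟩
    · exact ⟨_, _, f3, by omega⟩

/-- L-shaped checkerboard region -/
structure LBlk (R w : ℕ) (Rt Up : ℕ → ℕ → Prop) (h a e : ℕ) : Prop where
  hh : h + 2 ≤ R
  ha : a + 2 ≤ w ∨ a = w
  hw : 2 ≤ w
  rt : ∀ i j, h ≤ i ∨ a ≤ j → (Rt i j ↔ (i + j + e) % 2 = 1)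
  up : ∀ i j, h ≤ i ∨ a ≤ j → (Up i j ↔ (i + j + e) % 2 = 0)

variable {h a : ℕ}

theorem LBlk.b1 (L : LBlk R w Rt Up h a e) : Blk R w Rt Up h (R - 1) 0 (w - 1) e := by
  obtain ⟨h1, h2, h3, h4, h5⟩ := L
  exact ⟨by omega, by omega, by omega, by omega, fun i j a b c d => h4 i j (by omega),
    fun i j a b c d => h5 i j (by omega)⟩
theorem LBlk.b2 (L : LBlk R w Rt Up h a e) (hw : a ≠ w) :
    Blk R w Rt Up 0 (R - 1) a (w - 1) e := by
  obtain ⟨h1, h2, h3, h4, h5⟩ := L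
  exact ⟨by omega, by omega, by omega, by omega, fun i j a b c d => h4 i j (by omega),
    fun i j a b c d => h5 i j (by omega)⟩

theorem LBlk.all (L : LBlk R w Rt Up h a e) (H : Hull R w (GArc R w Rt Up) C) {i j : ℕ}
    (hC : C i j) (hU : h ≤ i ∨ a ≤ j) : ∀ x y, x < R → y < w → h ≤ x ∨ a ≤ y → C x y := by
  have hh := L.hh
  have ha := L.ha
  have hw := L.hw
  have hsub := H.sub hC
  have key : ∃ p q p' q', GArc R w Rt Up p q p' q' ∧ C p q ∧ C p' q' ∧
      (h ≤ p ∨ a ≤ q) ∧ (h ≤ p' ∨ a ≤ q') := by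
    obtain ⟨p, q, o1, o2⟩ := H.out hC
    obtain ⟨p', q', n1, n2⟩ := H.inn hC
    by_cases c1 : h ≤ p ∨ a ≤ q
    · exact ⟨_, _, _, _, o1, hC, o2, hU, c1⟩
    by_cases c2 : h ≤ p' ∨ a ≤ q'
    · exact ⟨_, _, _, _, n1, n2, hC, c2, hU⟩
    exfalso
    have e1 := o1.mh_eq
    have e2 := n1.mh_eq
    unfold mh at e1 e2
    have : p = p' ∧ q = q' := by omega
    obtain ⟨rfl, rfl⟩ := this
    exact o1.asymm n1
  obtain ⟨p, q, p', q', hA, h1, h2, h3, h4⟩ := key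
  have s1 := H.sub h1
  have s2 := H.sub h2
  have hm := hA.mh_eq
  unfold mh at hm
  have hU1 : ∀ x y, h ≤ x → x ≤ R - 1 → 0 ≤ y → y ≤ w - 1 → C x y := by
    by_cases c : h ≤ p ∧ h ≤ p'
    · exact L.b1.all H hA h1 h2 (by omega) (by omega)
    · have hw : a ≠ w := by omega
      have h5 := (L.b2 hw).all H hA h1 h2 (by omega) (by omega)
      have h6 := (L.b1).face (i := h) (j := a) (by omega) (by omega) (by omega) (by omega)
      rcases h6 with h6 | h6
      · exact L.b1.all H h6.1 (h5 _ _ (by omega) (by omega) (by omega) (by omega))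
          (h5 _ _ (by omega) (by omega) (by omega) (by omega)) (by omega) (by omega)
      · exact L.b1.all H h6.1 (h5 _ _ (by omega) (by omega) (by omega) (by omega))
          (h5 _ _ (by omega) (by omega) (by omega) (by omega)) (by omega) (by omega)
  intro x y hx hy hxy
  by_cases hhx : h ≤ x
  · exact hU1 x y hhx (by omega) (by omega) (by omega)
  · have hw : a ≠ w := by omega
    have h6 := (L.b1).face (i := h) (j := a) (by omega) (by omega) (by omega) (by omega)
    rcases h6 with h6 | h6
    · exact (L.b2 hw).all H h6.1 (hU1 _ _ (by omega) (by omega) (by omega) (by omega))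
          (hU1 _ _ (by omega) (by omega) (by omega) (by omega)) (by omega) (by omega) x y
          (by omega) (by omega) (by omega) (by omega)
    · exact (L.b2 hw).all H h6.1 (hU1 _ _ (by omega) (by omega) (by omega) (by omega))
          (hU1 _ _ (by omega) (by omega) (by omega) (by omega)) (by omega) (by omega) x y
          (by omega) (by omega) (by omega) (by omega)

theorem LBlk.exists_out (L : LBlk R w Rt Up h a e) {i j : ℕ} (hi : i < R) (hj : j < w)
    (hU : h ≤ i ∨ a ≤ j) : ∃ i' j', GArc R w Rt Up i j i' j' := by
  by_cases hh : h ≤ i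
  · obtain ⟨x, y, h1, -⟩ := L.b1.exists_out (i := i) (j := j) (by omega)
    exact ⟨x, y, h1⟩
  · obtain ⟨x, y, h1, -⟩ := (L.b2 (by omega)).exists_out (i := i) (j := j) (by omega)
    exact ⟨x, y, h1⟩
end

theorem spectrum_one {n m : ℕ} (hm : 6 ≤ m) (hn : 6 ≤ n) :
    1 ∈ strongConvexitySpectrum (gridGraph n m) := by
  let Rt : ℕ → ℕ → Prop := fun i j => (i + j + 0) % 2 = 1
  let Up : ℕ → ℕ → Prop := fun i j => (i + j + 0) % 2 = 0
  have B : Blk m n Rt Up 0 (m - 1) 0 (n - 1) 0 :=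
    ⟨by omega, by omega, by omega, by omega, fun i j _ _ _ _ => Iff.rfl, fun i j _ _ _ _ => Iff.rfl⟩
  have hall : ∀ C, Hull m n (GArc m n Rt Up) C → ∀ i j, i < m → j < n → C i j := by
    intro C H i j hi hj
    obtain ⟨a, b, _, _, h1, -⟩ := H.two
    obtain ⟨p, q, h2, h3⟩ := H.out h1
    have s1 := H.sub h1
    have s2 := H.sub h3
    exact B.all H h2 h1 h3 (by omega) (by omega) i j (by omega) (by omega) (by omega) (by omega)
  have hset : ofC n m (fun i j => i = 0 ∧ j = 0) = {(⟨0, by omega⟩, ⟨0, by omega⟩)} := by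
    ext x
    simp [ofC, Prod.ext_iff, Fin.ext_iff, and_comm]
  refine mem_spectrum (Rt := Rt) (Up := Up) (S := fun i j => i = 0 ∧ j = 0) (by omega) (by omega)
    ?_ (fun X H _ => hall X H) ?_ ⟨1, 1, by omega, by omega, by simp⟩ ?_
    (fun C H => Or.inr (Or.inl (hall C H)))
  · intro i j hi hj
    obtain ⟨x, y, h1, -⟩ := B.exists_out (i := i) (j := j) (by omega)
    exact ⟨x, y, h1⟩
  · rw [hset]
    refine ⟨Set.singleton_nonempty _, ?_⟩
    rintro u rfl v rfl k f hf i hi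
    have := hf.2 0 (fun _ => (⟨0, by omega⟩, ⟨0, by omega⟩)) ⟨rfl, rfl, by intro i hi; omega⟩
    have : i = 0 := by omega
    subst this
    rw [hf.1.1]; rfl
  · rw [hset]; simp

/-! ### Counting -/

theorem ncard_under {n m : ℕ} (c : ℕ → ℕ) (hc : ∀ j, c j ≤ m) :
    (ofC n m (fun i j => i < c j)).ncard = ∑ j ∈ Finset.range n, c j := by
  have e : (ofC n m (fun i j => i < c j)) ≃ (Σ j : Fin n, Fin (c j)) :=
    { toFun := fun x => ⟨x.1.1, ⟨x.1.2, x.2⟩⟩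
      invFun := fun y => ⟨(y.1, ⟨y.2, lt_of_lt_of_le y.2.2 (hc _)⟩), y.2.2⟩
      left_inv := fun x => rfl
      right_inv := fun y => rfl }
  rw [← Nat.card_coe_set_eq, Nat.card_congr e, Nat.card_eq_fintype_card, Fintype.card_sigma]
  simp [Finset.sum_range]

theorem ncard_over {n m : ℕ} (c : ℕ → ℕ) (hc : ∀ j, c j ≤ m) :
    (ofC n m (fun i j => m - 1 - i < c j)).ncard = ∑ j ∈ Finset.range n, c j := by
  rw [← ncard_under c hc]
  refine Set.ncard_congr (fun x _ => (x.1, Fin.rev x.2)) ?_ ?_ ?_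
  · rintro x hx
    simp only [ofC, Set.mem_setOf_eq, Fin.val_rev] at hx ⊢
    omega
  · rintro x y hx hy h
    simp only [Prod.mk.injEq, Fin.rev_inj] at h
    exact Prod.ext h.1 h.2
  · rintro x hx
    refine ⟨(x.1, Fin.rev x.2), ?_, by simp⟩
    simp only [ofC, Set.mem_setOf_eq, Fin.val_rev] at hx ⊢
    omega

theorem ncard_le_of_imp {n m : ℕ} {P Q : ℕ → ℕ → Prop}
    (h : ∀ i j, i < m → j < n → P i j → Q i j) : (ofC n m P).ncard ≤ (ofC n m Q).ncard :=
  Set.ncard_le_ncard (fun x hx => h _ _ x.2.2 x.1.2 hx) (Set.toFinite _)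

theorem closed_wk {R w : ℕ} {Rt Up : ℕ → ℕ → Prop} {X : ℕ → ℕ → Prop}
    (hX : ∀ i j i' j', X i j → GArc R w Rt Up i j i' j' → X i' j') {i j i' j' k : ℕ}
    (h : Wk (GArc R w Rt Up) i j i' j' k) (h0 : X i j) : X i' j' := by
  induction h with
  | nil => exact h0
  | cons hA _ ih => exact ih (hX _ _ _ _ h0 hA)

/-! ### The staircase construction with a checkerboard complement -/

structure FBd (m n h a : ℕ) (c : ℕ → ℕ) (Rt Up : ℕ → ℕ → Prop) : Prop where
  L : LBlk m n Rt Up h a 0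
  h2 : 2 ≤ h
  a2 : 2 ≤ a
  c0 : c 0 = h
  c1 : c 1 = h
  anti : ∀ i j, i ≤ j → c j ≤ c i
  cpos : ∀ j, j < a → 2 ≤ c j
  czero : ∀ j, a ≤ j → c j = 0
  rtI : ∀ i j, i < h → j < a → (Rt i j ↔ ¬ (1 ≤ i ∧ i < c (j + 1)))
  upI : ∀ i j, i < h → j < a → (Up i j ↔ j ≠ 0)

section
variable {m n h a : ℕ} {c : ℕ → ℕ} {Rt Up : ℕ → ℕ → Prop} {C : ℕ → ℕ → Prop}

theorem FBd.sink (F : FBd m n h a c Rt Up) :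
    ∀ i j, i < m → j < n → ∃ i' j', GArc m n Rt Up i j i' j' := by
  obtain ⟨L, h2, a2, c0, c1, anti, cpos, czero, rtI, upI⟩ := F
  have hh := L.hh
  have ha := L.ha
  intro i j hi hj
  by_cases hU : h ≤ i ∨ a ≤ j
  · exact L.exists_out hi hj hU
  · push Not at hU
    by_cases hj0 : j = 0
    · subst hj0
      by_cases hi0 : i = 0
      · subst hi0
        exact ⟨_, _, GArc.right hi (by omega) ((rtI _ _ hU.1 hU.2).2 (by omega))⟩
      · obtain ⟨i, rfl⟩ : ∃ z, i = z + 1 := ⟨i - 1, by omega⟩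
        refine ⟨_, _, GArc.down hi (by omega) (fun hx => ?_)⟩
        exact (upI i 0 (by omega) hU.2).1 hx rfl
    · exact ⟨_, _, GArc.up (by omega) hj ((upI _ _ hU.1 hU.2).2 hj0)⟩

theorem FBd.le_h (F : FBd m n h a c Rt Up) (j : ℕ) : c j ≤ h := by
  have := F.anti 0 j (by omega)
  have := F.c0
  omega

theorem FBd.lt_a (F : FBd m n h a c Rt Up) {i j : ℕ} (hij : i < c j) : j < a := by
  by_contra hc
  have := F.czero j (by omega)
  omega

theorem FBd.exit (F : FBd m n h a c Rt Up) : ∀ i j i' j', GArc m n Rt Up i j i' j' →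
    ¬ i < c j → i' < c j' → i = h ∧ j = 0 ∧ i' = h - 1 ∧ j' = 0 := by
  have hle := F.le_h
  intro i j i' j' hA hS hS'
  have hlt := F.lt_a hS'
  have hleh := hle j'
  obtain ⟨L, h2, a2, c0, c1, anti, cpos, czero, rtI, upI⟩ := F
  obtain ⟨-, -, -, -, hA⟩ := hA
  rcases hA with ⟨rfl, rfl, hA⟩ | ⟨rfl, rfl, hA⟩ | ⟨rfl, rfl, hA⟩ | ⟨rfl, rfl, hA⟩
  · have := anti j (j + 1) (by omega); omega
  · rw [rtI _ _ (by omega) (by omega)] at hA; omega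
  · omega
  · rw [upI _ _ (by omega) (by omega)] at hA
    have : j' = 0 := by omega
    subst this; omega

theorem FBd.toExit (F : FBd m n h a c Rt Up) {i j : ℕ} (hi : 1 ≤ i) (hj : 1 ≤ j) (hij : i < c j) :
    Wk (GArc m n Rt Up) i j (h - 1) 0 (mh i j (h - 1) 0) := by
  have hlt := F.lt_a hij
  have hle := F.le_h j
  obtain ⟨L, h2, a2, c0, c1, anti, cpos, czero, rtI, upI⟩ := F
  have hh := L.hh
  have ha := L.ha
  have w1 : Wk (GArc m n Rt Up) i j i 1 (j - 1) := by
    refine Wk.lineL hj (by omega) (by omega) ?_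
    intro l hl hl'
    rw [rtI _ _ (by omega) (by omega)]
    have := anti (l + 1) j (by omega)
    omega
  have w2 : Wk (GArc m n Rt Up) i 1 (h - 1) 1 (h - 1 - i) := by
    refine Wk.lineU (by omega) (by omega) (by omega) ?_
    intro l hl hl'
    rw [upI _ _ (by omega) (by omega)]
    omega
  have w3 : Wk (GArc m n Rt Up) (h - 1) 1 (h - 1) 0 1 := by
    refine Wk.single (GArc.left (by omega) (by omega) ?_)
    rw [rtI _ _ (by omega) (by omega)]
    simp only [Nat.zero_add]
    omega
  exact ((w1.trans w2).trans w3).cast (by unfold mh; omega)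

theorem FBd.ear (F : FBd m n h a c Rt Up) : ∀ i j x y, GArc m n Rt Up i j x y → i < c j →
    ¬ x < c y → ∃ d, Wk (GArc m n Rt Up) i j (h - 1) 0 d ∧
        ∀ l, Wk (GArc m n Rt Up) x y h 0 l → d < l + 2 := by
  intro i j x y hA hS hT
  have hlt := F.lt_a hS
  have hle := F.le_h j
  refine ⟨mh i j (h - 1) 0, ?_, ?_⟩
  · have hj : 1 ≤ j := by
      by_contra hj
      have : j = 0 := by omega
      subst this
      have hc0 := F.c0
      have hc1 := F.c1
      have hu := F.upI i 0 (by omega) (by omega)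
      obtain ⟨-, -, -, -, hA⟩ := hA
      rcases hA with ⟨rfl, rfl, hA⟩ | ⟨rfl, h1, hA⟩ | ⟨rfl, rfl, hA⟩ | ⟨rfl, rfl, hA⟩
      · apply hT; simpa [hc1, hc0] using hS
      · omega
      · exact hu.1 hA rfl
      · omega
    by_cases hi : 1 ≤ i
    · exact F.toExit hi hj hS
    · have : i = 0 := by omega
      subst this
      have h2 := F.h2
      have hh := F.L.hh
      have ha := F.L.ha
      have := F.cpos j hlt
      have w1 : GArc m n Rt Up 0 j 1 j :=
        GArc.up (by omega) (by omega) ((F.upI 0 j (by omega) hlt).2 (by omega))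
      exact ((Wk.single w1).trans (F.toExit le_rfl hj (by omega))).cast (by unfold mh; omega)
  · intro l hl
    have h1 := hl.mh_le.1
    have h2 := hA.mh_eq
    have := F.h2
    unfold mh at *
    omega

theorem FBd.meetU (F : FBd m n h a c Rt Up) (H : Hull m n (GArc m n Rt Up) C) :
    ∀ N i j, C i j → ¬ i < c j → (h - i) + (a - j) ≤ N → ∃ x y, C x y ∧ (h ≤ x ∨ a ≤ y) := by
  intro N
  induction N with
  | zero => intro i j hC hT hN; exact ⟨i, j, hC, by omega⟩
  | succ N ih =>
    intro i j hC hT hN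
    by_cases hU : h ≤ i ∨ a ≤ j
    · exact ⟨i, j, hC, hU⟩
    obtain ⟨p, q, hA, hC'⟩ := H.out hC
    have hc0 := F.c0
    obtain ⟨-, -, -, -, hA⟩ := hA
    rcases hA with ⟨rfl, rfl, hA⟩ | ⟨rfl, rfl, hA⟩ | ⟨rfl, rfl, hA⟩ | ⟨rfl, rfl, hA⟩
    · have := F.anti j (j + 1) (by omega)
      exact ih _ _ hC' (by omega) (by omega)
    · rw [F.rtI _ _ (by omega) (by omega)] at hA; omega
    · exact ih _ _ hC' (by omega) (by omega)
    · rw [F.upI _ _ (by omega) (by omega)] at hA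
      have : q = 0 := by omega
      subst this; omega

theorem FBd.allOf (F : FBd m n h a c Rt Up) (H : Hull m n (GArc m n Rt Up) C)
    (hU : ∀ x y, x < m → y < n → h ≤ x ∨ a ≤ y → C x y) (hcol : ∀ i, i < h → C i 0) :
    ∀ i j, i < m → j < n → C i j := by
  intro i j hi hj
  by_cases hIJ : h ≤ i ∨ a ≤ j
  · exact hU i j hi hj hIJ
  have h2 := F.h2
  have a2 := F.a2
  have hh := F.L.hh
  have ha := F.L.ha
  by_cases hj0 : j = 0
  · subst hj0; exact hcol i (by omega)
  have w1 : Wk (GArc m n Rt Up) 0 0 0 j (j - 0) := by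
    refine Wk.lineR (by omega) (by omega) (by omega) ?_
    intro l hl hl'
    rw [F.rtI _ _ (by omega) (by omega)]; omega
  have w2 : ∀ x y, x ≤ y → y ≤ h → Wk (GArc m n Rt Up) x j y j (y - x) := by
    intro x y hxy hy
    refine Wk.lineU hxy (by omega) (by omega) ?_
    intro l hl hl'
    rw [F.upI _ _ (by omega) (by omega)]; omega
  refine H.pm (hcol 0 (by omega)) (hU h j (by omega) hj (by omega))
    (w1.trans (w2 0 i (by omega) (by omega))) (w2 i h (by omega) le_rfl) ?_
  unfold mh; omega

theorem FBd.col0 (F : FBd m n h a c Rt Up) (H : Hull m n (GArc m n Rt Up) C)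
    (hU : ∀ x y, x < m → y < n → h ≤ x ∨ a ≤ y → C x y)
    (hne : a ≠ n ∨ ∃ i j, C i j ∧ i < c j) : ∀ i, i < h → C i 0 := by
  have h2 := F.h2
  have a2 := F.a2
  have hh := F.L.hh
  have ha := F.L.ha
  rcases hne with hne | ⟨p, q, hpq, hS⟩
  · intro i hi
    have w1 : ∀ x y, x ≤ y → y ≤ h → Wk (GArc m n Rt Up) y 0 x 0 (y - x) := by
      intro x y hxy hy
      refine Wk.lineD hxy (by omega) (by omega) ?_
      intro l hl hl'
      rw [F.upI _ _ (by omega) (by omega)]; omega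
    have w2 : Wk (GArc m n Rt Up) 0 0 0 a (a - 0) := by
      refine Wk.lineR (by omega) (by omega) (by omega) ?_
      intro l hl hl'
      rw [F.rtI _ _ (by omega) (by omega)]; omega
    refine H.pm (hU h 0 (by omega) (by omega) (by omega)) (hU 0 a (by omega) (by omega) (by omega))
      (w1 i h (by omega) le_rfl) ((w1 0 i (by omega) (by omega)).trans w2) ?_
    unfold mh; omega
  · obtain ⟨x, y, x', y', hA, h1, h3, h4, h5⟩ := H.cut (fun i j => ¬ i < c j)
      (hU h 0 (by omega) (by omega) (by omega)) hpq (by have := F.c0; omega) (by simpa using hS)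
    obtain ⟨-, -, rfl, rfl⟩ := F.exit _ _ _ _ hA h4 (by omega)
    have : ∀ k, k < h → C (h - 1 - k) 0 := by
      intro k
      induction k with
      | zero => intro _; exact h3
      | succ k ih =>
        intro hk
        obtain ⟨p, q, hA, hC'⟩ := H.out (ih (by omega))
        obtain ⟨-, -, -, -, hA⟩ := hA
        rcases hA with ⟨rfl, rfl, hA⟩ | ⟨rfl, h6, hA⟩ | ⟨rfl, rfl, hA⟩ | ⟨rfl, h6, hA⟩
        · rw [F.rtI _ _ (by omega) (by omega), Nat.zero_add, F.c1] at hA; omega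
        · omega
        · rw [F.upI _ _ (by omega) (by omega)] at hA; omega
        · rwa [show h - 1 - (k + 1) = p by omega]
    intro i hi
    have := this (h - 1 - i) (by omega)
    rwa [show h - 1 - (h - 1 - i) = i by omega] at this

theorem FBd.noPocket (F : FBd m n h a c Rt Up) (H : Hull m n (GArc m n Rt Up) C)
    (hT : ∀ i j, C i j → ¬ i < c j) (han : a = n) :
    ∀ N i j, i + j ≤ N → C i j → h ≤ i := by
  intro N
  have hc0 := F.c0
  have key : ∀ i j, C i j → ¬ h ≤ i → ∃ p q, p + q < i + j ∧ C p q ∧ p < h := by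
    intro i j hC hi
    have hs := H.sub hC
    have h1 := hT _ _ hC
    obtain ⟨p, q, hA, hC'⟩ := H.inn hC
    have hs' := H.sub hC'
    have h2 := hT _ _ hC'
    obtain ⟨-, -, -, -, hA⟩ := hA
    rcases hA with ⟨rfl, rfl, hA⟩ | ⟨rfl, rfl, hA⟩ | ⟨rfl, rfl, hA⟩ | ⟨rfl, rfl, hA⟩
    · exact ⟨_, _, by omega, hC', by omega⟩
    · rw [F.rtI _ _ (by omega) (by omega)] at hA
      have := F.anti j (j + 1) (by omega)
      omega
    · exact ⟨_, _, by omega, hC', by omega⟩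
    · rw [F.upI _ _ (by omega) (by omega)] at hA
      have : j = 0 := by omega
      subst this; omega
  induction N with
  | zero =>
    intro i j hN hC
    by_contra hi
    obtain ⟨p, q, h1, -⟩ := key i j hC hi
    omega
  | succ N ih =>
    intro i j hN hC
    by_contra hi
    obtain ⟨p, q, h1, h2, h3⟩ := key i j hC hi
    have := ih p q (by omega) h2
    omega

theorem FBd.mem (F : FBd m n h a c Rt Up) {k : ℕ} (hk : ∑ j ∈ Finset.range n, c j = k)
    (han : a = n → (m - h) * n ≤ k) : k ∈ strongConvexitySpectrum (gridGraph n m) := by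
  have h2 := F.h2
  have a2 := F.a2
  have hh := F.L.hh
  have ha := F.L.ha
  have hle := F.le_h
  have c0 := F.c0
  have hcard : (ofC n m (fun i j => i < c j)).ncard = k := by
    rw [← hk]; exact ncard_under c (fun j => by have := hle j; omega)
  refine mem_spectrum (Rt := Rt) (Up := Up) (S := fun i j => i < c j) (by omega) (by omega)
    F.sink ?_ (convex_of_exit ?_ F.exit F.ear) ⟨h, 0, by omega, by omega, by omega⟩ hcard ?_
  · intro X H hcl
    have hnS : ∃ i j, X i j ∧ ¬ i < c j := by
      by_contra hcon
      push Not at hcon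
      have key : ∀ i j, 1 ≤ j → ¬ X i j := by
        intro i j hj hX
        have h1 := hcon _ _ hX
        have h3 := F.lt_a h1
        have h4 := hle j
        have : X (c j) j := by
          refine closed_wk hcl (Wk.lineU (R := m) (w := n) (i := i) (i' := c j) (j := j)
            (by omega) (by omega) (by omega) ?_) hX
          intro l hl hl'
          rw [F.upI _ _ (by omega) (by omega)]; omega
        have := hcon _ _ this
        omega
      obtain ⟨i, j, -, -, hX, -⟩ := H.two
      have hj : j = 0 := by
        by_contra hj
        exact key i j (by omega) hX
      subst hj
      have h1 := hcon _ _ hX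
      have h3 : X 0 0 := by
        refine closed_wk hcl (Wk.lineD (R := m) (w := n) (i := 0) (i' := i) (j := 0)
            (by omega) (by omega) (by omega) ?_) hX
        intro l hl hl'
        rw [F.upI _ _ (by omega) (by omega)]; omega
      refine key 0 1 le_rfl (hcl _ _ _ _ h3 (GArc.right (by omega) (by omega) ?_))
      rw [F.rtI _ _ (by omega) (by omega)]; omega
    obtain ⟨i, j, hX, hT⟩ := hnS
    obtain ⟨x, y, hxy, hU⟩ := F.meetU H _ i j hX hT le_rfl
    have hUall := F.L.all H hxy hU
    refine F.allOf H hUall (F.col0 H hUall (Or.inr ⟨h - 1, 0, ?_, by omega⟩))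
    have h3 : X h 0 := hUall h 0 (by omega) (by omega) (by omega)
    refine closed_wk hcl (Wk.lineD (R := m) (w := n) (i := h - 1) (i' := h) (j := 0)
            (by omega) (by omega) (by omega) ?_) h3
    intro l hl hl'
    rw [F.upI _ _ (by omega) (by omega)]; omega
  · exact ⟨(⟨0, by omega⟩, ⟨0, by omega⟩), by simp; omega⟩
  · intro C H
    by_cases hS : ∀ i j, C i j → i < c j
    · exact Or.inl hS
    push Not at hS
    obtain ⟨i, j, hX, hT⟩ := hS
    obtain ⟨x, y, hxy, hU⟩ := F.meetU H _ i j hX (by omega) le_rfl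
    have hUall := F.L.all H hxy hU
    by_cases hc : a ≠ n ∨ ∃ i j, C i j ∧ i < c j
    · exact Or.inr (Or.inl (F.allOf H hUall (F.col0 H hUall hc)))
    · push Not at hc
      refine Or.inr (Or.inr (le_trans ?_ (han hc.1)))
      have h3 := ncard_over (n := n) (m := m) (fun _ => m - h) (fun _ => by omega)
      simp only [Finset.sum_const, Finset.card_range, smul_eq_mul] at h3
      rw [Nat.mul_comm, ← h3]
      refine ncard_le_of_imp ?_
      intro i j hi hj hC
      have := F.noPocket H (fun i j hC => by have := hc.2 i j hC; omega) hc.1 _ i j le_rfl hC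
      omega
end

/-- existence of staircases -/
theorem exists_stair (lo : ℕ) : ∀ L h k, lo ≤ h → lo * L ≤ k → k ≤ h * L →
    ∃ c : ℕ → ℕ, (∀ i j, i ≤ j → j < L → c j ≤ c i) ∧ (∀ j, j < L → lo ≤ c j ∧ c j ≤ h) ∧
      ∑ j ∈ Finset.range L, c j = k := by
  intro L
  induction L with
  | zero => intro h k _ _ h2; exact ⟨fun _ => 0, by omega, by omega, by simp at *; omega⟩
  | succ L ih =>
    intro h k h1 h2 h3
    rw [Nat.mul_succ] at h2 h3
    by_cases hk : k - lo * L ≤ h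
    · refine ⟨fun j => if j = 0 then k - lo * L else lo, ?_, ?_, ?_⟩
      · intro i j hij hj
        dsimp only
        split_ifs <;> omega
      · intro j hj
        dsimp only
        split_ifs <;> omega
      · rw [Finset.sum_range_succ']
        simp [Nat.mul_comm L lo]; omega
    · obtain ⟨c, c1, c2, c3⟩ := ih h (k - h) h1 (by omega) (by omega)
      refine ⟨fun j => if j = 0 then h else c (j - 1), ?_, ?_, ?_⟩
      · intro i j hij hj
        dsimp only
        split_ifs with g1 g2 g2
        · exact le_rfl
        · omega
        · exact (c2 _ (by omega)).2
        · exact c1 _ _ (by omega) (by omega)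
      · intro j hj
        dsimp only
        split_ifs
        · omega
        · exact c2 _ (by omega)
      · rw [Finset.sum_range_succ']
        simp [c3]; omega

/-- staircase with two full columns, and zeros after `a` columns -/
theorem exists_stair2 {lo a h k n : ℕ} (ha : 2 ≤ a) (han : a ≤ n) (hlo : lo ≤ h)
    (h1 : 2 * h + lo * (a - 2) ≤ k) (h2 : k ≤ h * a) :
    ∃ c : ℕ → ℕ, c 0 = h ∧ c 1 = h ∧ (∀ i j, i ≤ j → c j ≤ c i) ∧ (∀ j, j < a → lo ≤ c j) ∧
      (∀ j, a ≤ j → c j = 0) ∧ ∑ j ∈ Finset.range n, c j = k := by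
  obtain ⟨b, rfl⟩ : ∃ b, a = b + 2 := ⟨a - 2, by omega⟩
  rw [Nat.add_sub_cancel] at h1
  rw [Nat.mul_add] at h2
  obtain ⟨c, c1, c2, c3⟩ := exists_stair lo b h (k - 2 * h) hlo (by omega) (by omega)
  refine ⟨fun j => if j < 2 then h else if j < b + 2 then c (j - 2) else 0, by simp, by simp, ?_,
    ?_, ?_, ?_⟩
  · intro i j hij
    dsimp only
    split_ifs with g1 g2 g3 g4 g5 g6 g7
    any_goals omega
    · exact (c2 _ (by omega)).2
    · exact c1 _ _ (by omega) (by omega)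
  · intro j hj
    dsimp only
    split_ifs
    · omega
    · exact (c2 _ (by omega)).1
  · intro j hj
    dsimp only
    rw [if_neg (by omega), if_neg (by omega)]
  · obtain ⟨d, rfl⟩ : ∃ d, n = b + d + 2 := ⟨n - (b + 2), by omega⟩
    rw [Finset.sum_range_succ', Finset.sum_range_succ', Finset.sum_range_add]
    have e1 : ∑ x ∈ Finset.range b, (if x + 1 + 1 < 2 then h else
        if x + 1 + 1 < b + 2 then c (x + 1 + 1 - 2) else 0) = k - 2 * h := by
      rw [← c3]
      refine Finset.sum_congr rfl ?_
      intro x hx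
      rw [Finset.mem_range] at hx
      rw [if_neg (by omega), if_pos (by omega)]
      rfl
    rw [e1]
    simp; omega

theorem spectrum_FB {n m h a k : ℕ} (h2 : 2 ≤ h) (hm : h + 2 ≤ m) (a2 : 2 ≤ a)
    (han : a + 2 ≤ n ∨ (a = n ∧ (m - h) * n ≤ k)) (hk1 : 2 * h + 2 * (a - 2) ≤ k)
    (hk2 : k ≤ h * a) : k ∈ strongConvexitySpectrum (gridGraph n m) := by
  obtain ⟨c, c0, c1, c2, c3, c4, c5⟩ := exists_stair2 (n := n) a2 (by omega) h2 hk1 hk2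
  refine FBd.mem (m := m) (h := h) (a := a) (c := c)
    (Rt := fun i j => if h ≤ i ∨ a ≤ j then (i + j + 0) % 2 = 1 else ¬ (1 ≤ i ∧ i < c (j + 1)))
    (Up := fun i j => if h ≤ i ∨ a ≤ j then (i + j + 0) % 2 = 0 else j ≠ 0)
    ⟨⟨hm, by omega, by omega, ?_, ?_⟩, h2, a2, c0, c1, c2, c3, c4, ?_, ?_⟩ c5 (by omega)
  · intro i j hij; simp only [hij, if_true]
  · intro i j hij; simp only [hij, if_true]
  · intro i j hi hj; rw [if_neg (by omega)]
  · intro i j hi hj; rw [if_neg (by omega)]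

/-! ### The value seven -/

/-- the orientation for seven: rightward arcs -/
def Rt7 (i j : ℕ) : Prop := ((3 ≤ i ∨ 3 ≤ j) ∧ (i + j + 1) % 2 = 1) ∨
    (i = 0 ∧ j = 1) ∨ (i = 0 ∧ j = 2) ∨ (i = 1 ∧ j = 2) ∨ (i = 2 ∧ j = 2) ∨ (i = 1 ∧ j = 0) ∨
    (i = 2 ∧ j = 1)

/-- the orientation for seven: upward arcs -/
def Up7 (i j : ℕ) : Prop := ((3 ≤ i ∨ 3 ≤ j) ∧ (i + j + 1) % 2 = 0) ∨
    (i < 3 ∧ j < 3 ∧ ¬ (i = 2 ∧ j = 1) ∧ ¬ (i = 0 ∧ j = 1) ∧ ¬ (i = 1 ∧ j = 2) ∧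
      ¬ (i = 0 ∧ j = 2))

/-- the seven-element set -/
def S7 (i j : ℕ) : Prop := i ≤ 2 ∧ j ≤ 2 ∧ ¬ (i = 2 ∧ j = 0) ∧ ¬ (i = 0 ∧ j = 2)

instance decRt7 (i j : ℕ) : Decidable (Rt7 i j) := by unfold Rt7; infer_instance
instance decUp7 (i j : ℕ) : Decidable (Up7 i j) := by unfold Up7; infer_instance
instance decS7 (i j : ℕ) : Decidable (S7 i j) := by unfold S7; infer_instance

set_option maxRecDepth 100000 in
set_option synthInstance.maxHeartbeats 400000 in
set_option synthInstance.maxSize 4000 in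
set_option maxHeartbeats 1000000 in
theorem seven_arcs_aux : ∀ i j x y : Fin 4,
    ((x.1 = i.1 ∧ y.1 = j.1 + 1 ∧ Rt7 i.1 j.1) ∨ (x.1 = i.1 ∧ j.1 = y.1 + 1 ∧ ¬ Rt7 i.1 y.1) ∨
      (y.1 = j.1 ∧ x.1 = i.1 + 1 ∧ Up7 i.1 j.1) ∨ (y.1 = j.1 ∧ i.1 = x.1 + 1 ∧ ¬ Up7 x.1 j.1)) →
    (S7 i.1 j.1 → ¬ S7 x.1 y.1 → (i.1 = 1 ∧ j.1 = 0 ∧ x.1 = 2 ∧ y.1 = 0) ∨ (i.1 = 2 ∧ j.1 = 1 ∧ x.1 = 2 ∧ y.1 = 0) ∨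
        (i.1 = 0 ∧ j.1 = 1 ∧ x.1 = 0 ∧ y.1 = 2) ∨ (i.1 = 1 ∧ j.1 = 2 ∧ x.1 = 0 ∧ y.1 = 2) ∨
        (i.1 = 1 ∧ j.1 = 2 ∧ x.1 = 1 ∧ y.1 = 3) ∨ (i.1 = 2 ∧ j.1 = 2 ∧ x.1 = 2 ∧ y.1 = 3) ∨
        (i.1 = 2 ∧ j.1 = 2 ∧ x.1 = 3 ∧ y.1 = 2)) ∧
    (¬ S7 i.1 j.1 → S7 x.1 y.1 → i.1 = 3 ∧ j.1 = 1 ∧ x.1 = 2 ∧ y.1 = 1) := by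
  decide

theorem seven_arcs : ∀ i < 4, ∀ j < 4, ∀ x < 4, ∀ y < 4,
    ((x = i ∧ y = j + 1 ∧ Rt7 i j) ∨ (x = i ∧ j = y + 1 ∧ ¬ Rt7 i y) ∨
      (y = j ∧ x = i + 1 ∧ Up7 i j) ∨ (y = j ∧ i = x + 1 ∧ ¬ Up7 x j)) →
    (S7 i j → ¬ S7 x y → (i = 1 ∧ j = 0 ∧ x = 2 ∧ y = 0) ∨ (i = 2 ∧ j = 1 ∧ x = 2 ∧ y = 0) ∨
        (i = 0 ∧ j = 1 ∧ x = 0 ∧ y = 2) ∨ (i = 1 ∧ j = 2 ∧ x = 0 ∧ y = 2) ∨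
        (i = 1 ∧ j = 2 ∧ x = 1 ∧ y = 3) ∨ (i = 2 ∧ j = 2 ∧ x = 2 ∧ y = 3) ∨
        (i = 2 ∧ j = 2 ∧ x = 3 ∧ y = 2)) ∧
    (¬ S7 i j → S7 x y → i = 3 ∧ j = 1 ∧ x = 2 ∧ y = 1) := by
  exact fun i hi j hj x hx y hy => seven_arcs_aux ⟨i, hi⟩ ⟨j, hj⟩ ⟨x, hx⟩ ⟨y, hy⟩

set_option maxHeartbeats 2000000 in
theorem spectrum_seven {n m : ℕ} (hm : 6 ≤ m) (hn : 6 ≤ n) :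
    7 ∈ strongConvexitySpectrum (gridGraph n m) := by
  have hR : ∀ i j, Rt7 i j ↔ (((3 ≤ i ∨ 3 ≤ j) ∧ (i + j + 1) % 2 = 1) ∨
    (i = 0 ∧ j = 1) ∨ (i = 0 ∧ j = 2) ∨ (i = 1 ∧ j = 2) ∨ (i = 2 ∧ j = 2) ∨ (i = 1 ∧ j = 0) ∨
    (i = 2 ∧ j = 1)) := fun _ _ => Iff.rfl
  have hU : ∀ i j, Up7 i j ↔ (((3 ≤ i ∨ 3 ≤ j) ∧ (i + j + 1) % 2 = 0) ∨
    (i < 3 ∧ j < 3 ∧ ¬ (i = 2 ∧ j = 1) ∧ ¬ (i = 0 ∧ j = 1) ∧ ¬ (i = 1 ∧ j = 2) ∧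
      ¬ (i = 0 ∧ j = 2))) := fun _ _ => Iff.rfl
  have hS : ∀ i j, S7 i j ↔ (i ≤ 2 ∧ j ≤ 2 ∧ ¬ (i = 2 ∧ j = 0) ∧
    ¬ (i = 0 ∧ j = 2)) := fun _ _ => Iff.rfl
  have L : LBlk m n Rt7 Up7 3 3 1 := by
    refine ⟨by omega, by omega, by omega, ?_, ?_⟩
    · intro i j h; rw [hR]; omega
    · intro i j h; rw [hU]; omega
  have aR : ∀ i j, i < 5 → j < 5 → Rt7 i j → GArc m n Rt7 Up7 i j i (j + 1) :=
    fun i j hi hj h => GArc.right (by omega) (by omega) h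
  have aL : ∀ i j, i < 5 → j < 5 → ¬ Rt7 i j → GArc m n Rt7 Up7 i (j + 1) i j :=
    fun i j hi hj h => GArc.left (by omega) (by omega) h
  have aU : ∀ i j, i < 5 → j < 5 → Up7 i j → GArc m n Rt7 Up7 i j (i + 1) j :=
    fun i j hi hj h => GArc.up (by omega) (by omega) h
  have aD : ∀ i j, i < 5 → j < 5 → ¬ Up7 i j → GArc m n Rt7 Up7 (i + 1) j i j :=
    fun i j hi hj h => GArc.down (by omega) (by omega) h
  have a1 := aU 2 0 (by omega) (by omega) (by rw [hU]; omega)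
  have a2 := aR 0 2 (by omega) (by omega) (by rw [hR]; omega)
  have a3 := aD 2 1 (by omega) (by omega) (by rw [hU]; omega)
  have a4 := aR 2 1 (by omega) (by omega) (by rw [hR]; omega)
  have a5 := aR 2 2 (by omega) (by omega) (by rw [hR]; omega)
  have a6 := aL 2 0 (by omega) (by omega) (by rw [hR]; omega)
  have a7 := aD 1 2 (by omega) (by omega) (by rw [hU]; omega)
  have a8 := aR 1 2 (by omega) (by omega) (by rw [hR]; omega)
  have a9 := aD 0 2 (by omega) (by omega) (by rw [hU]; omega)
  have b1 := aL 1 1 (by omega) (by omega) (by rw [hR]; omega)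
  have b2 := aU 1 1 (by omega) (by omega) (by rw [hU]; omega)
  have b3 := aD 0 1 (by omega) (by omega) (by rw [hU]; omega)
  have b4 := aR 0 1 (by omega) (by omega) (by rw [hR]; omega)
  have b5 := aL 0 0 (by omega) (by omega) (by rw [hR]; omega)
  have b6 := aU 0 0 (by omega) (by omega) (by rw [hU]; omega)
  have b7 := aU 1 0 (by omega) (by omega) (by rw [hU]; omega)
  have b8 := aR 1 0 (by omega) (by omega) (by rw [hR]; omega)
  have b9 := aR 3 1 (by omega) (by omega) (by rw [hR]; omega)
  have hfill : ∀ C, Hull m n (GArc m n Rt7 Up7) C → ∀ x y, C x y → ¬ S7 x y →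
      ∀ i j, i < m → j < n → C i j := by
    intro C H x y hC hxy
    have hUx : ∃ p q, C p q ∧ (3 ≤ p ∨ 3 ≤ q) := by
      by_cases h : 3 ≤ x ∨ 3 ≤ y
      · exact ⟨x, y, hC, h⟩
      rw [hS] at hxy
      obtain ⟨p, q, hA, hC'⟩ := H.out hC
      refine ⟨p, q, hC', ?_⟩
      obtain ⟨-, -, -, -, hA⟩ := hA
      rcases hA with ⟨rfl, rfl, hA⟩ | ⟨rfl, rfl, hA⟩ | ⟨rfl, rfl, hA⟩ | ⟨rfl, rfl, hA⟩
      · rw [hR] at hA; omega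
      · rw [hR] at hA; omega
      · rw [hU] at hA; omega
      · rw [hU] at hA; omega
    obtain ⟨p, q, hpq, hpq'⟩ := hUx
    have hall := L.all H hpq hpq'
    have u1 : C 3 1 := hall _ _ (by omega) (by omega) (by omega)
    have u2 : C 2 3 := hall _ _ (by omega) (by omega) (by omega)
    have u3 : C 3 0 := hall _ _ (by omega) (by omega) (by omega)
    have u4 : C 1 3 := hall _ _ (by omega) (by omega) (by omega)
    have u5 : C 0 3 := hall _ _ (by omega) (by omega) (by omega)
    have s21 : C 2 1 := H.pm u1 u2 (Wk.single a3) ((Wk.single a4).trans (Wk.single a5)) rfl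
    have s22 : C 2 2 := H.r1 s21 u2 a4 a5
    have s20 : C 2 0 := H.r1 s21 u3 a6 a1
    have s12 : C 1 2 := H.r1 s22 u4 a7 a8
    have s02 : C 0 2 := H.r1 s12 u5 a9 a2
    have s11 : C 1 1 := H.r1 s12 s21 b1 b2
    have s01 : C 0 1 := H.r1 s11 s02 b3 b4
    have s00 : C 0 0 := H.pm s01 s20 (Wk.single b5) ((Wk.single b6).trans (Wk.single b7)) rfl
    have s10 : C 1 0 := H.r1 s00 s20 b6 b7
    intro i j hi hj
    by_cases h : 3 ≤ i ∨ 3 ≤ j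
    · exact hall i j hi hj h
    have h1 : i = 0 ∨ i = 1 ∨ i = 2 := by omega
    have h2 : j = 0 ∨ j = 1 ∨ j = 2 := by omega
    rcases h1 with rfl | rfl | rfl <;> rcases h2 with rfl | rfl | rfl <;> assumption
  refine mem_spectrum (Rt := Rt7) (Up := Up7) (S := S7) (by omega) (by omega) ?_ ?_
    (convex_of_exit (t1 := 3) (t2 := 1) (z1 := 2) (z2 := 1) ?_ ?_ ?_)
    ⟨3, 3, by omega, by omega, by rw [hS]; omega⟩ ?_ ?_
  · intro i j hi hj
    by_cases h : 3 ≤ i ∨ 3 ≤ j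
    · exact L.exists_out hi hj h
    have h1 : i = 0 ∨ i = 1 ∨ i = 2 := by omega
    have h2 : j = 0 ∨ j = 1 ∨ j = 2 := by omega
    rcases h1 with rfl | rfl | rfl <;> rcases h2 with rfl | rfl | rfl
    exacts [⟨_, _, b6⟩, ⟨_, _, b5⟩, ⟨_, _, a2⟩, ⟨_, _, b7⟩, ⟨_, _, b2⟩, ⟨_, _, b1⟩, ⟨_, _, a1⟩,
      ⟨_, _, a4⟩, ⟨_, _, a5⟩]
  · intro X H hcl
    have : ∃ i j, X i j ∧ ¬ S7 i j := by
      obtain ⟨i, j, -, -, hX, -⟩ := H.two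
      by_cases h : S7 i j
      · rw [hS] at h
        have h20 : ¬ S7 2 0 := by rw [hS]; omega
        have g10 : X 1 0 → X 2 0 := fun h => hcl _ _ _ _ h b7
        have g00 : X 0 0 → X 1 0 := fun h => hcl _ _ _ _ h b6
        have g01 : X 0 1 → X 0 0 := fun h => hcl _ _ _ _ h b5
        have g11 : X 1 1 → X 2 1 := fun h => hcl _ _ _ _ h b2
        have g21 : X 2 1 → X 2 0 := fun h => hcl _ _ _ _ h a6
        have g12 : X 1 2 → X 1 1 := fun h => hcl _ _ _ _ h b1
        have g22 : X 2 2 → X 1 2 := fun h => hcl _ _ _ _ h a7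
        refine ⟨2, 0, ?_, h20⟩
        have h1 : i = 0 ∨ i = 1 ∨ i = 2 := by omega
        have h2 : j = 0 ∨ j = 1 ∨ j = 2 := by omega
        rcases h1 with rfl | rfl | rfl <;> rcases h2 with rfl | rfl | rfl <;> try omega
        exacts [g10 (g00 hX), g10 (g00 (g01 hX)), g10 hX, g21 (g11 hX), g21 (g11 (g12 hX)), g21 hX,
          g21 (g11 (g12 (g22 hX)))]
      · exact ⟨i, j, hX, h⟩
    obtain ⟨i, j, h1, h2⟩ := this
    exact hfill X H i j h1 h2
  · exact ⟨(⟨0, by omega⟩, ⟨0, by omega⟩), by rw [hS]; simp⟩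
  · intro i j i' j' hA h1 h2
    have hm := hA.mh_eq
    unfold mh at hm
    have h3 := (hS i' j').1 h2
    exact (seven_arcs i (by omega) j (by omega) i' (by omega) j' (by omega) hA.2.2.2.2).2 h1 h2
  · intro i j x y hA h1 h2
    have hm := hA.mh_eq
    unfold mh at hm
    have h3 := (hS i j).1 h1
    have hcase := (seven_arcs i (by omega) j (by omega) x (by omega) y (by omega)
      hA.2.2.2.2).1 h1 h2
    have w11 : Wk (GArc m n Rt7 Up7) 1 1 2 1 1 := Wk.single b2
    have w10 : Wk (GArc m n Rt7 Up7) 1 0 2 1 2 := (Wk.single b8).trans w11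
    have w12 : Wk (GArc m n Rt7 Up7) 1 2 2 1 2 := (Wk.single b1).trans w11
    have w22 : Wk (GArc m n Rt7 Up7) 2 2 2 1 3 := (Wk.single a7).trans w12
    have w01 : Wk (GArc m n Rt7 Up7) 0 1 2 1 4 := (Wk.single b5).trans ((Wk.single b6).trans w10)
    rcases hcase with ⟨rfl, rfl, rfl, rfl⟩ | ⟨rfl, rfl, rfl, rfl⟩ | ⟨rfl, rfl, rfl, rfl⟩ |
      ⟨rfl, rfl, rfl, rfl⟩ | ⟨rfl, rfl, rfl, rfl⟩ | ⟨rfl, rfl, rfl, rfl⟩ | ⟨rfl, rfl, rfl, rfl⟩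
    · exact ⟨2, w10, fun l hl => by have := hl.mh_le.1; simp [mh] at this; omega⟩
    · exact ⟨0, Wk.nil _ _, fun l hl => by omega⟩
    · exact ⟨4, w01, fun l hl => by have := hl.mh_le.1; simp [mh] at this; omega⟩
    · exact ⟨2, w12, fun l hl => by have := hl.mh_le.1; simp [mh] at this; omega⟩
    · exact ⟨2, w12, fun l hl => by have := hl.mh_le.1; simp [mh] at this; omega⟩
    · exact ⟨3, w22, fun l hl => by have := hl.mh_le.1; simp [mh] at this; omega⟩
    · refine ⟨3, w22, fun l hl => ?_⟩
      have h3 := hl.mh_le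
      simp [mh] at h3
      by_cases hl1 : l = 1
      · subst hl1
        exfalso
        rcases hl with _ | ⟨hA', hW⟩
        cases hW
        exact hA'.asymm b9
      · omega
  · have : ofC n m S7 = (fun x : Fin 3 × Fin 3 => (Fin.castLE (by omega : 3 ≤ n) x.1,
        Fin.castLE (by omega : 3 ≤ m) x.2)) '' {x | ¬ (x.2 = 2 ∧ x.1 = 0) ∧ ¬ (x.2 = 0 ∧ x.1 = 2)} := by
      ext ⟨x1, x2⟩
      simp only [ofC, Set.mem_setOf_eq, hS, Set.mem_image, Prod.mk.injEq, Prod.exists]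
      constructor
      · rintro ⟨h1, h2, h3, h4⟩
        refine ⟨⟨x1, by omega⟩, ⟨x2, by omega⟩, ?_, rfl, rfl⟩
        simp only [Fin.ext_iff]
        exact ⟨h3, h4⟩
      · rintro ⟨⟨a, ha⟩, ⟨b, hb⟩, h, rfl, rfl⟩
        simp only [Fin.ext_iff] at h
        simp only [Fin.val_castLE]
        exact ⟨by omega, by omega, h.1, h.2⟩
    rw [this, Set.ncard_image_of_injective]
    · rw [Set.ncard_eq_toFinset_card']; decide
    · rintro ⟨a, b⟩ ⟨c, d⟩ h
      simpa using h
  · intro C H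
    by_cases h : ∀ i j, C i j → S7 i j
    · exact Or.inl h
    push Not at h
    obtain ⟨i, j, h1, h2⟩ := h
    exact Or.inr (Or.inl (hfill C H i j h1 h2))

/-! ### The staircase construction with one more row -/

structure FAd (m n : ℕ) (c : ℕ → ℕ) (Rt Up : ℕ → ℕ → Prop) : Prop where
  hm : 6 ≤ m
  hn : 6 ≤ n
  c0 : c 0 = m - 1
  c1 : c 1 = m - 1
  anti : ∀ i j, i ≤ j → c j ≤ c i
  cpos : ∀ j, j < n → 3 ≤ c j
  rtA : ∀ i j, i < 2 → (Rt i j ↔ (i + j) % 2 = 1)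
  rtB : ∀ i j, 2 ≤ i → i < m - 1 → (Rt i j ↔ ¬ i < c (j + 1))
  rtC : ∀ j, ¬ Rt (m - 1) j
  upA : ∀ j, Up 0 j ↔ j % 2 = 0
  upB : ∀ i j, 1 ≤ i → (Up i j ↔ j ≠ 0)

section
variable {m n : ℕ} {c : ℕ → ℕ} {Rt Up : ℕ → ℕ → Prop} {C : ℕ → ℕ → Prop}

theorem FAd.le_m (F : FAd m n c Rt Up) (j : ℕ) : c j ≤ m - 1 := by
  rw [← F.c0]; exact F.anti 0 j (by omega)

theorem FAd.blk (F : FAd m n c Rt Up) : Blk m n Rt Up 0 1 0 (n - 1) 0 := by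
  have hm := F.hm
  have hn := F.hn
  refine ⟨by omega, by omega, by omega, by omega, ?_, ?_⟩
  · intro i j _ h _ _; rw [F.rtA i j (by omega), Nat.add_zero]
  · intro i j _ h _ _
    have : i = 0 := by omega
    subst this
    rw [F.upA]; omega

theorem FAd.sink (F : FAd m n c Rt Up) :
    ∀ i j, i < m → j < n → ∃ i' j', GArc m n Rt Up i j i' j' := by
  intro i j hi hj
  have hm := F.hm
  have hn := F.hn
  by_cases h1 : i ≤ 1
  · obtain ⟨x, y, h, -⟩ := F.blk.exists_out (i := i) (j := j) (by omega)
    exact ⟨x, y, h⟩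
  by_cases hj0 : j = 0
  · subst hj0
    obtain ⟨i, rfl⟩ : ∃ z, i = z + 1 := ⟨i - 1, by omega⟩
    exact ⟨i, 0, GArc.down hi hj (by rw [F.upB _ _ (by omega)]; simp)⟩
  by_cases h2 : i + 1 < m
  · exact ⟨i + 1, j, GArc.up h2 hj (by rw [F.upB _ _ (by omega)]; exact hj0)⟩
  · obtain ⟨j, rfl⟩ : ∃ z, j = z + 1 := ⟨j - 1, by omega⟩
    obtain rfl : i = m - 1 := by omega
    exact ⟨m - 1, j, GArc.left hi hj (F.rtC j)⟩

theorem FAd.exit (F : FAd m n c Rt Up) : ∀ i j i' j', GArc m n Rt Up i j i' j' →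
    ¬ i < c j → i' < c j' → i = m - 1 ∧ j = 0 ∧ i' = m - 2 ∧ j' = 0 := by
  intro i j i' j' hA hT hS
  have hm := F.hm
  have hle := F.le_m j'
  obtain ⟨b1, b2, b3, b4, hA⟩ := hA
  have hp := F.cpos j b2
  rcases hA with ⟨rfl, rfl, hA⟩ | ⟨rfl, rfl, hA⟩ | ⟨rfl, rfl, hA⟩ | ⟨rfl, rfl, hA⟩
  · have := F.anti j (j + 1) (by omega)
    omega
  · rw [F.rtB _ _ (by omega) (by omega)] at hA; omega
  · omega
  · rw [F.upB _ _ (by omega)] at hA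
    have : j' = 0 := by omega
    subst this
    have := F.c0
    omega

theorem FAd.ear (F : FAd m n c Rt Up) : ∀ i j x y, GArc m n Rt Up i j x y → i < c j →
    ¬ x < c y → ∃ d, Wk (GArc m n Rt Up) i j (m - 2) 0 d ∧
        ∀ l, Wk (GArc m n Rt Up) x y (m - 1) 0 l → d < l + 2 := by
  intro i j x y hA hS hT
  have hm := F.hm
  have hn := F.hn
  have hle := F.le_m j
  have c1 := F.c1
  refine ⟨mh i j (m - 2) 0, ?_, ?_⟩
  · have hij : 2 ≤ i ∧ 1 ≤ j ∧ j < n := by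
      obtain ⟨b1, b2, b3, b4, hA⟩ := hA
      have hp := F.cpos j b2
      have hp' := F.cpos y b4
      rcases hA with ⟨rfl, rfl, hA⟩ | ⟨rfl, rfl, hA⟩ | ⟨rfl, rfl, hA⟩ | ⟨rfl, rfl, hA⟩
      · refine ⟨by omega, ?_, b2⟩
        by_contra hj
        obtain rfl : j = 0 := by omega
        rw [Nat.zero_add] at hT
        omega
      · have := F.anti y (y + 1) (by omega)
        omega
      · rw [F.upB _ _ (by omega)] at hA
        omega
      · omega
    obtain ⟨h1, h2, h3⟩ := hij
    have w1 : Wk (GArc m n Rt Up) i j i 1 (j - 1) := by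
      refine Wk.lineL h2 (by omega) h3 ?_
      intro l hl hl'
      rw [F.rtB _ _ h1 (by omega)]
      have := F.anti (l + 1) j (by omega)
      omega
    have w2 : Wk (GArc m n Rt Up) i 1 (m - 2) 1 (m - 2 - i) := by
      refine Wk.lineU (by omega) (by omega) (by omega) ?_
      intro l hl hl'
      rw [F.upB _ _ (by omega)]; omega
    have w3 : GArc m n Rt Up (m - 2) 1 (m - 2) 0 := by
      refine GArc.left (by omega) (by omega) ?_
      rw [F.rtB _ _ (by omega) (by omega), Nat.zero_add]; omega
    exact ((w1.trans w2).trans (Wk.single w3)).cast (by unfold mh; omega)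
  · intro l hl
    have h1 := hl.mh_le.1
    have h2 := hA.mh_eq
    unfold mh at *
    omega

theorem FAd.meetTop (F : FAd m n c Rt Up) (H : Hull m n (GArc m n Rt Up) C) :
    ∀ N i j, C i j → ¬ i < c j → (m - 1 - i) + (n - j) ≤ N → ∃ y, C (m - 1) y := by
  intro N
  have hm := F.hm
  induction N with
  | zero => intro i j hC hT hN; have := H.sub hC; omega
  | succ N ih =>
    intro i j hC hT hN
    have hs := H.sub hC
    by_cases hU : i = m - 1
    · subst hU; exact ⟨j, hC⟩
    obtain ⟨p, q, hA, hC'⟩ := H.out hC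
    have hc0 := F.c0
    have hp := F.cpos j hs.2
    obtain ⟨-, -, -, -, hA⟩ := hA
    rcases hA with ⟨rfl, rfl, hA⟩ | ⟨rfl, rfl, hA⟩ | ⟨rfl, rfl, hA⟩ | ⟨rfl, rfl, hA⟩
    · have := F.anti j (j + 1) (by omega)
      exact ih _ _ hC' (by omega) (by omega)
    · rw [F.rtB _ _ (by omega) (by omega)] at hA; omega
    · exact ih _ _ hC' (by omega) (by omega)
    · rw [F.upB _ _ (by omega)] at hA
      have : q = 0 := by omega
      subst this; omega

theorem FAd.top (F : FAd m n c Rt Up) (H : Hull m n (GArc m n Rt Up) C) :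
    ∀ j, C (m - 1) j → C (m - 1) 0 := by
  intro j
  have hm := F.hm
  induction j with
  | zero => exact id
  | succ j ih =>
    intro hC
    obtain ⟨p, q, hA, hC'⟩ := H.out hC
    obtain ⟨-, -, b3, b4, hA⟩ := hA
    rcases hA with ⟨rfl, rfl, hA⟩ | ⟨rfl, h2, hA⟩ | ⟨rfl, rfl, hA⟩ | ⟨rfl, h2, hA⟩
    · exact absurd hA (F.rtC _)
    · obtain rfl : q = j := by omega
      exact ih hC'
    · omega
    · rw [F.upB _ _ (by omega)] at hA
      omega

theorem FAd.fill (F : FAd m n c Rt Up) (H : Hull m n (GArc m n Rt Up) C) {x y : ℕ}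
    (hC : C x y) (hT : ¬ x < c y) : ∀ i j, i < m → j < n → C i j := by
  have hm := F.hm
  have hn := F.hn
  have c0 := F.c0
  have c1 := F.c1
  obtain ⟨y', hy'⟩ := F.meetTop H _ x y hC hT le_rfl
  have t0 := F.top H y' hy'
  have col : ∀ k, k < m - 1 → C (m - 1 - k) 0 := by
    intro k
    induction k with
    | zero => intro _; exact t0
    | succ k ih =>
      intro hk
      obtain ⟨p, q, hA, hC'⟩ := H.out (ih (by omega))
      obtain ⟨-, -, -, -, hA⟩ := hA
      rcases hA with ⟨rfl, rfl, hA⟩ | ⟨rfl, h6, hA⟩ | ⟨rfl, rfl, hA⟩ | ⟨rfl, h6, hA⟩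
      · exfalso
        by_cases hk0 : k = 0
        · subst hk0; exact F.rtC _ hA
        · rw [F.rtB _ _ (by omega) (by omega), Nat.zero_add] at hA; omega
      · omega
      · rw [F.upB _ _ (by omega)] at hA; omega
      · rwa [show m - 1 - (k + 1) = p by omega]
  have col' : ∀ i, 1 ≤ i → i < m → C i 0 := by
    intro i h1 h2
    have := col (m - 1 - i) (by omega)
    rwa [show m - 1 - (m - 1 - i) = i by omega] at this
  have s10 := col' 1 le_rfl (by omega)
  have hB : ∀ i j, i ≤ 1 → j < n → C i j := by
    obtain ⟨p, q, hA, hC'⟩ := H.out s10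
    have hA' := hA
    obtain ⟨-, -, -, -, hA⟩ := hA
    rcases hA with ⟨rfl, rfl, hA⟩ | ⟨rfl, h6, hA⟩ | ⟨rfl, rfl, hA⟩ | ⟨rfl, h6, hA⟩
    · intro i j hi hj
      exact F.blk.all H hA' s10 hC' (by omega) (by omega) i j (by omega) (by omega) (by omega)
        (by omega)
    · omega
    · rw [F.upB _ _ (by omega)] at hA; omega
    · obtain rfl : p = 0 := by omega
      rw [F.upA] at hA; omega
  have hSall : ∀ i, ∀ j, j < n → i < c j → C i j := by
    intro i
    induction i with
    | zero => intro j hj _; exact hB 0 j (by omega) hj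
    | succ i ih =>
      by_cases hi : i = 0
      · subst hi; intro j hj _; exact hB 1 j le_rfl hj
      intro j
      induction j with
      | zero => intro _ h; exact col' _ (by omega) (by omega)
      | succ j ihj =>
        intro hj hij
        have := F.anti j (j + 1) (by omega)
        have hle := F.le_m (j + 1)
        refine H.r1 (ih (j + 1) hj (by omega)) (ihj (by omega) (by omega))
          (GArc.up (by omega) hj ?_) (GArc.left (by omega) hj ?_)
        · rw [F.upB _ _ (by omega)]; omega
        · rw [F.rtB _ _ (by omega) (by omega)]; omega
  have hcol : ∀ j, j < n → ∀ i, i < m → C i j := by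
    intro j
    induction j with
    | zero => intro _ i hi
              by_cases h : i = 0
              · subst h; exact hB 0 0 (by omega) (by omega)
              · exact col' i (by omega) hi
    | succ j ih =>
      intro hj i hi
      by_cases hij : i < c (j + 1)
      · exact hSall i _ hj hij
      have hp := F.cpos _ hj
      have w2 : ∀ x y, 1 ≤ x → x ≤ y → y < m → Wk (GArc m n Rt Up) x (j + 1) y (j + 1) (y - x) := by
        intro x y h1 hxy hy
        refine Wk.lineU hxy (by omega) (by omega) ?_
        intro l hl hl'
        rw [F.upB _ _ (by omega)]; omega
      have w3 : GArc m n Rt Up (m - 1) (j + 1) (m - 1) j := GArc.left (by omega) hj (F.rtC j)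
      refine H.pm (hSall (c (j + 1) - 1) (j + 1) hj (by omega)) (ih (by omega) (m - 1) (by omega))
        (w2 _ i (by omega) (by omega) hi)
        ((w2 i (m - 1) (by omega) (by omega) (by omega)).trans (Wk.single w3)) ?_
      unfold mh; omega
  intro i j hi hj
  exact hcol j hj i hi

theorem FAd.mem (F : FAd m n c Rt Up) {k : ℕ} (hk : ∑ j ∈ Finset.range n, c j = k) :
    k ∈ strongConvexitySpectrum (gridGraph n m) := by
  have hm := F.hm
  have hn := F.hn
  have hle := F.le_m
  have c0 := F.c0
  have hcard : (ofC n m (fun i j => i < c j)).ncard = k := by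
    rw [← hk]; exact ncard_under c (fun j => by have := hle j; omega)
  refine mem_spectrum (Rt := Rt) (Up := Up) (S := fun i j => i < c j) (by omega) (by omega)
    F.sink ?_ (convex_of_exit ?_ F.exit F.ear) ⟨m - 1, 0, by omega, by omega, by omega⟩ hcard ?_
  · intro X H hcl
    have hnS : ∃ i j, X i j ∧ ¬ i < c j := by
      by_contra hcon
      push Not at hcon
      have key : ∀ i j, 1 ≤ i → 1 ≤ j → ¬ X i j := by
        intro i j hi hj hX
        have h1 := hcon _ _ hX
        have h4 := hle j
        have hs := H.sub hX
        have : X (c j) j := by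
          refine closed_wk hcl (Wk.lineU (R := m) (w := n) (i := i) (i' := c j) (j := j)
            (by omega) (by omega) (by omega) ?_) hX
          intro l hl hl'
          rw [F.upB _ _ (by omega)]; omega
        have := hcon _ _ this
        omega
      have k10 : ¬ X 1 0 := fun h => key 1 1 le_rfl le_rfl
        (hcl _ _ _ _ h (GArc.right (by omega) (by omega) (by rw [F.rtA _ _ (by omega)])))
      have k0 : ∀ i, ¬ X i 0 := by
        intro i hX
        by_cases hi : i = 0
        · subst hi
          exact k10 (hcl _ _ _ _ hX (GArc.up (by omega) (by omega) (by rw [F.upA])))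
        · have hs := H.sub hX
          refine k10 (closed_wk hcl (Wk.lineD (R := m) (w := n) (i := 1) (i' := i) (j := 0)
            (by omega) (by omega) (by omega) ?_) hX)
          intro l hl hl'
          rw [F.upB _ _ (by omega)]; omega
      have kE : ∀ j, j % 2 = 0 → ¬ X 0 j := by
        intro j hj hX
        have hs := H.sub hX
        have h1 := hcl _ _ _ _ hX (GArc.up (by omega) hs.2 (by rw [F.upA]; exact hj))
        by_cases hj0 : j = 0
        · subst hj0; exact k10 h1
        · exact key _ _ le_rfl (by omega) h1
      obtain ⟨i, j, -, -, hX, -⟩ := H.two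
      have hs := H.sub hX
      have hj0 : j ≠ 0 := by rintro rfl; exact k0 _ hX
      have hi0 : i = 0 := by
        by_contra hi0
        exact key i j (by omega) (by omega) hX
      subst hi0
      by_cases hj : j % 2 = 0
      · exact kE j hj hX
      · obtain ⟨j, rfl⟩ : ∃ z, j = z + 1 := ⟨j - 1, by omega⟩
        refine kE j (by omega) (hcl _ _ _ _ hX (GArc.left (by omega) (by omega) ?_))
        rw [F.rtA _ _ (by omega)]; omega
    obtain ⟨i, j, hX, hT⟩ := hnS
    exact F.fill H hX hT
  · exact ⟨(⟨0, by omega⟩, ⟨0, by omega⟩), by simp; omega⟩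
  · intro C H
    by_cases hS : ∀ i j, C i j → i < c j
    · exact Or.inl hS
    push Not at hS
    obtain ⟨i, j, hX, hT⟩ := hS
    exact Or.inr (Or.inl (F.fill H hX (by omega)))
end

theorem spectrum_FA {n m k : ℕ} (hm : 6 ≤ m) (hn : 6 ≤ n) (hk1 : 2 * (m - 1) + 3 * (n - 2) ≤ k)
    (hk2 : k ≤ (m - 1) * n) : k ∈ strongConvexitySpectrum (gridGraph n m) := by
  obtain ⟨c, c0, c1, c2, c3, c4, c5⟩ := exists_stair2 (n := n) (lo := 3) (by omega) le_rfl (by omega)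
    hk1 hk2
  refine FAd.mem (m := m) (c := c)
    (Rt := fun i j => if i < 2 then (i + j) % 2 = 1 else if i < m - 1 then ¬ i < c (j + 1) else False)
    (Up := fun i j => if i = 0 then j % 2 = 0 else j ≠ 0)
    ⟨hm, hn, c0, c1, c2, c3, ?_, ?_, ?_, ?_, ?_⟩ c5
  · intro i j hij; rw [if_pos hij]
  · intro i j h1 h2; rw [if_neg (by omega), if_pos h2]
  · intro j; rw [if_neg (by omega), if_neg (by omega)]; exact id
  · intro j; simp
  · intro i j h1; rw [if_neg (by omega)]

/-! ### The construction for large convexity numbers -/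

structure F2d (r n p : ℕ) (Rt Up : ℕ → ℕ → Prop) : Prop where
  hr : 2 ≤ r
  hp : 3 ≤ p
  hn : p + 4 ≤ n
  rt0 : ∀ i j, i ≤ r → (Rt i j ↔ (i + j) % 2 = 1)
  rt1 : ∀ j, Rt (r + 1) j ↔ j = 0
  rt2 : ∀ j, Rt (r + 2) j ↔ j ≤ 1
  rt3 : ∀ j, ¬ Rt (r + 3) j
  up0 : ∀ i j, i < r → (Up i j ↔ (i + j) % 2 = 0)
  up1 : ∀ j, Up r j ↔ j ≠ 1
  up2 : ∀ j, Up (r + 1) j ↔ (j ≠ 1 ∧ j ≠ 3)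
  up3 : ∀ j, Up (r + 2) j ↔ (j ≠ 0 ∧ j ≠ p)

/-- complement of the convex set -/
def T2 (r p i j : ℕ) : Prop := (i = r + 3 ∧ j < p) ∨ (i = r + 2 ∧ j ≤ 2)

section
variable {r n p : ℕ} {Rt Up : ℕ → ℕ → Prop} {C : ℕ → ℕ → Prop}

theorem F2d.blk (F : F2d r n p Rt Up) : Blk (r + 4) n Rt Up 0 r 0 (n - 1) 0 := by
  have hr := F.hr
  have hn := F.hn
  refine ⟨by omega, by omega, by omega, by omega, ?_, ?_⟩
  · intro i j _ h _ _; rw [F.rt0 i j (by omega), Nat.add_zero]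
  · intro i j _ h _ _; rw [F.up0 i j (by omega), Nat.add_zero]

theorem F2d.aU1 (F : F2d r n p Rt Up) {j : ℕ} (hj : j < n) (h : j ≠ 1) :
    GArc (r + 4) n Rt Up r j (r + 1) j :=
  GArc.up (by omega) hj ((F.up1 j).2 h)
theorem F2d.aU2 (F : F2d r n p Rt Up) {j : ℕ} (hj : j < n) (h : j ≠ 1) (h' : j ≠ 3) :
    GArc (r + 4) n Rt Up (r + 1) j (r + 2) j :=
  GArc.up (by omega) hj ((F.up2 j).2 ⟨h, h'⟩)
theorem F2d.aU3 (F : F2d r n p Rt Up) {j : ℕ} (hj : j < n) (h : j ≠ 0) (h' : j ≠ p) :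
    GArc (r + 4) n Rt Up (r + 2) j (r + 3) j :=
  GArc.up (by omega) hj ((F.up3 j).2 ⟨h, h'⟩)
theorem F2d.aL1 (F : F2d r n p Rt Up) {j : ℕ} (hj : j + 1 < n) (h : j ≠ 0) :
    GArc (r + 4) n Rt Up (r + 1) (j + 1) (r + 1) j :=
  GArc.left (by omega) hj (by rw [F.rt1]; exact h)
theorem F2d.aL2 (F : F2d r n p Rt Up) {j : ℕ} (hj : j + 1 < n) (h : 2 ≤ j) :
    GArc (r + 4) n Rt Up (r + 2) (j + 1) (r + 2) j :=
  GArc.left (by omega) hj (by rw [F.rt2]; omega)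
theorem F2d.aL3 (F : F2d r n p Rt Up) {j : ℕ} (hj : j + 1 < n) :
    GArc (r + 4) n Rt Up (r + 3) (j + 1) (r + 3) j :=
  GArc.left (by omega) hj (F.rt3 j)
theorem F2d.aR1 (F : F2d r n p Rt Up) : GArc (r + 4) n Rt Up (r + 1) 0 (r + 1) 1 :=
  GArc.right (by omega) (by have := F.hn; omega) (by rw [F.rt1])
theorem F2d.aR2 (F : F2d r n p Rt Up) {j : ℕ} (h : j ≤ 1) :
    GArc (r + 4) n Rt Up (r + 2) j (r + 2) (j + 1) :=
  GArc.right (by omega) (by have := F.hn; omega) (by rw [F.rt2]; exact h)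
theorem F2d.aD1 (F : F2d r n p Rt Up) : GArc (r + 4) n Rt Up (r + 1) 1 r 1 :=
  GArc.down (by omega) (by have := F.hn; omega) (by rw [F.up1]; simp)
theorem F2d.aD2 (F : F2d r n p Rt Up) {j : ℕ} (h : j = 1 ∨ j = 3) :
    GArc (r + 4) n Rt Up (r + 2) j (r + 1) j :=
  GArc.down (by omega) (by have := F.hn; have := F.hp; omega) (by rw [F.up2]; omega)
theorem F2d.aD3 (F : F2d r n p Rt Up) {j : ℕ} (h : j = 0 ∨ j = p) :
    GArc (r + 4) n Rt Up (r + 3) j (r + 2) j :=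
  GArc.down (by omega) (by have := F.hn; omega) (by rw [F.up3]; omega)

theorem F2d.sink (F : F2d r n p Rt Up) :
    ∀ i j, i < r + 4 → j < n → ∃ i' j', GArc (r + 4) n Rt Up i j i' j' := by
  intro i j hi hj
  have hp := F.hp
  have hn := F.hn
  by_cases h1 : i ≤ r
  · obtain ⟨x, y, h, -⟩ := F.blk.exists_out (i := i) (j := j) (by omega)
    exact ⟨x, y, h⟩
  have h3 : i = r + 1 ∨ i = r + 2 ∨ i = r + 3 := by omega
  rcases h3 with rfl | rfl | rfl
  · by_cases j0 : j = 0
    · subst j0; exact ⟨_, _, F.aR1⟩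
    by_cases j1 : j = 1
    · subst j1; exact ⟨_, _, F.aD1⟩
    obtain ⟨j, rfl⟩ : ∃ z, j = z + 1 := ⟨j - 1, by omega⟩
    exact ⟨_, _, F.aL1 hj (by omega)⟩
  · by_cases j1 : j ≤ 1
    · exact ⟨_, _, F.aR2 j1⟩
    by_cases j2 : j = 2
    · subst j2; exact ⟨_, _, F.aU3 hj (by omega) (by omega)⟩
    obtain ⟨j, rfl⟩ : ∃ z, j = z + 1 := ⟨j - 1, by omega⟩
    exact ⟨_, _, F.aL2 hj (by omega)⟩
  · by_cases j0 : j = 0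
    · exact ⟨_, _, F.aD3 (Or.inl j0)⟩
    obtain ⟨j, rfl⟩ : ∃ z, j = z + 1 := ⟨j - 1, by omega⟩
    exact ⟨_, _, F.aL3 hj⟩

theorem F2d.exit (F : F2d r n p Rt Up) : ∀ i j i' j', GArc (r + 4) n Rt Up i j i' j' →
    T2 r p i j → ¬ T2 r p i' j' → i = r + 2 ∧ j = 1 ∧ i' = r + 1 ∧ j' = 1 := by
  intro i j i' j' hA hT hS
  have hp := F.hp
  obtain ⟨b1, b2, b3, b4, hA⟩ := hA
  unfold T2 at hT hS
  rcases hT with ⟨rfl, hT⟩ | ⟨rfl, hT⟩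
  · rcases hA with ⟨rfl, rfl, hA⟩ | ⟨rfl, rfl, hA⟩ | ⟨rfl, rfl, hA⟩ | ⟨rfl, h2, hA⟩
    · exact absurd hA (F.rt3 _)
    · omega
    · omega
    · obtain rfl : i' = r + 2 := by omega
      rw [F.up3] at hA; omega
  · rcases hA with ⟨rfl, rfl, hA⟩ | ⟨rfl, rfl, hA⟩ | ⟨rfl, rfl, hA⟩ | ⟨rfl, h2, hA⟩
    · rw [F.rt2] at hA; omega
    · omega
    · omega
    · obtain rfl : i' = r + 1 := by omega
      rw [F.up2] at hA; omega

theorem F2d.enter (F : F2d r n p Rt Up) : ∀ i j i' j', GArc (r + 4) n Rt Up i j i' j' →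
    ¬ T2 r p i j → T2 r p i' j' → (i = r + 1 ∧ j = 0) ∨ (i = r + 1 ∧ j = 2) ∨
      (i = r + 2 ∧ j = 3 ∧ i' = r + 2 ∧ j' = 2) ∨
      (i = r + 2 ∧ 3 ≤ j ∧ j < p ∧ i' = r + 3 ∧ j' = j) ∨
      (i = r + 3 ∧ j = p ∧ i' = r + 3 ∧ j' = p - 1) := by
  intro i j i' j' hA hS hT
  have hp := F.hp
  obtain ⟨b1, b2, b3, b4, hA⟩ := hA
  unfold T2 at hT hS
  rcases hT with ⟨rfl, hT⟩ | ⟨rfl, hT⟩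
  · rcases hA with ⟨rfl, rfl, hA⟩ | ⟨rfl, rfl, hA⟩ | ⟨rfl, h2, hA⟩ | ⟨rfl, rfl, hA⟩
    · omega
    · omega
    · omega
    · omega
  · rcases hA with ⟨rfl, rfl, hA⟩ | ⟨rfl, rfl, hA⟩ | ⟨rfl, h2, hA⟩ | ⟨rfl, rfl, hA⟩
    · omega
    · omega
    · obtain rfl : i = r + 1 := by omega
      rw [F.up2] at hA; omega
    · omega

theorem F2d.long (F : F2d r n p Rt Up) {x y a b l : ℕ} (h : Wk (GArc (r + 4) n Rt Up) x y a b l)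
    (ha : a = r + 2) (hb : b = 1) : (x = r + 2 ∧ y = 1) ∨ mh x y (r + 2) 0 + 1 ≤ l := by
  induction h with
  | nil => exact Or.inl ⟨ha, hb⟩
  | @cons x y x' y' a b l hA _ ih =>
    have ih := ih ha hb
    have hm := hA.mh_eq
    rcases ih with ⟨rfl, rfl⟩ | ih
    · right
      obtain ⟨b1, b2, b3, b4, hA⟩ := hA
      have hp := F.hp
      rcases hA with ⟨rfl, h1, hA⟩ | ⟨rfl, rfl, hA⟩ | ⟨rfl, h2, hA⟩ | ⟨rfl, rfl, hA⟩
      · obtain rfl : y = 0 := by omega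
        simp [mh]
      · rw [F.rt2] at hA; omega
      · obtain rfl : x = r + 1 := by omega
        rw [F.up2] at hA; omega
      · rw [F.up3] at hA; omega
    · right
      unfold mh at *
      omega

theorem F2d.ear (F : F2d r n p Rt Up) : ∀ i j x y, GArc (r + 4) n Rt Up i j x y → ¬ T2 r p i j →
    ¬ ¬ T2 r p x y → ∃ d, Wk (GArc (r + 4) n Rt Up) i j (r + 1) 1 d ∧
        ∀ l, Wk (GArc (r + 4) n Rt Up) x y (r + 2) 1 l → d < l + 2 := by
  intro i j x y hA hS hT
  have hp := F.hp
  have hn := F.hn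
  have w0 : ∀ j, 3 ≤ j → j < n → Wk (GArc (r + 4) n Rt Up) (r + 2) j (r + 1) 1 j := by
    intro j h3 hj
    have w1 : Wk (GArc (r + 4) n Rt Up) (r + 2) j (r + 2) 3 (j - 3) := by
      refine Wk.lineL h3 (by omega) hj ?_
      intro l hl hl'
      rw [F.rt2]; omega
    exact (((w1.trans (Wk.single (F.aD2 (Or.inr rfl)))).trans (Wk.single (F.aL1 (j := 2) (by omega)
      (by omega)))).trans (Wk.single (F.aL1 (j := 1) (by omega) (by omega)))).cast (by omega)
  rcases F.enter _ _ _ _ hA hS (not_not.1 hT) with ⟨rfl, rfl⟩ | ⟨rfl, rfl⟩ | ⟨rfl, rfl, rfl, rfl⟩ |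
    ⟨rfl, h1, h2, rfl, rfl⟩ | ⟨rfl, rfl, rfl, rfl⟩
  · exact ⟨1, Wk.single F.aR1, fun l hl => by omega⟩
  · exact ⟨1, Wk.single (F.aL1 (j := 1) (by omega) (by omega)), fun l hl => by omega⟩
  · refine ⟨3, w0 3 le_rfl (by omega), fun l hl => ?_⟩
    rcases F.long hl rfl rfl with h | h
    · omega
    · unfold mh at h; omega
  · refine ⟨y, w0 y h1 (by omega), fun l hl => ?_⟩
    rcases F.long hl rfl rfl with h | h
    · omega
    · unfold mh at h; omega
  · refine ⟨_, (Wk.single (F.aD3 (Or.inr rfl))).trans (w0 j (by omega) (by omega)), fun l hl => ?_⟩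
    rcases F.long hl rfl rfl with h | h
    · omega
    · unfold mh at h; omega

theorem F2d.fill (F : F2d r n p Rt Up) (H : Hull (r + 4) n (GArc (r + 4) n Rt Up) C)
    (h21 : C (r + 2) 1) (h11 : C (r + 1) 1) : ∀ i j, i < r + 4 → j < n → C i j := by
  have hp := F.hp
  have hn := F.hn
  have h01 : C r 1 := by
    obtain ⟨a, b, hA, hC'⟩ := H.out h11
    obtain ⟨-, -, -, -, hA⟩ := hA
    rcases hA with ⟨rfl, rfl, hA⟩ | ⟨rfl, h2, hA⟩ | ⟨rfl, rfl, hA⟩ | ⟨rfl, h2, hA⟩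
    · rw [F.rt1] at hA; omega
    · rw [F.rt1] at hA; omega
    · rw [F.up2] at hA; omega
    · obtain rfl : a = r := by omega
      exact hC'
  have hB : ∀ i j, i ≤ r → j < n → C i j := by
    obtain ⟨a, b, hA, hC'⟩ := H.out h01
    have hs := H.sub hC'
    have hm := hA.mh_eq
    unfold mh at hm
    have ha : a ≤ r := by
      obtain ⟨-, -, -, -, hA⟩ := hA
      rcases hA with ⟨rfl, rfl, hA⟩ | ⟨rfl, h2, hA⟩ | ⟨rfl, rfl, hA⟩ | ⟨rfl, h2, hA⟩
      · omega
      · omega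
      · rw [F.up1] at hA; omega
      · omega
    intro i j hi hj
    exact F.blk.all H hA h01 hC' (by omega) (by omega) i j (by omega) (by omega) (by omega)
      (by omega)
  have h10 : C (r + 1) 0 := H.r1 (hB r 0 le_rfl (by omega)) h11 (F.aU1 (by omega) (by omega)) F.aR1
  have R1 : ∀ j, j < n → C (r + 1) j := by
    intro j
    induction j with
    | zero => intro _; exact h10
    | succ j ih =>
      intro hj
      by_cases hj0 : j = 0
      · subst hj0; exact h11
      exact H.r1 (hB r _ le_rfl hj) (ih (by omega)) (F.aU1 hj (by omega)) (F.aL1 hj hj0)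
  have h20 : C (r + 2) 0 := H.r1 h10 h21 (F.aU2 (by omega) (by omega) (by omega))
    (F.aR2 (by omega))
  obtain ⟨h31, h30⟩ := H.sq h20 h21 (F.aR2 (by omega)) (F.aU3 (by omega) (by omega) (by omega))
    (F.aL3 (by omega)) (F.aD3 (Or.inl rfl))
  have h22 : C (r + 2) 2 := H.pm (R1 2 (by omega)) h31
    (Wk.single (F.aU2 (by omega) (by omega) (by omega)))
    ((Wk.single (F.aU3 (by omega) (by omega) (by omega))).trans
      (Wk.single (F.aL3 (j := 1) (by omega)))) (by unfold mh; omega)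
  have h32 : C (r + 3) 2 := H.r1 h22 h31 (F.aU3 (by omega) (by omega) (by omega))
    (F.aL3 (by omega))
  have h24 : C (r + 2) 4 := H.pm (R1 4 (by omega)) h22
    (Wk.single (F.aU2 (by omega) (by omega) (by omega)))
    ((Wk.single (F.aL2 (j := 3) (by omega) (by omega))).trans
      (Wk.single (F.aL2 (j := 2) (by omega) (by omega)))) (by unfold mh; omega)
  have h23 : C (r + 2) 3 := H.r1 h24 h22 (F.aL2 (by omega) (by omega)) (F.aL2 (by omega) (by omega))
  have R2 : ∀ j, j < n → C (r + 2) j := by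
    intro j
    induction j with
    | zero => intro _; exact h20
    | succ j ih =>
      intro hj
      have h3 : j = 0 ∨ j = 1 ∨ j = 2 ∨ 3 ≤ j := by omega
      rcases h3 with rfl | rfl | rfl | h3
      · exact h21
      · exact h22
      · exact h23
      · exact H.r1 (R1 _ hj) (ih (by omega)) (F.aU2 hj (by omega) (by omega)) (F.aL2 hj (by omega))
  have R3 : ∀ j, j < p → C (r + 3) j := by
    intro j
    induction j with
    | zero => intro _; exact h30
    | succ j ih =>
      intro hj
      exact H.r1 (R2 _ (by omega)) (ih (by omega)) (F.aU3 (by omega) (by omega) (by omega))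
        (F.aL3 (by omega))
  have hq : C (r + 3) p := by
    obtain ⟨q, rfl⟩ : ∃ q, p = q + 1 := ⟨p - 1, by omega⟩
    refine H.pm (R2 (q + 2) (by omega)) (R3 q (by omega))
      ((Wk.single (F.aU3 (by omega) (by omega) (by omega))).trans
      (Wk.single (F.aL3 (j := q + 1) (by omega))))
      (Wk.single (F.aL3 (j := q) (by omega))) (by unfold mh; omega)
  have R4 : ∀ j, j < n → C (r + 3) j := by
    intro j
    induction j with
    | zero => intro _; exact h30
    | succ j ih =>
      intro hj
      by_cases hjp : j + 1 = p
      · rw [hjp]; exact hq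
      exact H.r1 (R2 _ (by omega)) (ih (by omega)) (F.aU3 (by omega) (by omega) (by omega))
        (F.aL3 (by omega))
  intro i j hi hj
  by_cases h1 : i ≤ r
  · exact hB i j h1 hj
  have h3 : i = r + 1 ∨ i = r + 2 ∨ i = r + 3 := by omega
  rcases h3 with rfl | rfl | rfl
  · exact R1 j hj
  · exact R2 j hj
  · exact R4 j hj

theorem F2d.term (F : F2d r n p Rt Up) (H : Hull (r + 4) n (GArc (r + 4) n Rt Up) C)
    (hcl : ∀ i j i' j', C i j → GArc (r + 4) n Rt Up i j i' j' → C i' j') : C (r + 2) 1 := by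
  have hp := F.hp
  have hn := F.hn
  have k20 : C (r + 2) 0 → C (r + 2) 1 := fun h => hcl _ _ _ _ h (F.aR2 (by omega))
  have k3 : ∀ j, C (r + 3) j → C (r + 2) 1 := by
    intro j hC
    have hs := H.sub hC
    have h0 : C (r + 3) 0 := by
      refine closed_wk hcl (Wk.lineL (R := r + 4) (w := n) (i := r + 3) (j := 0) (j' := j)
        (by omega) (by omega) (by omega) ?_) hC
      intro l _ _; exact F.rt3 l
    exact k20 (hcl _ _ _ _ h0 (F.aD3 (Or.inl rfl)))
  have k2 : ∀ j, C (r + 2) j → C (r + 2) 1 := by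
    intro j hC
    have hs := H.sub hC
    by_cases j0 : j = 0
    · subst j0; exact k20 hC
    by_cases j1 : j = 1
    · subst j1; exact hC
    have h2 : C (r + 2) 2 := by
      refine closed_wk hcl (Wk.lineL (R := r + 4) (w := n) (i := r + 2) (j := 2) (j' := j)
        (by omega) (by omega) (by omega) ?_) hC
      intro l _ _; rw [F.rt2]; omega
    exact k3 2 (hcl _ _ _ _ h2 (F.aU3 (by omega) (by omega) (by omega)))
  have kB : ∀ i j, i ≤ r → C i j → C (r + 2) 1 := by
    intro i j hi hC
    have hs := H.sub hC
    obtain ⟨x, y, hA, hxy⟩ := F.blk.exists_out (i := i) (j := j) (by omega)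
    have h0 := F.blk.all H hA hC (hcl _ _ _ _ hC hA) (by omega) hxy r 0 (by omega) (by omega)
      (by omega) (by omega)
    have h1 := hcl _ _ _ _ h0 (F.aU1 (by omega) (by omega))
    exact k20 (hcl _ _ _ _ h1 (F.aU2 (by omega) (by omega) (by omega)))
  have k1 : ∀ j, C (r + 1) j → C (r + 2) 1 := by
    intro j hC
    have hs := H.sub hC
    by_cases j0 : j = 0
    · subst j0; exact k2 _ (hcl _ _ _ _ hC (F.aU2 (by omega) (by omega) (by omega)))
    have h2 : C (r + 1) 1 := by
      refine closed_wk hcl (Wk.lineL (R := r + 4) (w := n) (i := r + 1) (j := 1) (j' := j)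
        (by omega) (by omega) (by omega) ?_) hC
      intro l _ _; rw [F.rt1]; omega
    exact kB _ _ le_rfl (hcl _ _ _ _ h2 F.aD1)
  obtain ⟨i, j, -, -, hC, -⟩ := H.two
  have hs := H.sub hC
  by_cases h1 : i ≤ r
  · exact kB i j h1 hC
  have h3 : i = r + 1 ∨ i = r + 2 ∨ i = r + 3 := by omega
  rcases h3 with rfl | rfl | rfl
  · exact k1 j hC
  · exact k2 j hC
  · exact k3 j hC

theorem ncard_T2 (hp : 3 ≤ p) (hn : p ≤ n) : (ofC n (r + 4) (T2 r p)).ncard = p + 3 := by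
  have h := ncard_over (n := n) (m := r + 4)
    (fun j => (if j < 3 then 1 else 0) + (if j < p then 1 else 0)) (fun j => by
      split_ifs <;> omega)
  have e : ofC n (r + 4) (T2 r p) = ofC n (r + 4) (fun i j => r + 4 - 1 - i <
      (if j < 3 then 1 else 0) + (if j < p then 1 else 0)) := by
    ext x
    have := x.2.2
    simp only [ofC, T2, Set.mem_setOf_eq]
    split_ifs <;> omega
  rw [e, h, Finset.sum_add_distrib, Finset.sum_boole, Finset.sum_boole]
  have e1 : ∀ q, q ≤ n → (Finset.range n).filter (fun j => j < q) = Finset.range q := by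
    intro q hq
    ext j
    simp only [Finset.mem_filter, Finset.mem_range]
    omega
  rw [e1 3 (by omega), e1 p hn]
  simp; omega

theorem F2d.mem (F : F2d r n p Rt Up) :
    n * (r + 4) - (p + 3) ∈ strongConvexitySpectrum (gridGraph n (r + 4)) := by
  have hp := F.hp
  have hn := F.hn
  have hr := F.hr
  have hT := ncard_T2 (r := r) (n := n) hp (by omega)
  have hcard : (ofC n (r + 4) (fun i j => ¬ T2 r p i j)).ncard = n * (r + 4) - (p + 3) := by
    have h1 := Set.ncard_add_ncard_compl (ofC n (r + 4) (T2 r p))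
    have h2 : (ofC n (r + 4) (T2 r p))ᶜ = ofC n (r + 4) (fun i j => ¬ T2 r p i j) := rfl
    rw [h2, hT, Nat.card_eq_fintype_card, Fintype.card_prod, Fintype.card_fin, Fintype.card_fin] at h1
    omega
  refine mem_spectrum (Rt := Rt) (Up := Up) (S := fun i j => ¬ T2 r p i j) (by omega) (by omega)
    F.sink ?_ (convex_of_exit (t1 := r + 2) (t2 := 1) (z1 := r + 1) (z2 := 1) ?_ ?_ F.ear)
    ⟨r + 3, 0, by omega, by omega, ?_⟩ hcard ?_
  · intro X H hcl
    have h1 := F.term H hcl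
    exact F.fill H h1 (hcl _ _ _ _ h1 (F.aD2 (Or.inl rfl)))
  · exact ⟨(⟨0, by omega⟩, ⟨0, by omega⟩), by simp [T2]⟩
  · intro i j i' j' hA h1 h2
    exact F.exit i j i' j' hA (not_not.1 h1) h2
  · simp only [not_not]; left; omega
  · intro C H
    by_cases hS : ∀ i j, C i j → ¬ T2 r p i j
    · exact Or.inl hS
    push Not at hS
    obtain ⟨i, j, hX, hT1⟩ := hS
    by_cases hS' : ∀ i j, C i j → T2 r p i j
    · refine Or.inr (Or.inr ?_)
      have h3 := ncard_le_of_imp (n := n) (m := r + 4) (P := C) (Q := T2 r p)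
        (fun i j _ _ h => hS' i j h)
      have : n * 6 ≤ n * (r + 4) := Nat.mul_le_mul_left _ (by omega)
      omega
    · push Not at hS'
      obtain ⟨i', j', hX', hT'⟩ := hS'
      obtain ⟨a, b, a', b', hA, h1, h2, h3, h4⟩ := H.cut (T2 r p) hX hX' hT1 hT'
      obtain ⟨rfl, rfl, rfl, rfl⟩ := F.exit _ _ _ _ hA h3 h4
      exact Or.inr (Or.inl (F.fill H h1 h2))
end

theorem spectrum_F2 {n m k : ℕ} (hm : 6 ≤ m) (hk1 : n * m < k + n)
    (hk2 : k + 6 ≤ n * m) : k ∈ strongConvexitySpectrum (gridGraph n m) := by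
  obtain ⟨r, rfl⟩ : ∃ r, m = r + 4 := ⟨m - 4, by omega⟩
  obtain ⟨p, hp⟩ : ∃ p, p + 3 + k = n * (r + 4) := ⟨n * (r + 4) - k - 3, by omega⟩
  have := F2d.mem (r := r) (n := n) (p := p)
    (Rt := fun i j => if i ≤ r then (i + j) % 2 = 1 else if i = r + 1 then j = 0 else
      if i = r + 2 then j ≤ 1 else False)
    (Up := fun i j => if i < r then (i + j) % 2 = 0 else if i = r then j ≠ 1 else
      if i = r + 1 then (j ≠ 1 ∧ j ≠ 3) else (j ≠ 0 ∧ j ≠ p))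
    ⟨by omega, by omega, by omega, ?_, ?_, ?_, ?_, ?_, ?_, ?_, ?_⟩
  · rwa [show n * (r + 4) - (p + 3) = k by omega] at this
  · intro i j h; rw [if_pos h]
  · intro j; rw [if_neg (by omega), if_pos rfl]
  · intro j; rw [if_neg (by omega), if_neg (by omega), if_pos rfl]
  · intro j; rw [if_neg (by omega), if_neg (by omega), if_neg (by omega)]; exact id
  · intro i j h; rw [if_pos h]
  · intro j; rw [if_neg (by omega), if_pos rfl]
  · intro j; rw [if_neg (by omega), if_neg (by omega), if_pos rfl]
  · intro j; rw [if_neg (by omega), if_neg (by omega), if_neg (by omega)]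

/-! ### All values are attained -/

theorem spectrum_all {n m k : ℕ} (hm : 6 ≤ m) (hmn : m ≤ n) (hk1 : 1 ≤ k) (hk : k ≤ n * m - 6)
    (h2 : k ≠ 2) (h3 : k ≠ 3) (h5 : k ≠ 5) : k ∈ strongConvexitySpectrum (gridGraph n m) := by
  have hn : 6 ≤ n := by omega
  by_cases e1 : k = 1
  · subst e1; exact spectrum_one hm hn
  by_cases e4 : k = 4
  · subst e4; exact spectrum_FB (h := 2) (a := 2) (by omega) (by omega) (by omega) (by omega)
      (by omega) (by omega)
  by_cases e7 : k = 7
  · subst e7; exact spectrum_seven hm hn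
  by_cases c1 : k ≤ 3 * (n - 2)
  · exact spectrum_FB (h := 3) (a := (k + 2) / 3) (by omega) (by omega) (by omega) (by omega)
      (by omega) (by omega)
  obtain ⟨q, rfl⟩ : ∃ q, m = q + 2 := ⟨m - 2, by omega⟩
  obtain ⟨s, rfl⟩ : ∃ s, n = s + 2 := ⟨n - 2, by omega⟩
  have hq : 4 ≤ q := by omega
  have hsq : q ≤ s := by omega
  have hqs : 4 * s ≤ q * s := Nat.mul_le_mul_right _ hq
  have hqq : q * q ≤ q * s := Nat.mul_le_mul_left _ hsq
  have e : (s + 2) * (q + 2) = q * s + 2 * s + 2 * q + 4 := by ring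
  by_cases c2 : k ≤ q * s
  · set a := (k + q - 1) / q with ha
    have hq0 : 0 < q := by omega
    have h6 : k ≤ q * a := by
      have := Nat.div_add_mod (k + q - 1) q
      have := Nat.mod_lt (k + q - 1) hq0
      rw [← ha] at *
      omega
    have h7 : q * a ≤ k + q - 1 := Nat.mul_div_le _ _
    have h8 : a ≤ s := by
      by_contra hc
      have : q * (s + 1) ≤ q * a := Nat.mul_le_mul_left _ (by omega)
      rw [Nat.mul_add] at this
      omega
    have h9 : 4 ≤ a := by
      by_contra hc
      have : q * a ≤ q * 3 := Nat.mul_le_mul_left _ (by omega)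
      omega
    refine spectrum_FB (h := q) (a := a) (by omega) (by omega) (by omega) (by omega) ?_ h6
    obtain ⟨b, hb⟩ : ∃ b, a = b + 4 := ⟨a - 4, by omega⟩
    rw [hb] at h7 ⊢
    have h10 : 4 * b ≤ q * b := Nat.mul_le_mul_right _ hq
    rw [Nat.mul_add] at h7
    omega
  by_cases c3 : k ≤ q * (s + 2)
  · refine spectrum_FB (h := q) (a := s + 2) (by omega) (by omega) (by omega) (Or.inr ⟨rfl, ?_⟩) ?_ c3
    · rw [show q + 2 - q = 2 by omega]; omega
    · rw [Nat.add_sub_cancel]; omega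
  rw [Nat.mul_add] at c3
  by_cases c4 : k ≤ (q + 2 - 1) * (s + 2)
  · refine spectrum_FA hm hn ?_ c4
    omega
  · rw [show q + 2 - 1 = q + 1 by omega, show (q + 1) * (s + 2) = q * s + 2 * q + s + 2 by ring] at c4
    exact spectrum_F2 hm (by omega) (by omega)
/-! ## A reflective search excluding complements with at most five cells -/

namespace Srch

/-- Evaluate a number before passing it on. -/
def force {α : Type} (x : ℕ) (f : ℕ → α) : α :=
  Nat.casesOn (motive := fun _ => α) x (f 0) (fun n => f (Nat.succ n))

def cnd {α : Type} (b : Bool) (x y : α) : α := Bool.rec (motive := fun _ => α) y x b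

def orr (a b : Bool) : Bool := Bool.rec (motive := fun _ => Bool) b true a

def andd (a b : Bool) : Bool := Bool.rec (motive := fun _ => Bool) false b a

/-- Bit test. -/
def tb (m c : ℕ) : Bool := Nat.beq (Nat.land (Nat.shiftRight m c) 1) 1

/-- Set a bit. -/
def sb (m c : ℕ) : ℕ := Nat.lor m (Nat.shiftLeft 1 c)

/-- Neighbouring cell in direction `d` (left, down, right, up). -/
def nb (c d : ℕ) : ℕ :=
  cnd (Nat.beq d 0) (Nat.sub c 1) (cnd (Nat.beq d 1) (Nat.sub c 16)
    (cnd (Nat.beq d 2) (Nat.add c 1) (Nat.add c 16)))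

/-- Opposite direction. -/
def opp (d : ℕ) : ℕ := Nat.mod (Nat.add d 2) 4

/-- Bit index of the arc leaving (or entering) `c` in direction `d`. -/
def key (c d : ℕ) : ℕ := Nat.add (Nat.mul 4 c) d

/-- The partial knowledge about a configuration. -/
structure St where
  T : ℕ
  S : ℕ
  E : ℕ
  I : ℕ
  Tl : List ℕ
  On : List ℕ
  bl : ℕ
  bb : ℕ
  br : ℕ
  bt : ℕ

def off (s : St) (c : ℕ) : Bool :=
  St.casesOn (motive := fun _ => Bool) s (fun _ _ _ _ _ _ bl bb br bt =>
    orr (Nat.blt (Nat.mod c 16) bl) (orr (Nat.blt (Nat.div c 16) bb)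
      (orr (andd (Nat.blt 0 br) (Nat.blt br (Nat.mod c 16)))
        (andd (Nat.blt 0 bt) (Nat.blt bt (Nat.div c 16))))))

def adiff (a b : ℕ) : ℕ := Nat.add (Nat.sub a b) (Nat.sub b a)

def man (a b : ℕ) : ℕ :=
  Nat.add (adiff (Nat.mod a 16) (Nat.mod b 16)) (adiff (Nat.div a 16) (Nat.div b 16))

def btw (a b c : ℕ) : Bool :=
  orr (andd (Nat.blt a b) (Nat.blt b c)) (andd (Nat.blt c b) (Nat.blt b a))

def anyL (p : ℕ → Bool) (l : List ℕ) : Bool :=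
  List.rec (motive := fun _ => Bool) false (fun a _ r => orr (p a) r) l

def blocked (Tl : List ℕ) (a b : ℕ) : Bool :=
  orr (andd (Nat.beq (Nat.div a 16) (Nat.div b 16))
    (anyL (fun t => andd (Nat.beq (Nat.div t 16) (Nat.div a 16))
      (btw (Nat.mod a 16) (Nat.mod t 16) (Nat.mod b 16))) Tl))
  (andd (Nat.beq (Nat.mod a 16) (Nat.mod b 16))
    (anyL (fun t => andd (Nat.beq (Nat.mod t 16) (Nat.mod a 16))
      (btw (Nat.div a 16) (Nat.div t 16) (Nat.div b 16))) Tl))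

def bad (Tl : List ℕ) (a b l : ℕ) : Bool :=
  force (man a b) fun m => orr (Nat.beq l m) (andd (Nat.beq l (Nat.add m 2)) (blocked Tl a b))

def any4 (p : ℕ → Bool) : Bool := orr (p 0) (orr (p 1) (orr (p 2) (p 3)))

def all4 (p : ℕ → Bool) : Bool := andd (p 0) (andd (p 1) (andd (p 2) (p 3)))

/-- Some direction with its arc bit set satisfies `p`. -/
def nbl (E c : ℕ) (p : ℕ → Bool) : Bool :=
  force (Nat.land (Nat.shiftRight E (Nat.mul 4 c)) 15) fun w =>
    cnd (Nat.beq w 0) false (any4 fun d => andd (tb w d) (p (nb c d)))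

/-- Forward exploration: `a` is the start of a walk of length `l` ending at `c`. -/
def earF (S E : ℕ) (Tl : List ℕ) (a : ℕ) (f : ℕ) : ℕ → ℕ → Bool :=
  Nat.rec (motive := fun _ => ℕ → ℕ → Bool) (fun _ _ => false)
    (fun _ K l c =>
      cnd (tb S c) (bad Tl a c l) (nbl E c fun c' => force c' fun c' => K (Nat.succ l) c')) f

/-- Backward exploration: there is a walk of length `l` from `c` to `b`. -/
def earB (S E I : ℕ) (Tl : List ℕ) (b : ℕ) (f : ℕ) : ℕ → ℕ → Bool :=
  Nat.rec (motive := fun _ => ℕ → ℕ → Bool) (fun _ _ => false)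
    (fun n K l c =>
      cnd (tb S c) (earF S E Tl c (Nat.succ n) l b)
        (nbl I c fun c' => force c' fun c' => K (Nat.succ l) c')) f

def guard (t : ℕ) : Bool :=
  andd (Nat.ble 16 t) (andd (Nat.ble 1 (Nat.mod t 16)) (Nat.ble (Nat.mod t 16) 14))

/-- Check that a set of cells has no leaving arcs. -/
def verify (s : St) (R : ℕ) (X : ℕ) (l : List ℕ) : Bool :=
  Bool.not (anyL (fun u => Bool.not (andd (andd (guard u) (tb s.T u)) (all4 fun d => orr (tb R (key u d))
    (orr (off s (nb u d)) (tb X (nb u d)))))) l)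

/-- One step of the search for a set of cells without leaving arcs. -/
def stp (s : St) (F R u d : ℕ) (k : ℕ → List ℕ → List ℕ → Bool) (X : ℕ) (l st : List ℕ) : Bool :=
  cnd (tb R (key u d)) (k X l st) (force (nb u d) fun c =>
    cnd (tb F (key u d))
      (cnd (tb s.T c)
        (cnd (tb X c) (k X l st) (force (sb X c) fun X' => k X' (c :: l) (c :: st)))
        false)
      (cnd (off s c) (k X l st) false))

/-- Search for a set of cells without leaving arcs, `F` holding the known arcs leaving
and `R` the known arcs entering. -/
def clo (s : St) (F R : ℕ) (f : ℕ) : ℕ → List ℕ → List ℕ → Bool :=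
  Nat.rec (motive := fun _ => ℕ → List ℕ → List ℕ → Bool) (fun _ _ _ => false)
    (fun _ K X l st =>
      List.casesOn (motive := fun _ => Bool) st (verify s R X l)
        (fun u st' =>
          stp s F R u 0 (stp s F R u 1 (stp s F R u 2 (stp s F R u 3 K))) X l st')) f

def arcs (K : St → Bool) (s : St) (t d c : ℕ) : Bool :=
  St.casesOn (motive := fun _ => Bool) s (fun T S E I Tl On bl bb br bt =>
    force (key t d) fun k => force (key c (opp d)) fun k' =>
      andd
      (force (sb E k) fun E' => force (sb I k') fun I' =>
        orr (earB S E' I' Tl c 6 1 t) (K ⟨T, S, E', I', Tl, On, bl, bb, br, bt⟩))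
      (force (sb E k') fun E' => force (sb I k) fun I' =>
        orr (earB S E' I' Tl t 6 1 c) (K ⟨T, S, E', I', Tl, On, bl, bb, br, bt⟩)))

def addS (K : St → Bool) (s : St) (c : ℕ) : Bool :=
  St.casesOn (motive := fun _ => Bool) s (fun T S E I Tl On bl bb br bt =>
    force (sb S c) fun S' => K ⟨T, S', E, I, Tl, c :: On, bl, bb, br, bt⟩)

def addT (K : St → Bool) (s : St) (c : ℕ) : Bool :=
  St.casesOn (motive := fun _ => Bool) s (fun T S E I Tl On bl bb br bt =>
    force (sb T c) fun T' => K ⟨T', S, E, I, c :: Tl, c :: On, bl, bb, br, bt⟩)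

def addOff (K : St → Bool) (s : St) (t d : ℕ) : Bool :=
  St.casesOn (motive := fun _ => Bool) s (fun T S E I Tl On bl bb br bt =>
    force (Nat.mod t 16) fun x => force (Nat.div t 16) fun y =>
    cnd (Nat.beq d 0)
      (orr (orr (andd (Nat.blt 0 br) (Nat.blt br (Nat.add x 5)))
        (anyL (fun u => Nat.blt (Nat.mod u 16) x) On))
        (K ⟨T, S, E, I, Tl, On, x, bb, br, bt⟩))
    (cnd (Nat.beq d 1)
      (orr (orr (andd (Nat.blt 0 bt) (Nat.blt bt (Nat.add y 5)))
        (anyL (fun u => Nat.blt (Nat.div u 16) y) On))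
        (K ⟨T, S, E, I, Tl, On, bl, y, br, bt⟩))
    (cnd (Nat.beq d 2)
      (orr (orr (andd (Nat.blt 0 bl) (Nat.blt x (Nat.add bl 5)))
        (anyL (fun u => Nat.blt x (Nat.mod u 16)) On))
        (K ⟨T, S, E, I, Tl, On, bl, bb, x, bt⟩))
      (orr (orr (andd (Nat.blt 0 bb) (Nat.blt y (Nat.add bb 5)))
        (anyL (fun u => Nat.blt y (Nat.div u 16)) On))
        (K ⟨T, S, E, I, Tl, On, bl, bb, br, y⟩)))))

def len (l : List ℕ) : ℕ := List.rec (motive := fun _ => ℕ) 0 (fun _ _ r => Nat.succ r) l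

def go (f : ℕ) : ℕ → ℕ → List ℕ → St → Bool :=
  Nat.rec (motive := fun _ => ℕ → ℕ → List ℕ → St → Bool) (fun _ _ _ _ => false)
    (fun _ K t d q s =>
      cnd (Nat.beq d 4)
        (orr (orr (clo s s.E s.I 7 (sb 0 t) [t] [t]) (clo s s.I s.E 7 (sb 0 t) [t] [t]))
          (List.casesOn (motive := fun _ => Bool) q false (fun t' q' => K t' 0 q' s)))
        (cnd (orr (tb s.E (key t d)) (tb s.I (key t d))) (K t (Nat.succ d) q s)
        (andd (guard t) (force (nb t d) fun c =>
          cnd (off s c) (K t (Nat.succ d) q s)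
          (cnd (orr (tb s.T c) (tb s.S c)) (arcs (fun s => K t (Nat.succ d) q s) s t d c)
            (andd (addS (fun s => arcs (fun s => K t (Nat.succ d) q s) s t d c) s c)
              (andd (orr (Nat.ble 5 (len s.Tl)) (orr (Nat.blt c 40)
                (addT (fun s => arcs (fun s => K t (Nat.succ d) (q ++ [c]) s) s t d c) s c)))
              (addOff (fun s => K t (Nat.succ d) q s) s t d)))))))) f

def init1 : St :=
  ⟨sb 0 40, sb 0 39, sb 0 (key 39 2), sb 0 (key 40 0), [40], [39, 40], 0, 0, 0, 0⟩

def init2 : St :=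
  ⟨sb 0 40, sb 0 24, sb 0 (key 24 3), sb 0 (key 40 1), [40], [24, 40], 8, 0, 0, 0⟩

def init3 : St := ⟨sb 0 40, 0, 0, 0, [40], [40], 8, 2, 0, 0⟩

set_option maxRecDepth 100000 in
theorem go_init1 : go 60 40 1 [] init1 = true := by decide +kernel

set_option maxRecDepth 100000 in
theorem go_init2 : go 60 40 2 [] init2 = true := by decide +kernel

set_option maxRecDepth 100000 in
theorem go_init3 : go 60 40 2 [] init3 = true := by decide +kernel

end Srch

namespace Srch

theorem force_eq {α : Type} (x : ℕ) (f : ℕ → α) : force x f = f x := by cases x <;> rfl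

theorem cnd_eq {α : Type} (b : Bool) (x y : α) : cnd b x y = if b = true then x else y := by
  cases b <;> rfl

theorem orr_eq (a b : Bool) : orr a b = (a || b) := by cases a <;> rfl

theorem andd_eq (a b : Bool) : andd a b = (a && b) := by cases a <;> rfl

theorem blt_iff (a b : ℕ) : (Nat.blt a b = true) ↔ a < b := by
  unfold Nat.blt; rw [Nat.ble_eq]; exact Iff.rfl

theorem tb_eq (m c : ℕ) : tb m c = m.testBit c := by
  rw [Bool.eq_iff_iff]
  unfold tb
  rw [Nat.beq_eq, Nat.testBit]
  change (m >>> c) &&& 1 = 1 ↔ (1 &&& (m >>> c) != 0) = true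
  rw [Nat.and_comm 1, Nat.and_one_is_mod]
  simp

theorem tb_sb (m c c' : ℕ) : tb (sb m c) c' = true ↔ tb m c' = true ∨ c' = c := by
  rw [tb_eq, tb_eq]
  change ((m ||| (1 <<< c)).testBit c' = true) ↔ _
  rw [Nat.testBit_lor, Nat.one_shiftLeft, Nat.testBit_two_pow, Bool.or_eq_true, decide_eq_true_iff,
    eq_comm (a := c)]

theorem tb_zero (c : ℕ) : ¬ tb 0 c = true := by rw [tb_eq]; simp

theorem anyL_iff (p : ℕ → Bool) (l : List ℕ) : anyL p l = true ↔ ∃ a ∈ l, p a = true := by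
  induction l with
  | nil => simp [anyL]
  | cons a l ih =>
    have : anyL p (a :: l) = orr (p a) (anyL p l) := rfl
    rw [this, orr_eq, Bool.or_eq_true, ih]; simp

theorem any4_iff (p : ℕ → Bool) : any4 p = true ↔ ∃ d < 4, p d = true := by
  simp only [any4, orr_eq, Bool.or_eq_true]
  constructor
  · rintro (h | h | h | h)
    exacts [⟨0, by omega, h⟩, ⟨1, by omega, h⟩, ⟨2, by omega, h⟩, ⟨3, by omega, h⟩]
  · rintro ⟨d, hd, h⟩
    have : d = 0 ∨ d = 1 ∨ d = 2 ∨ d = 3 := by omega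
    rcases this with rfl | rfl | rfl | rfl <;> tauto

theorem all4_iff (p : ℕ → Bool) : all4 p = true ↔ ∀ d < 4, p d = true := by
  simp only [all4, andd_eq, Bool.and_eq_true]
  constructor
  · rintro ⟨h0, h1, h2, h3⟩ d hd
    have : d = 0 ∨ d = 1 ∨ d = 2 ∨ d = 3 := by omega
    rcases this with rfl | rfl | rfl | rfl <;> assumption
  · intro h
    exact ⟨h 0 (by omega), h 1 (by omega), h 2 (by omega), h 3 (by omega)⟩

theorem nbl_iff (E c : ℕ) (p : ℕ → Bool) (h : nbl E c p = true) :
    ∃ d < 4, tb E (key c d) = true ∧ p (nb c d) = true := by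
  unfold nbl at h
  rw [force_eq, cnd_eq] at h
  split_ifs at h
  rw [any4_iff] at h
  obtain ⟨d, hd, h⟩ := h
  rw [andd_eq, Bool.and_eq_true] at h
  refine ⟨d, hd, ?_, h.2⟩
  have h1 := h.1
  rw [tb_eq] at h1 ⊢
  change ((E >>> (4 * c)) &&& 15).testBit d = true at h1
  rw [Nat.testBit_land, Nat.testBit_shiftRight, Bool.and_eq_true] at h1
  exact h1.1

theorem nb0 (c : ℕ) : nb c 0 = c - 1 := rfl
theorem nb1 (c : ℕ) : nb c 1 = c - 16 := rfl
theorem nb2 (c : ℕ) : nb c 2 = c + 1 := rfl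
theorem nb3 (c : ℕ) : nb c 3 = c + 16 := rfl

theorem four {d : ℕ} (h : d < 4) : d = 0 ∨ d = 1 ∨ d = 2 ∨ d = 3 := by omega

theorem opp_lt (d : ℕ) : opp d < 4 := Nat.mod_lt _ (by norm_num)

theorem nb_opp {t d : ℕ} (hd : d < 4) (ht : 16 ≤ t) : nb (nb t d) (opp d) = t := by
  rcases four hd with rfl | rfl | rfl | rfl
  · change (t - 1) + 1 = t; omega
  · change (t - 16) + 16 = t; omega
  · change (t + 1) - 1 = t; omega
  · change (t + 16) - 16 = t; omega

theorem key_inj {c d c' d' : ℕ} (hd : d < 4) (hd' : d' < 4) (h : key c d = key c' d') :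
    c = c' ∧ d = d' := by
  change 4 * c + d = 4 * c' + d' at h
  omega

theorem guard_iff (t : ℕ) : guard t = true ↔ 16 ≤ t ∧ 1 ≤ t % 16 ∧ t % 16 ≤ 14 := by
  simp only [guard, andd_eq, Bool.and_eq_true, Nat.ble_eq]
  rfl

/-- Coordinate adjacency in the grid. -/
def CAdj {n m : ℕ} (u v : Fin n × Fin m) : Prop :=
  (u.2.val = v.2.val ∧ (u.1.val + 1 = v.1.val ∨ v.1.val + 1 = u.1.val)) ∨
  (u.1.val = v.1.val ∧ (u.2.val + 1 = v.2.val ∨ v.2.val + 1 = u.2.val))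

/-- Manhattan distance. -/
def mdist {n m : ℕ} (u v : Fin n × Fin m) : ℕ :=
  ((u.1.val - v.1.val) + (v.1.val - u.1.val)) + ((u.2.val - v.2.val) + (v.2.val - u.2.val))

def Between {n m : ℕ} (u w v : Fin n × Fin m) : Prop :=
  (u.2.val = v.2.val ∧ w.2.val = u.2.val ∧
    ((u.1.val < w.1.val ∧ w.1.val < v.1.val) ∨ (v.1.val < w.1.val ∧ w.1.val < u.1.val))) ∨
  (u.1.val = v.1.val ∧ w.1.val = u.1.val ∧
    ((u.2.val < w.2.val ∧ w.2.val < v.2.val) ∨ (v.2.val < w.2.val ∧ w.2.val < u.2.val)))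

/-- The properties of a configuration used by the search. -/
structure Ctx (n m : ℕ) (A : Fin n × Fin m → Fin n × Fin m → Prop) (C : Set (Fin n × Fin m))
    (x0 y0 : ℕ) : Prop where
  hn : 6 ≤ n
  hm : 6 ≤ m
  adj : ∀ u v, A u v → CAdj u v
  tot : ∀ u v, CAdj u v → A u v ∨ A v u
  anti : ∀ u v, A u v → ¬ A v u
  ear : ∀ u v x a b f g, u ∈ C → v ∈ C → x ∉ C → IsDirWalk A a f u x → IsDirWalk A b g x v →
    a + b ≠ mdist u v ∧ (a + b = mdist u v + 2 → ∀ w, Between u w v → w ∈ C)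
  out : ∀ X : Set (Fin n × Fin m), X.Nonempty → (∀ x ∈ X, x ∉ C) → ∃ x ∈ X, ∃ y, y ∉ X ∧ A x y
  inn : ∀ X : Set (Fin n × Fin m), X.Nonempty → (∀ x ∈ X, x ∉ C) → ∃ x ∈ X, ∃ y, y ∉ X ∧ A y x
  card : ∀ l : List (Fin n × Fin m), l.Nodup → (∀ x ∈ l, x ∉ C) → l.length ≤ 5
  low : ∀ (v : Fin n × Fin m) (c : ℕ), v ∉ C → v.1.val + 8 = x0 + c % 16 →
    v.2.val + 2 = y0 + c / 16 → 40 ≤ c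

section
variable {n m : ℕ} {A : Fin n × Fin m → Fin n × Fin m → Prop} {C : Set (Fin n × Fin m)}
  {x0 y0 : ℕ}

/-- The vertex `v` is at the window cell `c`. -/
def At (x0 y0 : ℕ) (v : Fin n × Fin m) (c : ℕ) : Prop :=
  v.1.val + 8 = x0 + c % 16 ∧ v.2.val + 2 = y0 + c / 16

theorem At.uniq {v w : Fin n × Fin m} {c : ℕ} (h : At x0 y0 v c) (h' : At x0 y0 w c) : v = w := by
  unfold At at h h'
  refine Prod.ext (Fin.ext ?_) (Fin.ext ?_) <;> omega

theorem At.inj {v : Fin n × Fin m} {c c' : ℕ} (h : At x0 y0 v c) (h' : At x0 y0 v c') : c = c' := by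
  unfold At at h h'
  omega

/-- Neighbouring cells hold adjacent vertices. -/
theorem At.cadj {v w : Fin n × Fin m} {t d : ℕ} (hg : guard t = true) (hd : d < 4)
    (h : At x0 y0 v t) (h' : At x0 y0 w (nb t d)) : CAdj v w := by
  rw [guard_iff] at hg
  unfold At at h h'
  unfold CAdj
  rcases four hd with rfl | rfl | rfl | rfl
  · rw [nb0] at h'; omega
  · rw [nb1] at h'; omega
  · rw [nb2] at h'; omega
  · rw [nb3] at h'; omega

theorem At.nbr {v w : Fin n × Fin m} {t : ℕ} (hg : guard t = true)
    (h : At x0 y0 v t) (h' : CAdj v w) : ∃ d < 4, At x0 y0 w (nb t d) := by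
  rw [guard_iff] at hg
  unfold At at h ⊢
  unfold CAdj at h'
  rcases h' with ⟨h1, h2 | h2⟩ | ⟨h1, h2 | h2⟩
  · exact ⟨2, by omega, by rw [nb2]; omega⟩
  · exact ⟨0, by omega, by rw [nb0]; omega⟩
  · exact ⟨3, by omega, by rw [nb3]; omega⟩
  · exact ⟨1, by omega, by rw [nb1]; omega⟩

def IsT (C : Set (Fin n × Fin m)) (x0 y0 c : ℕ) : Prop := ∃ v, At x0 y0 v c ∧ v ∉ C
def IsS (C : Set (Fin n × Fin m)) (x0 y0 c : ℕ) : Prop := ∃ v, At x0 y0 v c ∧ v ∈ C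
def Arc (A : Fin n × Fin m → Fin n × Fin m → Prop) (x0 y0 c c' : ℕ) : Prop :=
  ∃ v w, At x0 y0 v c ∧ At x0 y0 w c' ∧ A v w

/-- There is a walk from `c` to `b` of length `l` meeting the complement of `C`. -/
def Wm (A : Fin n × Fin m → Fin n × Fin m → Prop) (C : Set (Fin n × Fin m)) (x0 y0 c b l : ℕ) :
    Prop :=
  ∃ v w x p q f g, At x0 y0 v c ∧ At x0 y0 w b ∧ x ∉ C ∧ IsDirWalk A p f v x ∧
    IsDirWalk A q g x w ∧ p + q = l

theorem Wm.snoc {c b b' l : ℕ} (h : Wm A C x0 y0 c b l) (ha : Arc A x0 y0 b b') :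
    Wm A C x0 y0 c b' (l + 1) := by
  obtain ⟨v, w, x, p, q, f, g, h1, h2, h3, h4, h5, h6⟩ := h
  obtain ⟨v', w', h7, h8, h9⟩ := ha
  obtain rfl := h2.uniq h7
  have hg' := IsDirWalk.comp h5 (IsDirWalk.one h9)
  exact ⟨v, w', x, p, q + 1, f, _, h1, h8, h3, h4, hg', by omega⟩

theorem Wm.cons {c c' b l : ℕ} (h : Wm A C x0 y0 c b l) (ha : Arc A x0 y0 c' c) :
    Wm A C x0 y0 c' b (l + 1) := by
  obtain ⟨v, w, x, p, q, f, g, h1, h2, h3, h4, h5, h6⟩ := h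
  obtain ⟨v', w', h7, h8, h9⟩ := ha
  obtain rfl := h1.uniq h8
  have hg' := IsDirWalk.comp (IsDirWalk.one h9) h4
  exact ⟨v', w, x, 1 + p, q, _, g, h7, h2, h3, hg', h5, by omega⟩

theorem Wm.ofArc {c b : ℕ} (ha : Arc A x0 y0 c b) (hT : IsT C x0 y0 c ∨ IsT C x0 y0 b) :
    Wm A C x0 y0 c b 1 := by
  obtain ⟨v, w, h1, h2, h3⟩ := ha
  rcases hT with ⟨x, h4, h5⟩ | ⟨x, h4, h5⟩
  · obtain rfl := h1.uniq h4
    exact ⟨v, w, v, 0, 1, fun _ => v, _, h1, h2, h5, ⟨rfl, rfl, by omega⟩, IsDirWalk.one h3, rfl⟩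
  · obtain rfl := h2.uniq h4
    exact ⟨v, w, w, 1, 0, _, fun _ => w, h1, h2, h5, IsDirWalk.one h3, ⟨rfl, rfl, by omega⟩, rfl⟩

theorem bad_sound (H : Ctx n m A C x0 y0) {Tl : List ℕ} (hTl : ∀ c ∈ Tl, IsT C x0 y0 c)
    {a b l : ℕ} (ha : IsS C x0 y0 a) (hb : IsS C x0 y0 b) (hw : Wm A C x0 y0 a b l)
    (h : bad Tl a b l = true) : False := by
  obtain ⟨v, w, x, p, q, f, g, h1, h2, h3, h4, h5, h6⟩ := hw
  obtain ⟨v', hv1, hv⟩ := ha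
  obtain ⟨w', hw1, hw⟩ := hb
  obtain rfl := h1.uniq hv1
  obtain rfl := h2.uniq hw1
  obtain ⟨e1, e2⟩ := H.ear v w x p q f g hv hw h3 h4 h5
  have hm : man a b = mdist v w := by
    change ((a % 16 - b % 16) + (b % 16 - a % 16)) + ((a / 16 - b / 16) + (b / 16 - a / 16)) = _
    unfold mdist
    unfold At at h1 h2
    omega
  simp only [bad, force_eq, orr_eq, andd_eq, Bool.or_eq_true, Bool.and_eq_true, Nat.beq_eq, hm,
    blocked, anyL_iff, btw, blt_iff] at h
  rcases h with h | ⟨h, hbl⟩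
  · exact e1 (by omega)
  · have e3 := e2 (by change l = mdist v w + 2 at h; omega)
    have key : ∃ t ∈ Tl, ∀ z, At x0 y0 z t → Between v z w := by
      rcases hbl with ⟨g1, t, ht, g2, g3⟩ | ⟨g1, t, ht, g2, g3⟩
      · refine ⟨t, ht, fun z hz => Or.inl ?_⟩
        change a / 16 = b / 16 at g1
        change t / 16 = a / 16 at g2
        change (a % 16 < t % 16 ∧ t % 16 < b % 16) ∨ (b % 16 < t % 16 ∧ t % 16 < a % 16) at g3
        unfold At at h1 h2 hz
        omega
      · refine ⟨t, ht, fun z hz => Or.inr ?_⟩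
        change a % 16 = b % 16 at g1
        change t % 16 = a % 16 at g2
        change (a / 16 < t / 16 ∧ t / 16 < b / 16) ∨ (b / 16 < t / 16 ∧ t / 16 < a / 16) at g3
        unfold At at h1 h2 hz
        omega
    obtain ⟨t, ht, hz⟩ := key
    obtain ⟨z, hz1, hz2⟩ := hTl t ht
    exact hz2 (e3 z (hz z hz1))

theorem earF_sound (H : Ctx n m A C x0 y0) {S E : ℕ} {Tl : List ℕ}
    (hTl : ∀ c ∈ Tl, IsT C x0 y0 c) (hS : ∀ c, tb S c = true → IsS C x0 y0 c)
    (hE : ∀ c d, d < 4 → tb E (key c d) = true → Arc A x0 y0 c (nb c d))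
    {a : ℕ} (ha : IsS C x0 y0 a) (f : ℕ) : ∀ l c, Wm A C x0 y0 a c l →
    earF S E Tl a f l c = true → False := by
  induction f with
  | zero => intro l c _ h; exact absurd h (by change ¬ false = true; simp)
  | succ f ih =>
    intro l c hw h
    change cnd (tb S c) (bad Tl a c l)
      (nbl E c fun c' => force c' fun c' => earF S E Tl a f (l + 1) c') = true at h
    rw [cnd_eq] at h
    split_ifs at h with h1
    · exact bad_sound H hTl ha (hS c h1) hw h
    · obtain ⟨d, hd, h2, h3⟩ := nbl_iff _ _ _ h
      rw [force_eq] at h3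
      exact ih _ _ (hw.snoc (hE c d hd h2)) h3

theorem earB_sound (H : Ctx n m A C x0 y0) {S E I : ℕ} {Tl : List ℕ}
    (hTl : ∀ c ∈ Tl, IsT C x0 y0 c) (hS : ∀ c, tb S c = true → IsS C x0 y0 c)
    (hE : ∀ c d, d < 4 → tb E (key c d) = true → Arc A x0 y0 c (nb c d))
    (hI : ∀ c d, d < 4 → tb I (key c d) = true → Arc A x0 y0 (nb c d) c)
    {b : ℕ} (f : ℕ) : ∀ l c, Wm A C x0 y0 c b l →
    earB S E I Tl b f l c = true → False := by
  induction f with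
  | zero => intro l c _ h; exact absurd h (by change ¬ false = true; simp)
  | succ f ih =>
    intro l c hw h
    change cnd (tb S c) (earF S E Tl c (f + 1) l b)
      (nbl I c fun c' => force c' fun c' => earB S E I Tl b f (l + 1) c') = true at h
    rw [cnd_eq] at h
    split_ifs at h with h1
    · exact earF_sound H hTl hS hE (hS c h1) _ _ _ hw h
    · obtain ⟨d, hd, h2, h3⟩ := nbl_iff _ _ _ h
      rw [force_eq] at h3
      exact ih _ _ (hw.cons (hI c d hd h2)) h3

/-- The knowledge recorded in `s` is correct. -/
structure Good (A : Fin n × Fin m → Fin n × Fin m → Prop) (C : Set (Fin n × Fin m))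
    (x0 y0 : ℕ) (s : St) : Prop where
  hT : ∀ c, tb s.T c = true → IsT C x0 y0 c
  hS : ∀ c, tb s.S c = true → IsS C x0 y0 c
  hE : ∀ c d, d < 4 → tb s.E (key c d) = true → Arc A x0 y0 c (nb c d)
  hI : ∀ c d, d < 4 → tb s.I (key c d) = true → Arc A x0 y0 (nb c d) c
  hTl : ∀ c ∈ s.Tl, tb s.T c = true
  nd : s.Tl.Nodup
  hOn : ∀ c ∈ s.On, ∃ v : Fin n × Fin m, At x0 y0 v c
  hbl : s.bl = 0 ∨ ∀ v : Fin n × Fin m, x0 + s.bl ≤ v.1.val + 8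
  hbb : s.bb = 0 ∨ ∀ v : Fin n × Fin m, y0 + s.bb ≤ v.2.val + 2
  hbr : s.br = 0 ∨ ∀ v : Fin n × Fin m, v.1.val + 8 ≤ x0 + s.br
  hbt : s.bt = 0 ∨ ∀ v : Fin n × Fin m, v.2.val + 2 ≤ y0 + s.bt

theorem off_sound {s : St} (G : Good A C x0 y0 s) {c : ℕ} (h : off s c = true)
    (v : Fin n × Fin m) (hv : At x0 y0 v c) : False := by
  obtain ⟨T, S, E, I, Tl, On, bl, bb, br, bt⟩ := s
  have h1 := G.hbl
  have h2 := G.hbb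
  have h3 := G.hbr
  have h4 := G.hbt
  simp only [off, orr_eq, andd_eq, Bool.or_eq_true, Bool.and_eq_true, blt_iff] at h h1 h2 h3 h4
  change c % 16 < bl ∨ c / 16 < bb ∨ (0 < br ∧ br < c % 16) ∨ (0 < bt ∧ bt < c / 16) at h
  unfold At at hv
  rcases h with h | h | h | h
  · rcases h1 with h1 | h1
    · omega
    · have := h1 v; omega
  · rcases h2 with h2 | h2
    · omega
    · have := h2 v; omega
  · rcases h3 with h3 | h3
    · omega
    · have := h3 v; omega
  · rcases h4 with h4 | h4
    · omega
    · have := h4 v; omega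

theorem verify_sound {B : Fin n × Fin m → Fin n × Fin m → Prop}
    (Badj : ∀ u v, B u v → CAdj u v) (Banti : ∀ u v, B u v → ¬ B v u)
    (Bout : ∀ X : Set (Fin n × Fin m), X.Nonempty → (∀ x ∈ X, x ∉ C) →
      ∃ x ∈ X, ∃ y, y ∉ X ∧ B x y)
    {s : St} (G : Good A C x0 y0 s) {R X : ℕ} {l : List ℕ} {t : ℕ}
    (hR : ∀ c d, d < 4 → tb R (key c d) = true → Arc B x0 y0 (nb c d) c)
    (hX : ∀ c, tb X c = true → c ∈ l) (ht : t ∈ l) (htT : IsT C x0 y0 t)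
    (h : verify s R X l = true) : False := by
  have hl : ∀ u ∈ l, guard u = true ∧ tb s.T u = true ∧ ∀ d < 4, tb R (key u d) = true ∨
      off s (nb u d) = true ∨ tb X (nb u d) = true := by
    intro u hu
    by_contra hc
    unfold verify at h
    rw [Bool.not_eq_true_eq_eq_false, ← Bool.not_eq_true] at h
    apply h
    rw [anyL_iff]
    refine ⟨u, hu, ?_⟩
    rw [Bool.not_eq_true_eq_eq_false, ← Bool.not_eq_true]
    intro h'
    apply hc
    simpa only [andd_eq, Bool.and_eq_true, all4_iff, orr_eq, Bool.or_eq_true, and_assoc] using h'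
  obtain ⟨v0, hv0, -⟩ := htT
  obtain ⟨x, ⟨c, hc, hxc⟩, y, hy, hxy⟩ := Bout {v | ∃ c ∈ l, At x0 y0 v c} ⟨v0, t, ht, hv0⟩ (by
    rintro x ⟨c, hc, hx⟩
    obtain ⟨w, hw, hw'⟩ := G.hT c (hl c hc).2.1
    rwa [hx.uniq hw])
  obtain ⟨g1, g2, g3⟩ := hl c hc
  obtain ⟨d, hd, hyd⟩ := At.nbr g1 hxc (Badj _ _ hxy)
  rcases g3 d hd with g | g | g
  · obtain ⟨v, w, h1, h2, h3⟩ := hR c d hd g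
    obtain rfl := h1.uniq hyd
    obtain rfl := h2.uniq hxc
    exact Banti _ _ hxy h3
  · exact off_sound G g y hyd
  · exact hy ⟨_, hX _ g, hyd⟩

theorem clo_sound {B : Fin n × Fin m → Fin n × Fin m → Prop}
    (Badj : ∀ u v, B u v → CAdj u v) (Banti : ∀ u v, B u v → ¬ B v u)
    (Bout : ∀ X : Set (Fin n × Fin m), X.Nonempty → (∀ x ∈ X, x ∉ C) →
      ∃ x ∈ X, ∃ y, y ∉ X ∧ B x y)
    {s : St} (G : Good A C x0 y0 s) {F R : ℕ} {t : ℕ}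
    (hR : ∀ c d, d < 4 → tb R (key c d) = true → Arc B x0 y0 (nb c d) c)
    (htT : IsT C x0 y0 t) (f : ℕ) : ∀ X l st, (∀ c, tb X c = true → c ∈ l) → t ∈ l →
    clo s F R f X l st = true → False := by
  have step : ∀ (u d : ℕ) (k : ℕ → List ℕ → List ℕ → Bool),
      (∀ X l st, (∀ c, tb X c = true → c ∈ l) → t ∈ l → k X l st = true → False) →
      (∀ X l st, (∀ c, tb X c = true → c ∈ l) → t ∈ l → stp s F R u d k X l st = true → False) := by
    intro u d k hk X l st h1 h2 h
    simp only [stp, force_eq, cnd_eq] at h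
    split_ifs at h with a1 a2 a3 a4 a5
    · exact hk _ _ _ h1 h2 h
    · exact hk _ _ _ h1 h2 h
    · refine hk _ _ _ ?_ (List.mem_cons_of_mem _ h2) h
      intro c hc
      rw [tb_sb] at hc
      rcases hc with hc | rfl
      · exact List.mem_cons_of_mem _ (h1 c hc)
      · exact List.mem_cons_self
    · exact hk _ _ _ h1 h2 h
  induction f with
  | zero => intro X l st _ _ h; exact absurd h (by change ¬ false = true; simp)
  | succ f ih =>
    intro X l st h1 h2 h
    cases st with
    | nil => exact verify_sound Badj Banti Bout G hR h1 h2 htT h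
    | cons u st =>
      exact step u 0 _ (step u 1 _ (step u 2 _ (step u 3 _ ih))) X l st h1 h2 h

end

end Srch

namespace Srch

section
variable {n m : ℕ} {A : Fin n × Fin m → Fin n × Fin m → Prop} {C : Set (Fin n × Fin m)}
  {x0 y0 : ℕ}

theorem arcs_sound (H : Ctx n m A C x0 y0) {K : St → Bool}
    (hK : ∀ s, Good A C x0 y0 s → K s = true → False) {s : St} (G : Good A C x0 y0 s)
    {t d : ℕ} (hd : d < 4) (hg : guard t = true) (ht : IsT C x0 y0 t)
    (hc : ∃ v : Fin n × Fin m, At x0 y0 v (nb t d)) (h : arcs K s t d (nb t d) = true) : False := by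
  obtain ⟨T, S, E, I, Tl, On, bl, bb, br, bt⟩ := s
  simp only [arcs, force_eq, andd_eq, orr_eq, Bool.and_eq_true, Bool.or_eq_true] at h
  obtain ⟨hl, hr⟩ := h
  have h16 : 16 ≤ t := ((guard_iff t).1 hg).1
  have hop := nb_opp hd h16
  have hTl : ∀ c ∈ Tl, IsT C x0 y0 c := fun c hc => G.hT c (G.hTl c hc)
  obtain ⟨w, hw⟩ := hc
  obtain ⟨v, hv, hvC⟩ := id ht
  rcases H.tot v w (At.cadj hg hd hv hw) with hA | hA
  · have ha : Arc A x0 y0 t (nb t d) := ⟨v, w, hv, hw, hA⟩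
    have hE : ∀ c e, e < 4 → tb (sb E (key t d)) (key c e) = true → Arc A x0 y0 c (nb c e) := by
      intro c e he h1
      rw [tb_sb] at h1
      rcases h1 with h1 | h1
      · exact G.hE c e he h1
      · obtain ⟨rfl, rfl⟩ := key_inj he hd h1
        exact ha
    have hI : ∀ c e, e < 4 → tb (sb I (key (nb t d) (opp d))) (key c e) = true →
        Arc A x0 y0 (nb c e) c := by
      intro c e he h1
      rw [tb_sb] at h1
      rcases h1 with h1 | h1
      · exact G.hI c e he h1
      · obtain ⟨rfl, rfl⟩ := key_inj he (opp_lt d) h1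
        rwa [hop]
    rcases hl with hl | hl
    · exact earB_sound H hTl G.hS hE hI _ _ _ (Wm.ofArc ha (Or.inl ht)) hl
    · exact hK _ (by exact ⟨G.hT, G.hS, hE, hI, G.hTl, G.nd, G.hOn, G.hbl, G.hbb, G.hbr, G.hbt⟩) hl
  · have ha : Arc A x0 y0 (nb t d) t := ⟨w, v, hw, hv, hA⟩
    have hE : ∀ c e, e < 4 → tb (sb E (key (nb t d) (opp d))) (key c e) = true →
        Arc A x0 y0 c (nb c e) := by
      intro c e he h1
      rw [tb_sb] at h1
      rcases h1 with h1 | h1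
      · exact G.hE c e he h1
      · obtain ⟨rfl, rfl⟩ := key_inj he (opp_lt d) h1
        rwa [hop]
    have hI : ∀ c e, e < 4 → tb (sb I (key t d)) (key c e) = true →
        Arc A x0 y0 (nb c e) c := by
      intro c e he h1
      rw [tb_sb] at h1
      rcases h1 with h1 | h1
      · exact G.hI c e he h1
      · obtain ⟨rfl, rfl⟩ := key_inj he hd h1
        exact ha
    rcases hr with hr | hr
    · exact earB_sound H hTl G.hS hE hI _ _ _ (Wm.ofArc ha (Or.inr ht)) hr
    · exact hK _ (by exact ⟨G.hT, G.hS, hE, hI, G.hTl, G.nd, G.hOn, G.hbl, G.hbb, G.hbr, G.hbt⟩) hr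

theorem addS_sound {K : St → Bool}
    (hK : ∀ s, Good A C x0 y0 s → K s = true → False) {s : St} (G : Good A C x0 y0 s)
    {c : ℕ} (hc : IsS C x0 y0 c) (h : addS K s c = true) : False := by
  obtain ⟨T, S, E, I, Tl, On, bl, bb, br, bt⟩ := s
  simp only [addS, force_eq] at h
  refine hK _ ?_ h
  refine ⟨G.hT, ?_, G.hE, G.hI, G.hTl, G.nd, ?_, G.hbl, G.hbb, G.hbr, G.hbt⟩
  · intro e he
    rw [tb_sb] at he
    rcases he with he | rfl
    · exact G.hS e he
    · exact hc
  · intro e he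
    rcases List.mem_cons.1 he with rfl | he
    · obtain ⟨v, hv, -⟩ := hc
      exact ⟨v, hv⟩
    · exact G.hOn e he

theorem addT_sound {K : St → Bool}
    (hK : ∀ s, Good A C x0 y0 s → K s = true → False) {s : St} (G : Good A C x0 y0 s)
    {c : ℕ} (hc : IsT C x0 y0 c) (hn : ¬ tb s.T c = true) (h : addT K s c = true) : False := by
  obtain ⟨T, S, E, I, Tl, On, bl, bb, br, bt⟩ := s
  simp only [addT, force_eq] at h
  refine hK _ ?_ h
  refine ⟨?_, G.hS, G.hE, G.hI, ?_, ?_, ?_, G.hbl, G.hbb, G.hbr, G.hbt⟩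
  · intro e he
    rw [tb_sb] at he
    rcases he with he | rfl
    · exact G.hT e he
    · exact hc
  · intro e he
    simp only [tb_sb]
    rcases List.mem_cons.1 he with rfl | he
    · exact Or.inr rfl
    · exact Or.inl (G.hTl e he)
  · refine List.nodup_cons.2 ⟨fun he => hn (G.hTl c he), G.nd⟩
  · intro e he
    rcases List.mem_cons.1 he with rfl | he
    · obtain ⟨v, hv, -⟩ := hc
      exact ⟨v, hv⟩
    · exact G.hOn e he

theorem addOff_sound (H : Ctx n m A C x0 y0) {K : St → Bool}
    (hK : ∀ s, Good A C x0 y0 s → K s = true → False) {s : St} (G : Good A C x0 y0 s)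
    {t d : ℕ} (hd : d < 4) (hg : guard t = true) (ht : IsT C x0 y0 t)
    (hc : ∀ v : Fin n × Fin m, ¬ At x0 y0 v (nb t d)) (h : addOff K s t d = true) : False := by
  obtain ⟨T, S, E, I, Tl, On, bl, bb, br, bt⟩ := s
  obtain ⟨v, hv, -⟩ := ht
  rw [guard_iff] at hg
  have hn := H.hn
  have hm := H.hm
  have hv1 := v.1.2
  have hv2 := v.2.2
  rcases four hd with rfl | rfl | rfl | rfl
  · have h0 : v.1.val = 0 := by
      by_contra h0
      apply hc (⟨v.1.val - 1, by omega⟩, v.2)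
      rw [nb0]
      unfold At at hv ⊢
      dsimp only
      omega
    simp only [addOff, force_eq] at h
    change orr (orr (andd (Nat.blt 0 br) (Nat.blt br (Nat.add (t % 16) 5)))
        (anyL (fun u => Nat.blt (Nat.mod u 16) (t % 16)) On))
        (K ⟨T, S, E, I, Tl, On, t % 16, bb, br, bt⟩) = true at h
    simp only [orr_eq, andd_eq, Bool.or_eq_true, Bool.and_eq_true, anyL_iff, blt_iff] at h
    rcases h with (h | ⟨u, hu, hu'⟩) | h
    · rcases G.hbr with e | e
      · dsimp only at e; omega
      · have e := e (⟨n - 1, by omega⟩, v.2)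
        dsimp only at e
        have h2 : br < t % 16 + 5 := h.2
        unfold At at hv
        omega
    · obtain ⟨w, hw⟩ := G.hOn u hu
      change u % 16 < t % 16 at hu'
      unfold At at hv hw
      omega
    · refine hK _ ?_ h
      refine ⟨G.hT, G.hS, G.hE, G.hI, G.hTl, G.nd, G.hOn, Or.inr fun w => ?_,
        G.hbb, G.hbr, G.hbt⟩
      dsimp only
      unfold At at hv
      omega
  · have h0 : v.2.val = 0 := by
      by_contra h0
      apply hc (v.1, ⟨v.2.val - 1, by omega⟩)
      rw [nb1]
      unfold At at hv ⊢
      dsimp only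
      omega
    simp only [addOff, force_eq] at h
    change orr (orr (andd (Nat.blt 0 bt) (Nat.blt bt (Nat.add (t / 16) 5)))
        (anyL (fun u => Nat.blt (Nat.div u 16) (t / 16)) On))
        (K ⟨T, S, E, I, Tl, On, bl, t / 16, br, bt⟩) = true at h
    simp only [orr_eq, andd_eq, Bool.or_eq_true, Bool.and_eq_true, anyL_iff, blt_iff] at h
    rcases h with (h | ⟨u, hu, hu'⟩) | h
    · rcases G.hbt with e | e
      · dsimp only at e; omega
      · have e := e (v.1, ⟨m - 1, by omega⟩)
        dsimp only at e
        have h2 : bt < t / 16 + 5 := h.2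
        unfold At at hv
        omega
    · obtain ⟨w, hw⟩ := G.hOn u hu
      change u / 16 < t / 16 at hu'
      unfold At at hv hw
      omega
    · refine hK _ ?_ h
      refine ⟨G.hT, G.hS, G.hE, G.hI, G.hTl, G.nd, G.hOn, G.hbl, Or.inr fun w => ?_,
        G.hbr, G.hbt⟩
      dsimp only
      unfold At at hv
      omega
  · have h0 : v.1.val = n - 1 := by
      by_contra h0
      apply hc (⟨v.1.val + 1, by omega⟩, v.2)
      rw [nb2]
      unfold At at hv ⊢
      dsimp only
      omega
    simp only [addOff, force_eq] at h
    change orr (orr (andd (Nat.blt 0 bl) (Nat.blt (t % 16) (Nat.add bl 5)))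
        (anyL (fun u => Nat.blt (t % 16) (Nat.mod u 16)) On))
        (K ⟨T, S, E, I, Tl, On, bl, bb, t % 16, bt⟩) = true at h
    simp only [orr_eq, andd_eq, Bool.or_eq_true, Bool.and_eq_true, anyL_iff, blt_iff] at h
    rcases h with (h | ⟨u, hu, hu'⟩) | h
    · rcases G.hbl with e | e
      · dsimp only at e; omega
      · have e := e (⟨0, by omega⟩, v.2)
        dsimp only at e
        have h2 : t % 16 < bl + 5 := h.2
        unfold At at hv
        omega
    · obtain ⟨w, hw⟩ := G.hOn u hu
      change t % 16 < u % 16 at hu'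
      have := w.1.2
      unfold At at hv hw
      omega
    · refine hK _ ?_ h
      refine ⟨G.hT, G.hS, G.hE, G.hI, G.hTl, G.nd, G.hOn, G.hbl,
        G.hbb, Or.inr fun w => ?_, G.hbt⟩
      have := w.1.2
      dsimp only
      unfold At at hv
      omega
  · have h0 : v.2.val = m - 1 := by
      by_contra h0
      apply hc (v.1, ⟨v.2.val + 1, by omega⟩)
      rw [nb3]
      unfold At at hv ⊢
      dsimp only
      omega
    simp only [addOff, force_eq] at h
    change orr (orr (andd (Nat.blt 0 bb) (Nat.blt (t / 16) (Nat.add bb 5)))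
        (anyL (fun u => Nat.blt (t / 16) (Nat.div u 16)) On))
        (K ⟨T, S, E, I, Tl, On, bl, bb, br, t / 16⟩) = true at h
    simp only [orr_eq, andd_eq, Bool.or_eq_true, Bool.and_eq_true, anyL_iff, blt_iff] at h
    rcases h with (h | ⟨u, hu, hu'⟩) | h
    · rcases G.hbb with e | e
      · dsimp only at e; omega
      · have e := e (v.1, ⟨0, by omega⟩)
        dsimp only at e
        have h2 : t / 16 < bb + 5 := h.2
        unfold At at hv
        omega
    · obtain ⟨w, hw⟩ := G.hOn u hu
      change t / 16 < u / 16 at hu'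
      have := w.2.2
      unfold At at hv hw
      omega
    · refine hK _ ?_ h
      refine ⟨G.hT, G.hS, G.hE, G.hI, G.hTl, G.nd, G.hOn, G.hbl,
        G.hbb, G.hbr, Or.inr fun w => ?_⟩
      have := w.2.2
      dsimp only
      unfold At at hv
      omega

theorem len_eq (l : List ℕ) : len l = l.length := by
  induction l with
  | nil => rfl
  | cons a l ih =>
    have : len (a :: l) = len l + 1 := rfl
    rw [this, ih]; rfl

/-- Six cells outside `C` are too many. -/
theorem full_sound (H : Ctx n m A C x0 y0) {s : St} (G : Good A C x0 y0 s) {c : ℕ}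
    (hc : IsT C x0 y0 c) (hn : ¬ tb s.T c = true) (h : 5 ≤ s.Tl.length) : False := by
  have h1 : ∀ e ∈ c :: s.Tl, IsT C x0 y0 e := by
    intro e he
    rcases List.mem_cons.1 he with rfl | he
    · exact hc
    · exact G.hT e (G.hTl e he)
  have nd : (c :: s.Tl).Nodup := List.nodup_cons.2 ⟨fun he => hn (G.hTl c he), G.nd⟩
  obtain ⟨v0, -, -⟩ := id hc
  haveI : Nonempty (Fin n × Fin m) := ⟨v0⟩
  choose! F hF using h1
  have := H.card ((c :: s.Tl).map F) (by
    refine (List.nodup_map_iff_inj_on nd).2 fun a ha b hb hab => ?_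
    have e1 := (hF a ha).1
    have e2 := (hF b hb).1
    rw [hab] at e1
    exact e1.inj e2) (by
    intro x hx
    obtain ⟨a, ha, rfl⟩ := List.mem_map.1 hx
    exact (hF a ha).2)
  rw [List.length_map, List.length_cons] at this
  omega

theorem go_sound (H : Ctx n m A C x0 y0) (f : ℕ) : ∀ t d q s, d ≤ 4 → IsT C x0 y0 t →
    (∀ u ∈ q, IsT C x0 y0 u) → Good A C x0 y0 s → go f t d q s = true → False := by
  induction f with
  | zero => intro t d q s _ _ _ _ h; exact absurd h (by change ¬ false = true; simp)
  | succ f ih =>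
    intro t d q s hd ht hq G h
    change cnd (Nat.beq d 4)
        (orr (orr (clo s s.E s.I 7 (sb 0 t) [t] [t]) (clo s s.I s.E 7 (sb 0 t) [t] [t]))
          (List.casesOn (motive := fun _ => Bool) q false (fun t' q' => go f t' 0 q' s)))
        (cnd (orr (tb s.E (key t d)) (tb s.I (key t d))) (go f t (d + 1) q s)
        (andd (guard t) (force (nb t d) fun c =>
          cnd (off s c) (go f t (d + 1) q s)
          (cnd (orr (tb s.T c) (tb s.S c)) (arcs (fun s => go f t (d + 1) q s) s t d c)
            (andd (addS (fun s => arcs (fun s => go f t (d + 1) q s) s t d c) s c)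
              (andd (orr (Nat.ble 5 (len s.Tl)) (orr (Nat.blt c 40)
                (addT (fun s => arcs (fun s => go f t (d + 1) (q ++ [c]) s) s t d c) s c)))
              (addOff (fun s => go f t (d + 1) q s) s t d))))))) = true at h
    rw [cnd_eq] at h
    have hX : ∀ c, tb (sb 0 t) c = true → c ∈ [t] := by
      intro c hc
      rw [tb_sb] at hc
      rcases hc with hc | rfl
      · exact absurd hc (tb_zero c)
      · exact List.mem_singleton.2 rfl
    split_ifs at h with h4
    · simp only [orr_eq, Bool.or_eq_true] at h
      rcases h with (h | h) | h
      · exact clo_sound H.adj H.anti H.out G G.hI ht 7 _ _ _ hX (List.mem_singleton.2 rfl) h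
      · refine clo_sound (B := fun x y => A y x) (fun u v huv => ?_) (fun u v => H.anti v u) H.inn G
          (fun c d hd hc => ?_) ht 7 _ _ _ hX (List.mem_singleton.2 rfl) h
        · have := H.adj _ _ huv
          unfold CAdj at this ⊢
          omega
        · obtain ⟨v, w, h1, h2, h3⟩ := G.hE c d hd hc
          exact ⟨w, v, h2, h1, h3⟩
      · cases q with
        | nil => exact absurd h (by simp)
        | cons t' q' =>
          exact ih t' 0 q' s (by omega) (hq _ List.mem_cons_self)
            (fun u hu => hq u (List.mem_cons_of_mem _ hu)) G h
    · rw [Nat.beq_eq] at h4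
      have hd4 : d < 4 := by omega
      have hnext : ∀ s, Good A C x0 y0 s → go f t (d + 1) q s = true → False :=
        fun s G => ih t (d + 1) q s (by omega) ht hq G
      rw [cnd_eq] at h
      split_ifs at h with h5
      · exact hnext s G h
      simp only [andd_eq, Bool.and_eq_true, force_eq] at h
      obtain ⟨hg, h⟩ := h
      rw [cnd_eq] at h
      split_ifs at h with h6
      · exact hnext s G h
      rw [cnd_eq] at h
      split_ifs at h with h7
      · rw [orr_eq, Bool.or_eq_true] at h7
        refine arcs_sound H hnext G hd4 hg ht ?_ h
        rcases h7 with h7 | h7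
        · obtain ⟨v, hv, -⟩ := G.hT _ h7
          exact ⟨v, hv⟩
        · obtain ⟨v, hv, -⟩ := G.hS _ h7
          exact ⟨v, hv⟩
      simp only [Bool.and_eq_true, orr_eq, Bool.or_eq_true, not_or, len_eq, blt_iff, Nat.ble_eq] at h h7
      obtain ⟨hS, hT, hO⟩ := h
      by_cases hon : ∃ v : Fin n × Fin m, At x0 y0 v (nb t d)
      · obtain ⟨v, hv⟩ := id hon
        by_cases hvC : v ∈ C
        · exact addS_sound (fun s G => arcs_sound H hnext G hd4 hg ht hon) G ⟨v, hv, hvC⟩ hS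
        · have hcT : IsT C x0 y0 (nb t d) := ⟨v, hv, hvC⟩
          rcases hT with hT | hT | hT
          · exact full_sound H G hcT h7.1 hT
          · have := H.low v _ hvC hv.1 hv.2
            omega
          · refine addT_sound (fun s G => arcs_sound H (fun s G => ih t (d + 1) _ s (by omega) ht ?_ G)
              G hd4 hg ht hon) G hcT h7.1 hT
            intro u hu
            rcases List.mem_append.1 hu with hu | hu
            · exact hq u hu
            · rw [List.mem_singleton.1 hu]
              exact hcT
      · push Not at hon
        exact addOff_sound H hnext G hd4 hg ht hon hO

end

end Srch

/-! ### Necessity -/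

namespace Srch

section
variable {n m : ℕ} {A : Fin n × Fin m → Fin n × Fin m → Prop} {C : Set (Fin n × Fin m)}

theorem grid_cadj (u v : Fin n × Fin m) : (gridGraph n m).Adj u v ↔ CAdj u v := by
  simp only [gridGraph, SimpleGraph.boxProd_adj, SimpleGraph.pathGraph_adj, Fin.ext_iff]
  unfold CAdj
  omega

theorem CAdj.symm {u v : Fin n × Fin m} (h : CAdj u v) : CAdj v u := by
  unfold CAdj at *
  omega

theorem mdist_walk (hA : ∀ u v, A u v → CAdj u v) {u : Fin n × Fin m} (k : ℕ) :
    ∀ (f : ℕ → Fin n × Fin m) (v : Fin n × Fin m), IsDirWalk A k f u v →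
      mdist u v ≤ k ∧ (mdist u v + k) % 2 = 0 := by
  induction k with
  | zero =>
    rintro f v ⟨h1, h2, -⟩
    have : u = v := by rw [← h1, ← h2]
    subst this
    unfold mdist
    omega
  | succ k ih =>
    rintro f v ⟨h1, h2, h3⟩
    have h := ih f (f k) ⟨h1, rfl, fun i hi => h3 i (by omega)⟩
    have ha := hA _ _ (h3 k (by omega))
    rw [h2] at ha
    unfold CAdj at ha
    unfold mdist at h ⊢
    rcases ha with ⟨e, ha⟩ | ⟨e, ha⟩ <;> rcases ha with ha | ha <;> omega

theorem flip_walk {V : Type*} {A : V → V → Prop} {k : ℕ} {f : ℕ → V} {u v : V}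
    (h : IsDirWalk A k f u v) : IsDirWalk (fun x y => A y x) k (fun i => f (k - i)) v u := by
  obtain ⟨h1, h2, h3⟩ := h
  refine ⟨by simpa using h2, by simpa using h1, fun i hi => ?_⟩
  have := h3 (k - (i + 1)) (by omega)
  rwa [show k - (i + 1) + 1 = k - i by omega] at this

theorem flip_strong {V : Type*} {A : V → V → Prop} (h : StrongConnected A) :
    StrongConnected (fun x y => A y x) := by
  intro u v
  obtain ⟨k, f, hf⟩ := h v u
  exact ⟨k, _, flip_walk hf⟩

theorem flip_convex {V : Type*} {A : V → V → Prop} {C : Set V} (h : DConvex A C) :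
    DConvex (fun x y => A y x) C := by
  refine ⟨h.1, fun u hu v hv k f hf i hi => ?_⟩
  have h1 : IsDirWalk A k (fun i => f (k - i)) v u := flip_walk hf.1
  have h2 := h.2 v hv u hu k _ ⟨h1, fun k' f' h' => hf.2 k' _ (flip_walk h')⟩ (k - i) (by omega)
  simpa [show k - (k - i) = i by omega] using h2

theorem flip_orient {V : Type*} {G : SimpleGraph V} {A : V → V → Prop} (h : IsOrientation G A) :
    IsOrientation G (fun x y => A y x) :=
  ⟨fun x y hx => (h.1 y x hx).symm, fun x y hx => (h.2.1 x y hx).symm, fun x y hx => h.2.2 y x hx⟩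

theorem list_le_ncard {V : Type*} [Fintype V] {S : Set V} {l : List V} (hl : l.Nodup)
    (h : ∀ x ∈ l, x ∈ S) : l.length ≤ S.ncard := by
  classical
  rw [← List.toFinset_card_of_nodup hl, ← Set.ncard_coe_finset]
  exact Set.ncard_le_ncard (fun x hx => h x (by simpa using hx)) (Set.toFinite _)

theorem leave {V : Type*} {A : V → V → Prop} (hS : StrongConnected A) {X : Set V} {C : Set V}
    (hC : C.Nonempty) (hX : X.Nonempty) (h : ∀ x ∈ X, x ∉ C) : ∃ x ∈ X, ∃ y, y ∉ X ∧ A x y := by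
  obtain ⟨x, hx⟩ := hX
  obtain ⟨c, hc⟩ := hC
  obtain ⟨k, f, hf⟩ := hS x c
  obtain ⟨i, hi, h1, h2⟩ := hf.cut (fun y => y ∈ X) hx (fun hc' => h c hc' hc)
  exact ⟨_, h1, _, h2, hf.2.2 i hi⟩

theorem mk_ctx (hn : 6 ≤ n) (hm : 6 ≤ m) (hO : IsOrientation (gridGraph n m) A)
    (hS : StrongConnected A) (hC : DConvex A C) (hk : Cᶜ.ncard ≤ 5) {t : Fin n × Fin m}
    (ht : ∀ v, v ∉ C → t.2.val < v.2.val ∨ (t.2.val = v.2.val ∧ t.1.val ≤ v.1.val)) :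
    Ctx n m A C t.1.val t.2.val where
  hn := hn
  hm := hm
  adj u v h := (grid_cadj u v).1 (hO.1 u v h)
  tot u v h := hO.2.1 u v ((grid_cadj u v).2 h)
  anti := hO.2.2
  ear := by
    intro u v x a b f g hu hv hx hf hg
    have hA : ∀ u v, A u v → CAdj u v := fun u v h => (grid_cadj u v).1 (hO.1 u v h)
    refine ⟨fun e => hx ?_, fun e w hw => ?_⟩
    · refine hC.pull hu hv hf hg fun k f' hf' => ?_
      rw [e]
      exact (mdist_walk hA k f' v hf').1
    · by_contra hwC
      refine hx (hC.pull hu hv hf hg fun k f' hf' => ?_)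
      by_contra hlt
      obtain ⟨h1, h2⟩ := mdist_walk hA k f' v hf'
      obtain ⟨h3, h4⟩ := mdist_walk hA _ _ v (hf.comp hg)
      have hk : k = mdist u v := by omega
      have hgeo : IsGeodesic A k f' u v :=
        ⟨hf', fun k'' f'' hf'' => hk ▸ (mdist_walk hA k'' f'' v hf'').1⟩
      have hi : mdist u w ≤ k := by
        rw [hk]
        unfold Between at hw
        unfold mdist
        rcases hw with ⟨e1, e2, hw⟩ | ⟨e1, e2, hw⟩ <;> rcases hw with hw | hw <;> omega
      have hin := hC.2 u hu v hv k f' hgeo (mdist u w) hi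
      have w1 := (mdist_walk hA _ _ _ (hf'.sub (Nat.zero_le (mdist u w)) hi)).1
      have w2 := (mdist_walk hA _ _ _ (hf'.sub hi le_rfl)).1
      rw [hf'.1] at w1
      rw [hf'.2.1] at w2
      have : f' (mdist u w) = w := by
        generalize f' (mdist u w) = z at w1 w2
        rw [hk] at w2
        unfold Between at hw
        unfold mdist at w1 w2
        refine Prod.ext (Fin.ext ?_) (Fin.ext ?_) <;>
        rcases hw with ⟨e1, e2, hw⟩ | ⟨e1, e2, hw⟩ <;> rcases hw with hw | hw <;> omega
      exact hwC (this ▸ hin)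
  out X hX h := leave hS hC.1 hX h
  inn X hX h := leave (flip_strong hS) hC.1 hX h
  card l hl h := (list_le_ncard (S := Cᶜ) hl h).trans hk
  low v c hv h1 h2 := by
    have := ht v hv
    omega

theorem no_large (hn : 6 ≤ n) (hm : 6 ≤ m) (hO : IsOrientation (gridGraph n m) A)
    (hS : StrongConnected A) (hC : DConvex A C) (hne : C ≠ Set.univ) (hk : Cᶜ.ncard ≤ 5) : False := by
  have hne' : (Cᶜ).Nonempty := Set.nonempty_compl.2 hne
  obtain ⟨t, htC, ht⟩ := Set.exists_min_image Cᶜ (fun v => n * v.2.val + v.1.val) (Set.toFinite _) hne'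
  have hlex : ∀ v, v ∉ C → t.2.val < v.2.val ∨ (t.2.val = v.2.val ∧ t.1.val ≤ v.1.val) := by
    intro v hv
    have h := ht v hv
    have hv1 := v.1.2
    rcases lt_trichotomy t.2.val v.2.val with h' | h' | h'
    · exact Or.inl h'
    · rw [h'] at h
      exact Or.inr ⟨h', by omega⟩
    · have h2 : n * (v.2.val + 1) ≤ n * t.2.val := Nat.mul_le_mul_left n h'
      rw [Nat.mul_add] at h2
      omega
  have htA : At t.1.val t.2.val t 40 := ⟨rfl, rfl⟩
  have htT : IsT C t.1.val t.2.val 40 := ⟨t, htA, htC⟩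
  have ht1 := t.1.2
  have ht2 := t.2.2
  -- facts shared by all the initial states
  have hTb : ∀ c, tb (sb 0 40) c = true → c = 40 := by
    intro c hc
    rw [tb_sb] at hc
    exact hc.resolve_left (tb_zero c)
  have hTl : ∀ c ∈ [40], tb (sb 0 40) c = true := by
    intro c hc
    rw [List.mem_singleton.1 hc, tb_sb]
    exact Or.inr rfl
  by_cases hx : t.1.val = 0
  · by_cases hy : t.2.val = 0
    · refine go_sound (mk_ctx hn hm hO hS hC hk hlex) 60 40 2 [] init3 (by omega) htT (by simp) ?_ go_init3
      refine ⟨fun c hc => ?_, fun c hc => absurd hc (tb_zero c), fun c d _ hc => absurd hc (tb_zero _),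
        fun c d _ hc => absurd hc (tb_zero _), hTl, by simp [init3], fun c hc => ?_, Or.inr fun v => ?_,
        Or.inr fun v => ?_, Or.inl rfl, Or.inl rfl⟩
      · rw [hTb c hc]; exact htT
      · rw [List.mem_singleton.1 hc]; exact ⟨t, htA⟩
      · change t.1.val + 8 ≤ _; omega
      · change t.2.val + 2 ≤ _; omega
    · obtain ⟨w, hw⟩ : ∃ w : Fin n × Fin m, At t.1.val t.2.val w 24 := by
        refine ⟨(t.1, ⟨t.2.val - 1, by omega⟩), rfl, ?_⟩
        dsimp only
        omega
      have hwC : w ∈ C := by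
        by_contra h
        have := hlex w h
        unfold At at hw
        omega
      have key : ∀ B : Fin n × Fin m → Fin n × Fin m → Prop, IsOrientation (gridGraph n m) B →
          StrongConnected B → DConvex B C → B w t → False := by
        intro B hO hS hC hB
        refine go_sound (mk_ctx hn hm hO hS hC hk hlex) 60 40 2 [] init2 (by omega) htT (by simp) ?_
          go_init2
        have ha : Arc B t.1.val t.2.val 24 40 := ⟨w, t, hw, htA, hB⟩
        refine ⟨fun c hc => ?_, fun c hc => ?_, fun c d hd hc => ?_, fun c d hd hc => ?_, hTl,
          by simp [init2], fun c hc => ?_, Or.inr fun v => ?_, Or.inl rfl, Or.inl rfl, Or.inl rfl⟩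
        · rw [hTb c hc]; exact htT
        · rw [(tb_sb 0 24 c).1 hc |>.resolve_left (tb_zero c)]; exact ⟨w, hw, hwC⟩
        · obtain ⟨rfl, rfl⟩ := key_inj hd (by omega)
            (((tb_sb 0 (key 24 3) (key c d)).1 hc).resolve_left (tb_zero _))
          exact ha
        · obtain ⟨rfl, rfl⟩ := key_inj hd (by omega)
            (((tb_sb 0 (key 40 1) (key c d)).1 hc).resolve_left (tb_zero _))
          exact ha
        · change c ∈ [24, 40] at hc
          rcases List.mem_cons.1 hc with rfl | hc
          · exact ⟨w, hw⟩
          · rw [List.mem_singleton.1 hc]; exact ⟨t, htA⟩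
        · change t.1.val + 8 ≤ _; omega
      have hwt : CAdj w t := by
        unfold At at hw
        unfold CAdj
        omega
      rcases hO.2.1 w t ((grid_cadj w t).2 hwt) with h | h
      · exact key A hO hS hC h
      · exact key _ (flip_orient hO) (flip_strong hS) (flip_convex hC) h
  · obtain ⟨w, hw⟩ : ∃ w : Fin n × Fin m, At t.1.val t.2.val w 39 := by
      refine ⟨(⟨t.1.val - 1, by omega⟩, t.2), ?_, rfl⟩
      dsimp only
      omega
    have hwC : w ∈ C := by
      by_contra h
      have := hlex w h
      unfold At at hw
      omega
    have key : ∀ B : Fin n × Fin m → Fin n × Fin m → Prop, IsOrientation (gridGraph n m) B →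
        StrongConnected B → DConvex B C → B w t → False := by
      intro B hO hS hC hB
      refine go_sound (mk_ctx hn hm hO hS hC hk hlex) 60 40 1 [] init1 (by omega) htT (by simp) ?_
        go_init1
      have ha : Arc B t.1.val t.2.val 39 40 := ⟨w, t, hw, htA, hB⟩
      refine ⟨fun c hc => ?_, fun c hc => ?_, fun c d hd hc => ?_, fun c d hd hc => ?_, hTl,
        by simp [init1], fun c hc => ?_, Or.inl rfl, Or.inl rfl, Or.inl rfl, Or.inl rfl⟩
      · rw [hTb c hc]; exact htT
      · rw [(tb_sb 0 39 c).1 hc |>.resolve_left (tb_zero c)]; exact ⟨w, hw, hwC⟩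
      · obtain ⟨rfl, rfl⟩ := key_inj hd (by omega)
          (((tb_sb 0 (key 39 2) (key c d)).1 hc).resolve_left (tb_zero _))
        exact ha
      · obtain ⟨rfl, rfl⟩ := key_inj hd (by omega)
          (((tb_sb 0 (key 40 0) (key c d)).1 hc).resolve_left (tb_zero _))
        exact ha
      · change c ∈ [39, 40] at hc
        rcases List.mem_cons.1 hc with rfl | hc
        · exact ⟨w, hw⟩
        · rw [List.mem_singleton.1 hc]; exact ⟨t, htA⟩
    have hwt : CAdj w t := by
      unfold At at hw
      unfold CAdj
      omega
    rcases hO.2.1 w t ((grid_cadj w t).2 hwt) with h | h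
    · exact key A hO hS hC h
    · exact key _ (flip_orient hO) (flip_strong hS) (flip_convex hC) h

/-- In a convex set with at least two elements every vertex has an out-neighbour. -/
theorem convex_out {V : Type*} [Fintype V] {A : V → V → Prop} {C : Set V} (hS : StrongConnected A)
    (hC : DConvex A C) (h2 : 2 ≤ C.ncard) {x : V} (hx : x ∈ C) : ∃ y ∈ C, A x y := by
  obtain ⟨y, hy, hxy⟩ := Set.exists_ne_of_one_lt_ncard (s := C) (by omega) x
  obtain ⟨k, f, hf⟩ := (hS x y).exists_geodesic
  have hk : 0 < k := by
    rcases Nat.eq_zero_or_pos k with rfl | h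
    · exact absurd (hf.1.2.1.symm.trans hf.1.1) hxy
    · exact h
  refine ⟨f 1, hC.2 x hx y hy k f hf 1 hk, ?_⟩
  have := hf.1.2.2 0 hk
  rwa [hf.1.1] at this

theorem two_nbrs (hO : IsOrientation (gridGraph n m) A) (hS : StrongConnected A)
    (hC : DConvex A C) (h2 : 2 ≤ C.ncard) {x : Fin n × Fin m} (hx : x ∈ C) :
    ∃ y ∈ C, ∃ z ∈ C, y ≠ z ∧ CAdj x y ∧ CAdj x z := by
  obtain ⟨y, hy, h⟩ := convex_out hS hC h2 hx
  obtain ⟨z, hz, h'⟩ := convex_out (flip_strong hS) (flip_convex hC) h2 hx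
  refine ⟨y, hy, z, hz, ?_, (grid_cadj _ _).1 (hO.1 _ _ h), ((grid_cadj _ _).1 (hO.1 _ _ h')).symm⟩
  rintro rfl
  exact hO.2.2 _ _ h h'

theorem cne {u v : Fin n × Fin m} (h : u ≠ v) : u.1.val ≠ v.1.val ∨ u.2.val ≠ v.2.val := by
  by_contra hc
  push Not at hc
  exact h (Prod.ext (Fin.ext hc.1) (Fin.ext hc.2))

theorem nec {u v : Fin n × Fin m} (h : u.1.val ≠ v.1.val ∨ u.2.val ≠ v.2.val) : u ≠ v := by
  rintro rfl
  omega

theorem no_small (hO : IsOrientation (gridGraph n m) A) (hS : StrongConnected A)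
    (hC : DConvex A C) (h2 : 2 ≤ C.ncard) (h5 : C.ncard ≤ 5) : C.ncard = 4 := by
  obtain ⟨t, htC, ht⟩ := Set.exists_min_image C (fun v => n * v.2.val + v.1.val) (Set.toFinite _) hC.1
  have hlex : ∀ v, v ∈ C → t.2.val < v.2.val ∨ (t.2.val = v.2.val ∧ t.1.val ≤ v.1.val) := by
    intro v hv
    have h := ht v hv
    have hv1 := v.1.2
    rcases lt_trichotomy t.2.val v.2.val with h' | h' | h'
    · exact Or.inl h'
    · rw [h'] at h
      exact Or.inr ⟨h', by omega⟩
    · have h2 : n * (v.2.val + 1) ≤ n * t.2.val := Nat.mul_le_mul_left n h'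
      rw [Nat.mul_add] at h2
      have := t.1.2
      omega
  have nbr : ∀ x ∈ C, ∃ y ∈ C, ∃ z ∈ C, y ≠ z ∧ CAdj x y ∧ CAdj x z :=
    fun x hx => two_nbrs hO hS hC h2 hx
  obtain ⟨p, hp, q, hq, hp1, hp2, hq1, hq2⟩ : ∃ p ∈ C, ∃ q ∈ C, p.1.val = t.1.val + 1 ∧
      p.2.val = t.2.val ∧ q.1.val = t.1.val ∧ q.2.val = t.2.val + 1 := by
    obtain ⟨y, hy, z, hz, hyz, h1, h2⟩ := nbr t htC
    have e1 := hlex y hy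
    have e2 := hlex z hz
    have e3 := cne hyz
    unfold CAdj at h1 h2
    by_cases h : y.2.val = t.2.val
    · exact ⟨y, hy, z, hz, by omega⟩
    · exact ⟨z, hz, y, hy, by omega⟩
  by_cases hr : ∃ r ∈ C, r.1.val = t.1.val + 1 ∧ r.2.val = t.2.val + 1
  · obtain ⟨r, hr, hr1, hr2⟩ := hr
    have n1 : t ≠ p := nec (by omega)
    have n2 : t ≠ q := nec (by omega)
    have n3 : t ≠ r := nec (by omega)
    have n4 : p ≠ q := nec (by omega)
    have n5 : p ≠ r := nec (by omega)
    have n6 : q ≠ r := nec (by omega)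
    have h4 : 4 ≤ C.ncard := list_le_ncard (l := [t, p, q, r]) (by simp [n1, n2, n3, n4, n5, n6])
      (by simp [htC, hp, hq, hr])
    by_contra hne
    obtain ⟨z, hz, hz'⟩ : ∃ z ∈ C, z ∉ ([t, p, q, r].toFinset : Set (Fin n × Fin m)) := by
      by_contra hc
      push Not at hc
      have h1 := Set.ncard_le_ncard (s := C) hc (Set.toFinite _)
      rw [Set.ncard_coe_finset] at h1
      have h2 := List.toFinset_card_le [t, p, q, r]
      have h3 : [t, p, q, r].length = 4 := rfl
      omega
    simp only [List.coe_toFinset, Set.mem_setOf_eq, List.mem_cons, List.not_mem_nil, or_false,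
      not_or] at hz'
    obtain ⟨z1, z2, z3, z4⟩ := hz'
    have y1 := cne z1
    have y2 := cne z2
    have y3 := cne z3
    have y4 := cne z4
    have fin : ∀ a ∈ C, a ≠ z → a ≠ t → a ≠ p → a ≠ q → a ≠ r → False := by
      intro a ha a0 a1 a2 a3 a4
      have := list_le_ncard (S := C) (l := [a, z, t, p, q, r])
        (by simp [n1, n2, n3, n4, n5, n6, z1, z2, z3, z4, a0, a1, a2, a3, a4])
        (by simp [htC, hp, hq, hr, ha, hz])
      have h3 : [a, z, t, p, q, r].length = 6 := rfl
      omega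
    obtain ⟨a, ha, b, hb, hab, h1, h2⟩ := nbr z hz
    have za : a ≠ z := nec (by unfold CAdj at h1; omega)
    have zb : b ≠ z := nec (by unfold CAdj at h2; omega)
    have fa : a = t ∨ a = p ∨ a = q ∨ a = r := by
      by_contra hc
      push Not at hc
      exact fin a ha za hc.1 hc.2.1 hc.2.2.1 hc.2.2.2
    have fb : b = t ∨ b = p ∨ b = q ∨ b = r := by
      by_contra hc
      push Not at hc
      exact fin b hb zb hc.1 hc.2.1 hc.2.2.1 hc.2.2.2
    unfold CAdj at h1 h2
    rcases fa with rfl | rfl | rfl | rfl <;> rcases fb with rfl | rfl | rfl | rfl <;>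
      first | exact hab rfl | omega
  · exfalso
    have hr' : ∀ r ∈ C, ¬ (r.1.val = t.1.val + 1 ∧ r.2.val = t.2.val + 1) :=
      fun r hr1 hr2 => hr ⟨r, hr1, hr2⟩
    have other : ∀ x ∈ C, ∀ w, ∃ y ∈ C, y ≠ w ∧ CAdj x y := by
      intro x hx w
      obtain ⟨y, hy, z, hz, hyz, h1, h2⟩ := nbr x hx
      by_cases h : y = w
      · exact ⟨z, hz, fun e => hyz (h.trans e.symm), h2⟩
      · exact ⟨y, hy, h, h1⟩
    obtain ⟨a, ha, hat, haA⟩ := other p hp t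
    have a1 : a.1.val = t.1.val + 2 ∧ a.2.val = t.2.val := by
      have := hlex a ha
      have := hr' a ha
      have := cne hat
      unfold CAdj at haA
      omega
    obtain ⟨b, hb, hbt, hbA⟩ := other q hq t
    have b1 : (b.1.val = t.1.val ∧ b.2.val = t.2.val + 2) ∨
        (b.1.val + 1 = t.1.val ∧ b.2.val = t.2.val + 1) := by
      have := hlex b hb
      have := hr' b hb
      have := cne hbt
      unfold CAdj at hbA
      omega
    obtain ⟨c, hc, hcp, hcA⟩ := other a ha p
    have c1 : (c.1.val = t.1.val + 3 ∧ c.2.val = t.2.val) ∨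
        (c.1.val = t.1.val + 2 ∧ c.2.val = t.2.val + 1) := by
      have := hlex c hc
      have := cne hcp
      unfold CAdj at hcA
      omega
    have := list_le_ncard (S := C) (l := [t, p, q, a, b, c])
      (by
        have n1 : t ≠ p := nec (by omega)
        have n2 : t ≠ q := nec (by omega)
        have n3 : t ≠ a := nec (by omega)
        have n4 : t ≠ b := nec (by omega)
        have n5 : t ≠ c := nec (by omega)
        have n6 : p ≠ q := nec (by omega)
        have n7 : p ≠ a := nec (by omega)
        have n8 : p ≠ b := nec (by omega)
        have n9 : p ≠ c := nec (by omega)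
        have m1 : q ≠ a := nec (by omega)
        have m2 : q ≠ b := nec (by omega)
        have m3 : q ≠ c := nec (by omega)
        have m4 : a ≠ b := nec (by omega)
        have m5 : a ≠ c := nec (by omega)
        have m6 : b ≠ c := nec (by omega)
        simp [n1, n2, n3, n4, n5, n6, n7, n8, n9, m1, m2, m3, m4, m5, m6])
      (by simp [htC, hp, hq, ha, hb, hc])
    have h3 : [t, p, q, a, b, c].length = 6 := rfl
    omega

end

theorem singleton_convex {V : Type*} {A : V → V → Prop} (v : V) : DConvex A {v} := by
  refine ⟨⟨v, rfl⟩, ?_⟩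
  rintro u rfl w rfl k f hf i hi
  have hk : k ≤ 0 := hf.2 0 (fun _ => w) ⟨rfl, rfl, fun i hi => absurd hi (by omega)⟩
  have : i = 0 := by omega
  subst this
  exact hf.1.1

theorem spectrum_sub {n m k : ℕ} (hm : 6 ≤ m) (hmn : m ≤ n)
    (h : k ∈ strongConvexitySpectrum (gridGraph n m)) :
    (1 ≤ k ∧ k ≤ n * m - 6) ∧ k ≠ 2 ∧ k ≠ 3 ∧ k ≠ 5 := by
  obtain ⟨A, hO, hS, rfl⟩ := h
  have hcard : Nat.card (Fin n × Fin m) = n * m := by simp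
  have hnm : 36 ≤ n * m := Nat.mul_le_mul (hm.trans hmn) hm
  have hmem : convexityNumber A ∈ {k | ∃ C : Set (Fin n × Fin m), DConvex A C ∧ C ≠ Set.univ ∧
      C.ncard = k} := by
    refine Nat.sSup_mem ?_ ?_
    · refine ⟨1, {(⟨0, by omega⟩, ⟨0, by omega⟩)}, singleton_convex _, ?_, Set.ncard_singleton _⟩
      intro e
      have := congrArg Set.ncard e
      rw [Set.ncard_singleton, Set.ncard_univ, hcard] at this
      omega
    · refine ⟨n * m, ?_⟩
      rintro _ ⟨C, -, -, rfl⟩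
      rw [← hcard, ← Set.ncard_univ]
      exact Set.ncard_le_ncard (Set.subset_univ _) (Set.toFinite _)
  obtain ⟨C, hC, hne, e⟩ := hmem
  rw [← e]
  have h1 : 0 < C.ncard := (Set.ncard_pos (Set.toFinite _)).2 hC.1
  have h2 := Set.ncard_add_ncard_compl C
  rw [hcard] at h2
  have h3 : ¬ Cᶜ.ncard ≤ 5 := fun h => no_large (hm.trans hmn) hm hO hS hC hne h
  have h4 : 2 ≤ C.ncard → C.ncard ≤ 5 → C.ncard = 4 := no_small hO hS hC
  omega

end Srch

/-- The strong convexity spectrum of the grid `P_n □ P_m` for `6 ≤ m ≤ n`. -/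
theorem strongConvexitySpectrum_grid_general (n m : ℕ) (hm : 6 ≤ m) (hmn : m ≤ n) :
    strongConvexitySpectrum (gridGraph n m) =
      {k : ℕ | 1 ≤ k ∧ k ≤ n * m - 6} \ {2, 3, 5} := by
  ext k
  simp only [Set.mem_diff, Set.mem_setOf_eq, Set.mem_insert_iff, Set.mem_singleton_iff, not_or]
  constructor
  · exact Srch.spectrum_sub hm hmn
  · rintro ⟨⟨h1, h2⟩, h3, h4, h5⟩
    exact spectrum_all hm hmn h1 h2 h3 h4 h5
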